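/- arXiv:1706.06036 — 5 statements merged into one kernel-verified Lean document; each statement's English description precedes it below -/
import Mathlib

section
/- Let Γ be a Taylor graph, i.e., a distance-regular graph with diameter 3 and intersection array {k,c_2,1;1,c_2,k}, and suppose Γ contains no 4-claws. Then the intersection array of Γ is one of: {2,1,1;1,1,2}, {3,2,1;1,2,3}, {5,2,1;1,2,5}, {9,4,1;1,4,9}, {13,6,1;1,6,13}, {15,6,1;1,6,15}, {17,8,1;1,8,17}, or {27,10,1;1,10,27}. -/
/-!
A Taylor graph is an antipodal double cover of a complete graph, that is, a regular two-graph.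
The sign matrix `S`, equal to `1` at distance two and `-1` at distance one, changes sign under the
antipodal map and satisfies a quadratic equation; up to a factor `2` its eigenvalues on odd
functions are the roots of `ρ ^ 2 = τ * ρ + k` with `τ = 2 * c₂ + 1 - k`. The neighbours of a vertex
are the vertices at distance two from its antipode, so absence of 4-claws says that the relation
`S = 1` has no cliques of size five. These data form `SignedCover`.

A triangle-free graph without 4-claws has valency at most three, which settles that case at once.
Otherwise, counting the common neighbours of a triple of vertices shows that `k` is odd, and
(`SignedCover.classify`) the argument runs as follows.

* In a positive triangle the common neighbours are pairwise negative, so that the Gram matrix on the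
  triangle and its common neighbours is explicit. Its semidefiniteness (`SignedCover.tri_ineq`)
  bounds the number of common neighbours.
* If `τ = 0`, that bound gives `k < 21`, which leaves `k = 5, 9, 13, 17`.
* If `τ ≠ 0`, integrality of the multiplicities (`SignedCover.discr_sq`) makes the eigenvalues odd
  integers `2 * r + 1` and `-(2 * t - 1)`, and the bound gives `r ≤ 2`.
* For `r = 1`, projecting away a positive pair leaves the Gram matrix of its common neighbours, whose
  rank is known. Comparing its first two moments with the rank gives `t ≤ 5`, and the rank is not an
  integer for `t = 4` (`SignedCover.case_three`).
* For `r = 2`, the fourth moment of the same Gram matrix (`SignedCover.edge_qq`) bounds a sum over the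
  triangles on each positive pair from below, whereas a double count determines the corresponding sum
  on each triangle (`SignedCover.tri_qq`). Summed over the whole cover, the two contradict each other
  (`SignedCover.case_five`).
-/

open SimpleGraph Finset

/-- `G` is a distance-regular graph with diameter `D` and intersection numbers
`b i` (number of neighbours of `y` at distance `i+1` from `x` when `dist x y = i`) and
`c i` (number of neighbours of `y` at distance `i-1` from `x` when `dist x y = i`). -/
def IsDRG {V : Type*} [Fintype V] (G : SimpleGraph V) (D : ℕ) (b c : ℕ → ℕ) : Prop :=
  G.Connected ∧
  (∃ x y : V, G.dist x y = D) ∧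
  (∀ x y : V, G.dist x y ≤ D) ∧
  c 0 = 0 ∧ c 1 = 1 ∧ b D = 0 ∧
  (∀ i ≤ D, ∀ x y : V, G.dist x y = i →
    {z : V | G.Adj y z ∧ G.dist x z = i - 1}.ncard = c i ∧
    {z : V | G.Adj y z ∧ G.dist x z = i + 1}.ncard = b i)

/-- `G` contains a `t`-claw: a vertex together with `t` pairwise nonadjacent neighbours
(an induced `K_{1,t}`). -/
def HasClaw {V : Type*} (G : SimpleGraph V) (t : ℕ) : Prop :=
  ∃ (x : V) (s : Finset V), s.card = t ∧ (∀ y ∈ s, G.Adj x y) ∧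
    (s : Set V).Pairwise fun y z => ¬ G.Adj y z

/-- `θ` is an eigenvalue of the (real) adjacency matrix of `G`. -/
def IsAdjEigenvalue {V : Type*} [Fintype V] (G : SimpleGraph V) [DecidableRel G.Adj]
    (θ : ℝ) : Prop :=
  ∃ v : V → ℝ, v ≠ 0 ∧ (G.adjMatrix ℝ).mulVec v = θ • v

/-- `G` contains an induced quadrangle: vertices `x, z₁, y, z₂` with
`dist x y = dist z₁ z₂ = 2` inducing a 4-cycle. -/
def HasQuadrangle {V : Type*} (G : SimpleGraph V) : Prop :=
  ∃ x z₁ y z₂ : V, G.dist x y = 2 ∧ G.dist z₁ z₂ = 2 ∧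
    G.Adj x z₁ ∧ G.Adj z₁ y ∧ G.Adj y z₂ ∧ G.Adj z₂ x

/-- The diameter-3 intersection array `{β₀,β₁,β₂; γ₁,γ₂,γ₃}`. -/
def arr3 (b c : ℕ → ℕ) (β₀ β₁ β₂ γ₁ γ₂ γ₃ : ℕ) : Prop :=
  b 0 = β₀ ∧ b 1 = β₁ ∧ b 2 = β₂ ∧ c 1 = γ₁ ∧ c 2 = γ₂ ∧ c 3 = γ₃

/-! ### Signed double covers -/

section Cover

variable {V : Type*} [Fintype V] [DecidableEq V]

/-- A regular two-graph in the form of its double cover. The involution `bar` is the antipodal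
map, `S x y = 1` and `S x y = -1` are two complementary relations interchanged by `bar`, and the
matrix `S` has two nonzero eigenvalues on odd functions, the roots `ρ` of `ρ ^ 2 = τ * ρ + v`
(scaled by `2`, since every antipodal pair is counted twice).
The last field says that the relation `S x y = 1` has no cliques of size five. -/
structure SignedCover (S : V → V → ℝ) (bar : V → V) (v τ : ℝ) : Prop where
  symm : ∀ x y, S x y = S y x
  bar_bar : ∀ x, bar (bar x) = x
  bar_ne : ∀ x, bar x ≠ x
  diag : ∀ x, S x x = 0
  S_bar : ∀ x y, S (bar x) y = -S x y
  pm : ∀ x y, y ≠ x → y ≠ bar x → S x y = 1 ∨ S x y = -1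
  sq : ∀ x y, ∑ z, S x z * S z y =
    2 * (v * ((if x = y then 1 else 0) - (if bar x = y then 1 else 0)) + τ * S x y)
  noK5 : ∀ x y z u w, S x y = 1 → S x z = 1 → S x u = 1 → S x w = 1 → S y z = 1 → S y u = 1 →
    S y w = 1 → S z u = 1 → S z w = 1 → S u w = 1 → False

/-- The positive neighbourhood of `x`. -/
noncomputable def Nb (S : V → V → ℝ) (x : V) : Finset V := {w | S x w = 1}

/-- The common positive neighbours of `x` and `y`. -/
noncomputable def Lam (S : V → V → ℝ) (x y : V) : Finset V := {w | S x w = 1 ∧ S y w = 1}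

/-- The common positive neighbours of `x`, `y` and `z`. -/
noncomputable def Ell (S : V → V → ℝ) (x y z : V) : Finset V :=
  {w | S x w = 1 ∧ S y w = 1 ∧ S z w = 1}

/-- The common positive neighbours of `x` and `y` that are negative neighbours of `z`. -/
noncomputable def Emm (S : V → V → ℝ) (x y z : V) : Finset V :=
  {w | S x w = 1 ∧ S y w = 1 ∧ S z w = -1}

/-- The real-valued indicator of the relation `S u w = 1`. -/
noncomputable def tt (S : V → V → ℝ) (u w : V) : ℝ := if S u w = 1 then 1 else 0

namespace SignedCover

variable {S : V → V → ℝ} {bar : V → V} {v τ : ℝ} (h : SignedCover S bar v τ)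

include h

lemma S_bar_right (x y : V) : S x (bar y) = -S x y := by
  rw [h.symm, h.S_bar, h.symm]

lemma bar_eq_iff (x y : V) : bar x = y ↔ x = bar y := by
  constructor
  · rintro rfl; rw [h.bar_bar]
  · rintro rfl; rw [h.bar_bar]

lemma S_self_bar (x : V) : S x (bar x) = 0 := by rw [h.S_bar_right, h.diag, neg_zero]

lemma ne_of_S {x y : V} (hxy : S x y ≠ 0) : y ≠ x ∧ y ≠ bar x := by
  refine ⟨?_, ?_⟩
  · rintro rfl; exact hxy (h.diag _)
  · rintro rfl; exact hxy (h.S_self_bar _)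

/-- The relation `S u w = 1` is affine in `S u w` away from the pair of `u`. -/
lemma tt_eq (u w : V) : tt S u w =
    (1 + S u w - (if u = w then 1 else 0) - (if bar u = w then 1 else 0)) / 2 := by
  unfold tt
  by_cases h1 : u = w
  · subst h1
    simp [h.diag, h.bar_ne]
  · by_cases h2 : bar u = w
    · subst h2
      simp [h.S_self_bar, (h.bar_ne u).symm]
    · rcases h.pm u w (Ne.symm h1) (Ne.symm h2) with h3 | h3
      · simp [h1, h2, h3]
      · simp only [h1, h2, h3]; norm_num

/-- An even function on the cover is summed over the representatives `{x} ∪ Nb S x`. -/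
lemma half (F : V → ℝ) (hF : ∀ w, F (bar w) = F w) (x : V) :
    ∑ w, F w = 2 * (F x + ∑ w ∈ Nb S x, F w) := by
  have hinv : Function.Involutive bar := h.bar_bar
  have key : ∀ w, F w = (if x = w then F w else 0) + (if bar x = w then F w else 0)
      + (if S x w = 1 then F w else 0) + (if S x (bar w) = 1 then F (bar w) else 0) := by
    intro w
    by_cases h1 : x = w
    · subst h1
      simp [h.diag, h.bar_ne, h.S_self_bar]
    · by_cases h2 : bar x = w
      · subst h2
        simp [h.S_self_bar, (h.bar_ne x).symm, h.bar_bar, h.diag]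
      · rw [h.S_bar_right, hF]
        rcases h.pm x w (Ne.symm h1) (Ne.symm h2) with h3 | h3
        · simp only [h1, h2, h3]; norm_num
        · simp only [h1, h2, h3]; norm_num
  have e1 : ∑ w, (if S x (bar w) = 1 then F (bar w) else 0) =
      ∑ w, (if S x w = 1 then F w else 0) :=
    Equiv.sum_comp (hinv.toPerm bar) (fun w => if S x w = 1 then F w else 0)
  rw [Finset.sum_congr rfl (fun w _ => key w), Finset.sum_add_distrib, Finset.sum_add_distrib,
    Finset.sum_add_distrib, e1, Finset.sum_ite_eq, Finset.sum_ite_eq]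
  simp only [Finset.mem_univ, if_true, hF, Nb, Finset.sum_filter]
  ring

lemma card_Nb (x : V) : ((Nb S x).card : ℝ) = v := by
  have e := h.sq x x
  rw [h.half (fun z => S x z * S z x) (fun w => by rw [h.S_bar, h.S_bar_right]; ring) x] at e
  have : ∑ w ∈ Nb S x, S x w * S w x = ∑ w ∈ Nb S x, (1 : ℝ) := by
    refine Finset.sum_congr rfl fun w hw => ?_
    simp only [Nb, Finset.mem_filter, Finset.mem_univ, true_and] at hw
    rw [h.symm w x, hw, one_mul]
  rw [this] at e
  simp only [h.diag, h.bar_ne, Finset.sum_const, nsmul_eq_mul] at e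
  simp at e
  linarith

lemma card_V : (Fintype.card V : ℝ) = 2 * (1 + v) ∨ IsEmpty V := by
  rcases isEmpty_or_nonempty V with hV | ⟨⟨x⟩⟩
  · exact Or.inr hV
  · left
    have := h.half (fun _ => 1) (fun _ => rfl) x
    simpa [h.card_Nb x] using this

lemma sumN_S {x y : V} (hxy : S x y ≠ 0) : ∑ w ∈ Nb S x, S w y = τ * S x y := by
  have e := h.sq x y
  rw [h.half (fun z => S x z * S z y) (fun w => by rw [h.S_bar, h.S_bar_right]; ring) x] at e
  have : ∑ w ∈ Nb S x, S x w * S w y = ∑ w ∈ Nb S x, S w y := by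
    refine Finset.sum_congr rfl fun w hw => ?_
    simp only [Nb, Finset.mem_filter, Finset.mem_univ, true_and] at hw
    rw [hw, one_mul]
  obtain ⟨h1, h2⟩ := h.ne_of_S hxy
  rw [this, h.diag, if_neg h1.symm, if_neg h2.symm] at e
  linarith

lemma sumN_SS (x y z : V) : ∑ w ∈ Nb S x, S y w * S z w =
    v * ((if y = z then 1 else 0) - (if bar y = z then 1 else 0)) + τ * S y z
      - S x y * S x z := by
  have e := h.sq y z
  rw [h.half (fun w => S y w * S w z) (fun w => by rw [h.S_bar, h.S_bar_right]; ring) x] at e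
  have : ∑ w ∈ Nb S x, S y w * S w z = ∑ w ∈ Nb S x, S y w * S z w :=
    Finset.sum_congr rfl fun w _ => by rw [h.symm w z]
  rw [this, h.symm y x] at e
  linarith

omit h in
lemma sumN_delta {x y : V} (hxy : S x y = 1) (F : V → ℝ) :
    ∑ w ∈ Nb S x, (if y = w then F w else 0) = F y := by
  rw [Finset.sum_ite_eq, if_pos]
  simp [Nb, hxy]

lemma tt_eq_on {x y w : V} (hxy : S x y = 1) (hw : w ∈ Nb S x) :
    tt S y w = (1 + S y w - (if y = w then 1 else 0)) / 2 := by
  rw [h.tt_eq, if_neg (c := bar y = w), sub_zero]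
  rintro rfl
  simp only [Nb, Finset.mem_filter, Finset.mem_univ, true_and] at hw
  rw [h.S_bar_right, hxy] at hw
  norm_num at hw

omit h [DecidableEq V] in
lemma sum_Lam (x y : V) (F : V → ℝ) : ∑ w ∈ Lam S x y, F w = ∑ w ∈ Nb S x, tt S y w * F w := by
  simp only [Lam, Nb, tt, ite_mul, one_mul, zero_mul, ← Finset.sum_filter, Finset.filter_filter]

omit h [DecidableEq V] in
lemma sum_Ell (x y z : V) (F : V → ℝ) :
    ∑ w ∈ Ell S x y z, F w = ∑ w ∈ Lam S x y, tt S z w * F w := by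
  simp only [Lam, Ell, tt, ite_mul, one_mul, zero_mul, ← Finset.sum_filter, Finset.filter_filter,
    and_assoc]

lemma card_Lam {x y : V} (hxy : S x y = 1) : ((Lam S x y).card : ℝ) = (v + τ - 1) / 2 := by
  have e1 : ((Lam S x y).card : ℝ) = ∑ w ∈ Nb S x, (1 + S w y - (if y = w then 1 else 0)) / 2 := by
    have := sum_Lam (S := S) x y (fun _ => 1)
    simp only [Finset.sum_const, nsmul_eq_mul, mul_one] at this
    rw [this]
    exact Finset.sum_congr rfl fun w hw => by rw [h.tt_eq_on hxy hw, h.symm w y]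
  rw [e1, ← Finset.sum_div, Finset.sum_sub_distrib, Finset.sum_add_distrib, h.sumN_S (by simp [hxy]),
    sumN_delta hxy (fun _ => 1), hxy, Finset.sum_const, nsmul_eq_mul, h.card_Nb]
  ring

lemma card_Ell {x y z : V} (hxy : S x y = 1) (hxz : S x z = 1) (hyz : S y z = 1) :
    ((Ell S x y z).card : ℝ) = (v + 3 * τ - 5) / 4 := by
  have hne := h.ne_of_S (x := y) (y := z) (by simp [hyz])
  have e1 : ((Ell S x y z).card : ℝ) = ∑ w ∈ Nb S x, (1 + S w y + S w z + S y w * S z w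
      - (if y = w then (1 + S z w) else 0) - (if z = w then 1 + S y w else 0)) / 4 := by
    have := sum_Ell (S := S) x y z (fun _ => 1)
    rw [sum_Lam] at this
    simp only [Finset.sum_const, nsmul_eq_mul, mul_one] at this
    rw [this]
    refine Finset.sum_congr rfl fun w hw => ?_
    rw [h.tt_eq_on hxy hw, h.tt_eq_on hxz hw, h.symm w y, h.symm w z]
    by_cases h1 : y = w
    · subst h1; simp [hne.1, h.diag]
    · by_cases h2 : z = w
      · subst h2; simp [h1, h.diag]
      · simp only [h1, h2, if_false]; ring
  rw [e1, ← Finset.sum_div, Finset.sum_sub_distrib, Finset.sum_sub_distrib,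
    Finset.sum_add_distrib, Finset.sum_add_distrib, Finset.sum_add_distrib,
    h.sumN_S (by simp [hxy]), h.sumN_S (by simp [hxz]),
    sumN_delta hxy (fun w => 1 + S z w), sumN_delta hxz (fun w => 1 + S y w), h.sumN_SS,
    hxy, hxz, h.symm z y, hyz, Finset.sum_const, nsmul_eq_mul, h.card_Nb, if_neg hne.1.symm,
    if_neg hne.2.symm]
  ring

/-- The second divisibility condition: a triple with `S x y = S x z = 1`, `S y z = -1` lies in a
constant number of completely negative quadruples, up to switching. -/
lemma card_neg {x y z : V} (hxy : S x y = 1) (hxz : S x z = 1) (hyz : S y z = -1) :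
    ∃ N : ℕ, (N : ℝ) = (v - 3 * τ - 5) / 4 := by
  have hne := h.ne_of_S (x := y) (y := z) (by simp [hyz])
  refine ⟨((Nb S x).filter (fun w => S y w = -1 ∧ S z w = -1)).card, ?_⟩
  have e1 : (((Nb S x).filter (fun w => S y w = -1 ∧ S z w = -1)).card : ℝ)
      = ∑ w ∈ Nb S x, (1 - S w y - S w z + S y w * S z w
      - (if y = w then (1 - S z w) else 0) - (if z = w then 1 - S y w else 0)) / 4 := by
    rw [Finset.card_filter, Nat.cast_sum]
    refine Finset.sum_congr rfl fun w hw => ?_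
    have hw' : S x w = 1 := by simpa [Nb] using hw
    rw [h.symm w y, h.symm w z]
    by_cases h1 : y = w
    · subst h1; simp [hne.1, h.diag, h.symm z y, hyz]
    · by_cases h2 : z = w
      · subst h2; simp [h1, h.diag, hyz]
      · have hy : w ≠ bar y := by
          rintro rfl; rw [h.S_bar_right, hxy] at hw'; norm_num at hw'
        have hz : w ≠ bar z := by
          rintro rfl; rw [h.S_bar_right, hxz] at hw'; norm_num at hw'
        rcases h.pm y w (Ne.symm h1) hy with h3 | h3 <;>
        rcases h.pm z w (Ne.symm h2) hz with h4 | h4 <;>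
        · simp only [h1, h2, h3, h4, if_false]; norm_num
  rw [e1, ← Finset.sum_div, Finset.sum_sub_distrib, Finset.sum_sub_distrib,
    Finset.sum_add_distrib, Finset.sum_sub_distrib, Finset.sum_sub_distrib,
    h.sumN_S (by simp [hxy]), h.sumN_S (by simp [hxz]),
    sumN_delta hxy (fun w => 1 - S z w), sumN_delta hxz (fun w => 1 - S y w), h.sumN_SS,
    hxy, hxz, h.symm z y, hyz, Finset.sum_const, nsmul_eq_mul, h.card_Nb, if_neg hne.1.symm,
    if_neg hne.2.symm]
  ring

end SignedCover

end Cover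

/-! ### Symmetric matrices proportional to projections -/

section Proj

variable {V : Type*}

/-- If `M` is symmetric with `M * M = κ • M`, then `κ * M` is positive semidefinite. -/
lemma proj_form [Fintype V] {M : Matrix V V ℝ} {κ : ℝ} (hs : ∀ u w, M u w = M w u) (hM : M * M = κ • M)
    (f : V → ℝ) : 0 ≤ κ * ∑ u, f u * ∑ w, M u w * f w := by
  have e : M.mulVec f ⬝ᵥ M.mulVec f = κ * (f ⬝ᵥ M.mulVec f) := by
    have hT : M.transpose = M := by ext u w; exact hs w u
    rw [Matrix.dotProduct_mulVec (M.mulVec f) M f, ← Matrix.mulVec_transpose, hT,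
      Matrix.mulVec_mulVec, hM, Matrix.smul_mulVec, smul_dotProduct, smul_eq_mul,
      dotProduct_comm]
  have : 0 ≤ M.mulVec f ⬝ᵥ M.mulVec f := by
    simp only [dotProduct]
    exact Finset.sum_nonneg fun i _ => mul_self_nonneg _
  rw [e] at this
  exact this

/-- The Gram matrix left after projecting the vectors orthogonally to the vector indexed by
`x`. -/
noncomputable def deflate (M : Matrix V V ℝ) (x : V) : Matrix V V ℝ :=
  Matrix.of fun u w => M u w - M u x * M x w / M x x

lemma deflate_symm {M : Matrix V V ℝ} (hs : ∀ u w, M u w = M w u) (x u w : V) :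
    deflate M x u w = deflate M x w u := by
  simp only [deflate, Matrix.of_apply]
  rw [hs u w, hs u x, hs x w]; ring

lemma proj_entry [Fintype V] {M : Matrix V V ℝ} {κ : ℝ} (hM : M * M = κ • M) (u w : V) :
    ∑ z, M u z * M z w = κ * M u w := by
  have := congrFun (congrFun hM u) w
  simpa [Matrix.mul_apply] using this

lemma deflate_sq [Fintype V] {M : Matrix V V ℝ} {κ : ℝ} (hM : M * M = κ • M) {x : V} (hx : M x x ≠ 0) :
    deflate M x * deflate M x = κ • deflate M x := by
  ext u w
  simp only [deflate, Matrix.mul_apply, Matrix.smul_apply, Matrix.of_apply, smul_eq_mul]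
  have e : ∀ z, (M u z - M u x * M x z / M x x) * (M z w - M z x * M x w / M x x) =
      M u z * M z w - (M u z * M z x) * (M x w / M x x) - (M x z * M z w) * (M u x / M x x)
      + (M x z * M z x) * (M u x * M x w / (M x x * M x x)) := by
    intro z; field_simp; ring
  rw [Finset.sum_congr rfl fun z _ => e z, Finset.sum_add_distrib, Finset.sum_sub_distrib,
    Finset.sum_sub_distrib, ← Finset.sum_mul, ← Finset.sum_mul, ← Finset.sum_mul,
    proj_entry hM, proj_entry hM, proj_entry hM, proj_entry hM]
  field_simp; ring

lemma deflate_trace [Fintype V] {M : Matrix V V ℝ} {κ : ℝ} (hM : M * M = κ • M) {x : V} (hx : M x x ≠ 0) :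
    (deflate M x).trace = M.trace - κ := by
  simp only [deflate, Matrix.trace, Matrix.diag, Matrix.of_apply, Finset.sum_sub_distrib,
    ← Finset.sum_div]
  have : ∑ i, M i x * M x i = κ * M x x := by
    rw [← proj_entry hM]; exact Finset.sum_congr rfl fun z _ => mul_comm _ _
  rw [this]; field_simp

/-- The trace of a projection is its rank. -/
lemma proj_trace_nat [Fintype V] [DecidableEq V] {M : Matrix V V ℝ} {κ : ℝ} (hκ : κ ≠ 0) (hM : M * M = κ • M) :
    ∃ g : ℕ, M.trace = κ * g := by
  set P := κ⁻¹ • M with hP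
  have hPP : IsIdempotentElem (Matrix.toLin' P) := by
    have : P * P = P := by
      rw [hP, smul_mul_smul_comm, hM, smul_smul]; congr 1; field_simp
    change (Matrix.toLin' P).comp (Matrix.toLin' P) = _
    rw [← Matrix.toLin'_mul, this]
  have ht := (LinearMap.IsIdempotentElem.isProj_range _ hPP).trace
  rw [Matrix.trace_toLin'_eq, hP, Matrix.trace_smul, smul_eq_mul] at ht
  exact ⟨_, by rw [← ht]; field_simp⟩

/-- The Frobenius norm of `α T² + β T + γ` on the range of `E` is nonnegative, where `T` is the
compression to that range of the coordinate projection onto `s`. Its moments are computed in the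
principal submatrix of `E` indexed by `s`. -/
lemma moment_ineq [Fintype V] [DecidableEq V] {E : Matrix V V ℝ} {κ : ℝ} (hκ : 0 < κ) (hs : ∀ u w, E u w = E w u)
    (hE : E * E = κ • E) (s : Finset V) (α β γ : ℝ) :
    0 ≤ α ^ 2 * ∑ u ∈ s, ∑ w ∈ s, (∑ z ∈ s, E u z * E z w) ^ 2
      + 2 * α * β * ∑ u ∈ s, ∑ w ∈ s, (∑ z ∈ s, E u z * E z w) * E u w
      + (β ^ 2 + 2 * α * γ) * ∑ u ∈ s, ∑ w ∈ s, E u w ^ 2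
      + 2 * β * γ * ∑ u ∈ s, E u u + γ ^ 2 * (E.trace / κ) := by
  set D : Matrix V V ℝ := Matrix.diagonal (fun u => if u ∈ s then 1 else 0) with hD
  have hDD : D * D = D := by
    rw [hD, Matrix.diagonal_mul_diagonal]; congr 1; ext u; split_ifs <;> simp
  have hET : E.transpose = E := by ext u w; exact hs w u
  have hDT : D.transpose = D := Matrix.diagonal_transpose _
  set B := D * E * D with hB
  have hBe : ∀ u w, B u w = if u ∈ s ∧ w ∈ s then E u w else 0 := by
    intro u w
    rw [hB, hD, Matrix.mul_diagonal, Matrix.diagonal_mul]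
    by_cases h1 : u ∈ s <;> by_cases h2 : w ∈ s <;> simp [h1, h2]
  have hBB : ∀ u w, (B * B) u w = if u ∈ s ∧ w ∈ s then ∑ z ∈ s, E u z * E z w else 0 := by
    intro u w
    rw [Matrix.mul_apply]
    simp only [hBe]
    by_cases h1 : u ∈ s <;> by_cases h2 : w ∈ s <;>
      simp [h1, h2, Finset.sum_ite_mem, ← ite_and]
  have t1 : B.trace = ∑ u ∈ s, E u u := by
    simp [Matrix.trace, hBe, Finset.sum_ite_mem]
  have key : ∀ F : V → V → ℝ, ∑ u, ∑ w, (if u ∈ s ∧ w ∈ s then F u w else 0) =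
      ∑ u ∈ s, ∑ w ∈ s, F u w := by
    intro F
    have e : ∀ u, ∑ w, (if u ∈ s ∧ w ∈ s then F u w else 0) =
        if u ∈ s then ∑ w ∈ s, F u w else 0 := by
      intro u
      by_cases hu : u ∈ s <;> simp [hu, Finset.sum_ite_mem]
    rw [Finset.sum_congr rfl fun u _ => e u, Finset.sum_ite_mem, Finset.univ_inter]
  have t2 : (B * B).trace = ∑ u ∈ s, ∑ w ∈ s, E u w ^ 2 := by
    rw [← key]
    simp only [Matrix.trace, Matrix.diag, Matrix.mul_apply]
    refine Finset.sum_congr rfl fun u _ => Finset.sum_congr rfl fun w _ => ?_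
    rw [hBe, hBe, hs w u]
    by_cases h1 : u ∈ s <;> by_cases h2 : w ∈ s <;> simp [h1, h2, sq]
  have t3 : (B * B * B).trace = ∑ u ∈ s, ∑ w ∈ s, (∑ z ∈ s, E u z * E z w) * E u w := by
    rw [← key]
    simp only [Matrix.trace, Matrix.diag]
    refine Finset.sum_congr rfl fun u _ => ?_
    rw [Matrix.mul_apply]
    refine Finset.sum_congr rfl fun w _ => ?_
    rw [hBe, hBB, hs w u]
    by_cases h1 : u ∈ s <;> by_cases h2 : w ∈ s <;> simp [h1, h2]
  have t4 : (B * B * (B * B)).trace = ∑ u ∈ s, ∑ w ∈ s, (∑ z ∈ s, E u z * E z w) ^ 2 := by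
    rw [← key]
    simp only [Matrix.trace, Matrix.diag]
    refine Finset.sum_congr rfl fun u _ => ?_
    rw [Matrix.mul_apply]
    refine Finset.sum_congr rfl fun w _ => ?_
    rw [hBB, hBB]
    have : ∑ z ∈ s, E w z * E z u = ∑ z ∈ s, E u z * E z w :=
      Finset.sum_congr rfl fun z _ => by rw [hs w z, hs z u, mul_comm]
    by_cases h1 : u ∈ s <;> by_cases h2 : w ∈ s <;> simp [h1, h2, sq, this]
  set X := α • (E * D * E * D * E) + β • (E * D * E) + γ • E with hX
  have hXT : X.transpose = X := by
    simp only [hX, Matrix.transpose_add, Matrix.transpose_smul, Matrix.transpose_mul, hET, hDT,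
      Matrix.mul_assoc]
  have hX0 : 0 ≤ (X * X).trace := by
    nth_rewrite 1 [← hXT]
    simp only [Matrix.trace, Matrix.diag, Matrix.mul_apply, Matrix.transpose_apply]
    exact Finset.sum_nonneg fun _ _ => Finset.sum_nonneg fun _ _ => mul_self_nonneg _
  have r : ∀ A : Matrix V V ℝ, (E * A * E).trace = κ * (E * A).trace := by
    intro A
    rw [Matrix.trace_mul_comm, ← Matrix.mul_assoc, hE, Matrix.smul_mul, Matrix.trace_smul,
      smul_eq_mul]
  have q : ∀ A : Matrix V V ℝ, (D * (E * A) * D).trace = (E * (A * D)).trace := by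
    intro A
    rw [Matrix.trace_mul_comm, ← Matrix.mul_assoc, hDD, Matrix.trace_mul_comm, Matrix.mul_assoc]
  have hDA : ∀ A : Matrix V V ℝ, D * (D * A) = D * A := fun A => by
    rw [← Matrix.mul_assoc, hDD]
  have hEA : ∀ A : Matrix V V ℝ, E * (E * A) = κ • (E * A) := fun A => by
    rw [← Matrix.mul_assoc, hE, Matrix.smul_mul]
  have q1 : (E * D * E).trace = κ * B.trace := by
    rw [r, hB, Matrix.trace_mul_comm (D * E) D, ← Matrix.mul_assoc, hDD, Matrix.trace_mul_comm]
  have q2 : (E * D * E * D * E).trace = κ * (B * B).trace := by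
    have : E * D * E * D * E = E * (D * E * D) * E := by simp only [Matrix.mul_assoc]
    rw [this, r, hB]
    have : D * E * D * (D * E * D) = D * (E * (D * E)) * D := by
      simp only [Matrix.mul_assoc, hDA]
    rw [this, q, Matrix.mul_assoc D E D]
  have q3 : (E * D * E * D * E * D * E).trace = κ * (B * B * B).trace := by
    have : E * D * E * D * E * D * E = E * (D * E * D * E * D) * E := by
      simp only [Matrix.mul_assoc]
    rw [this, r, hB]
    have : D * E * D * (D * E * D) * (D * E * D) = D * (E * (D * E * D * E)) * D := by
      simp only [Matrix.mul_assoc, hDA]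
    rw [this, q]
  have q4 : (E * D * E * D * E * D * E * D * E).trace = κ * (B * B * (B * B)).trace := by
    have : E * D * E * D * E * D * E * D * E = E * (D * E * D * E * D * E * D) * E := by
      simp only [Matrix.mul_assoc]
    rw [this, r, hB]
    have : D * E * D * (D * E * D) * (D * E * D * (D * E * D)) =
        D * (E * (D * E * D * E * D * E)) * D := by
      simp only [Matrix.mul_assoc, hDA]
    rw [this, q]
  have hXX : X * X = κ • ((α ^ 2) • (E * D * E * D * E * D * E * D * E)
      + (2 * α * β) • (E * D * E * D * E * D * E) + (β ^ 2 + 2 * α * γ) • (E * D * E * D * E)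
      + (2 * β * γ) • (E * D * E) + (γ ^ 2) • E) := by
    simp only [hX, add_mul, mul_add, smul_mul_assoc, mul_smul_comm, smul_smul, smul_add,
      mul_assoc, hEA, hE]
    module
  rw [hXX] at hX0
  simp only [Matrix.trace_smul, Matrix.trace_add, smul_eq_mul, q1, q2, q3, q4] at hX0
  rw [t1, t2, t3, t4] at hX0
  have h2 : 0 < κ * κ := by positivity
  refine nonneg_of_mul_nonneg_right (le_of_le_of_eq hX0 ?_) h2
  field_simp

end Proj

/-! ### The Gram matrices of a signed cover -/

section Gram

variable {V : Type*} [Fintype V] [DecidableEq V]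

/-- For a root `ρ` of `ρ ^ 2 = τ * ρ + v`, this matrix is a multiple of the projection onto the
eigenspace of `S` belonging to the other root. -/
noncomputable def Gm (S : V → V → ℝ) (bar : V → V) (ρ : ℝ) : Matrix V V ℝ :=
  Matrix.of fun u w => ρ * ((if u = w then 1 else 0) - (if bar u = w then 1 else 0)) - S u w

namespace SignedCover

variable {S : V → V → ℝ} {bar : V → V} {v τ : ℝ} (h : SignedCover S bar v τ)

include h

lemma Gm_symm (ρ : ℝ) (u w : V) : Gm S bar ρ u w = Gm S bar ρ w u := by
  simp only [Gm, Matrix.of_apply]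
  rw [h.symm u w, if_congr (h.bar_eq_iff u w) rfl rfl, if_congr (eq_comm (a := u) (b := w)) rfl rfl,
    if_congr (eq_comm (a := u) (b := bar w)) rfl rfl]

lemma Gm_sq {ρ : ℝ} (hρ : ρ ^ 2 = τ * ρ + v) :
    Gm S bar ρ * Gm S bar ρ = (2 * (2 * ρ - τ)) • Gm S bar ρ := by
  ext u w
  simp only [Gm, Matrix.mul_apply, Matrix.smul_apply, Matrix.of_apply, smul_eq_mul]
  have e : ∀ z, (ρ * ((if u = z then 1 else 0) - (if bar u = z then 1 else 0)) - S u z) *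
      (ρ * ((if z = w then 1 else 0) - (if bar z = w then 1 else 0)) - S z w) =
      (if u = z then ρ * (ρ * ((if z = w then 1 else 0) - (if bar z = w then 1 else 0)) - S z w)
        else 0)
      - (if bar u = z then
          ρ * (ρ * ((if z = w then 1 else 0) - (if bar z = w then 1 else 0)) - S z w) else 0)
      - (if w = z then ρ * S u z else 0) + (if bar w = z then ρ * S u z else 0)
      + S u z * S z w := by
    intro z
    rw [if_congr (h.bar_eq_iff z w) rfl rfl, if_congr (eq_comm (a := w) (b := z)) rfl rfl,
      if_congr (eq_comm (a := bar w) (b := z)) rfl rfl]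
    split_ifs <;> ring
  rw [Finset.sum_congr rfl fun z _ => e z, Finset.sum_add_distrib, Finset.sum_add_distrib,
    Finset.sum_sub_distrib, Finset.sum_sub_distrib, h.sq]
  simp only [Finset.sum_ite_eq, Finset.mem_univ, if_true, h.S_bar, h.S_bar_right, h.bar_bar]
  linear_combination
    (-2 * ((if u = w then (1 : ℝ) else 0) - (if bar u = w then 1 else 0))) * hρ

lemma Gm_diag (ρ : ℝ) (u : V) : Gm S bar ρ u u = ρ := by
  simp [Gm, h.bar_ne, h.diag]

lemma Gm_of_S {ρ : ℝ} {u w : V} (huw : S u w ≠ 0) : Gm S bar ρ u w = -S u w := by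
  obtain ⟨h1, h2⟩ := h.ne_of_S huw
  simp [Gm, h1.symm, h2.symm]

lemma Gm_trace (ρ : ℝ) : (Gm S bar ρ).trace = ρ * Fintype.card V := by
  simp [Matrix.trace, h.Gm_diag, mul_comm]

/-- Two vertices with a common positive neighbour are not antipodal. -/
lemma pm_of_common {x u w : V} (hu : S x u = 1) (hw : S x w = 1) (hne : u ≠ w) :
    S u w = 1 ∨ S u w = -1 := by
  refine h.pm u w hne.symm ?_
  rintro rfl
  rw [h.S_bar_right, hu] at hw
  norm_num at hw

lemma S_Ell {x y z u w : V} (hxy : S x y = 1) (hxz : S x z = 1) (hyz : S y z = 1)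
    (hu : u ∈ Ell S x y z) (hw : w ∈ Ell S x y z) : S u w ≠ 1 := by
  simp only [Ell, Finset.mem_filter, Finset.mem_univ, true_and] at hu hw
  intro huw
  exact h.noK5 x y z u w hxy hxz hu.1 hw.1 hyz hu.2.1 hw.2.1 hu.2.2 hw.2.2 huw

/-- A positive triangle together with its common neighbours, which are pairwise in negative
relation, gives a small principal submatrix on which definiteness is tested. -/
lemma tri_form {ρ : ℝ} (hρ : ρ ^ 2 = τ * ρ + v) {x y z : V}
    (hxy : S x y = 1) (hxz : S x z = 1) (hyz : S y z = 1) {l : ℝ}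
    (hl : l = (v + 3 * τ - 5) / 4) (α β : ℝ) :
    0 ≤ (2 * (2 * ρ - τ)) *
      (α ^ 2 * l * (ρ + l - 1) - 6 * α * β * l + 3 * β ^ 2 * (ρ - 2)) := by
  have hcard := h.card_Ell hxy hxz hyz
  rw [← hl] at hcard
  have hf := proj_form (h.Gm_symm ρ) (h.Gm_sq hρ)
    (fun u => (if u ∈ Ell S x y z then α else 0) + (if x = u then β else 0)
      + (if y = u then β else 0) + (if z = u then β else 0))
  have hsum : ∀ (F : V → ℝ), ∑ w, F w * ((if w ∈ Ell S x y z then α else 0)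
      + (if x = w then β else 0) + (if y = w then β else 0) + (if z = w then β else 0)) =
      α * ∑ w ∈ Ell S x y z, F w + β * (F x + F y + F z) := by
    intro F
    simp only [mul_add, mul_ite, mul_zero, Finset.sum_add_distrib, Finset.sum_ite_eq,
      Finset.mem_univ, if_true, Finset.sum_ite_mem, Finset.univ_inter, Finset.mul_sum]
    simp only [mul_comm]
    ring
  have hrow : ∀ u ∈ Ell S x y z, ∑ w ∈ Ell S x y z, Gm S bar ρ u w = ρ + l - 1 := by
    intro u hu
    have e : ∀ w ∈ Ell S x y z, Gm S bar ρ u w = 1 + (if u = w then ρ - 1 else 0) := by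
      intro w hw
      by_cases huw : u = w
      · subst huw; rw [h.Gm_diag, if_pos rfl]; ring
      · have h1 := h.S_Ell hxy hxz hyz hu hw
        have h2 : S u w = -1 := by
          simp only [Ell, Finset.mem_filter, Finset.mem_univ, true_and] at hu hw
          exact (h.pm_of_common hu.1 hw.1 huw).resolve_left h1
        rw [h.Gm_of_S (by simp [h2]), h2, if_neg huw]; ring
    rw [Finset.sum_congr rfl e, Finset.sum_add_distrib, Finset.sum_ite_eq, if_pos hu,
      Finset.sum_const, nsmul_eq_mul, hcard]
    ring
  have hx : ∀ u ∈ Ell S x y z, Gm S bar ρ x u = -1 ∧ Gm S bar ρ y u = -1 ∧ Gm S bar ρ z u = -1 := by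
    intro u hu
    simp only [Ell, Finset.mem_filter, Finset.mem_univ, true_and] at hu
    rw [h.Gm_of_S (by simp [hu.1]), h.Gm_of_S (by simp [hu.2.1]), h.Gm_of_S (by simp [hu.2.2])]
    simp [hu]
  have gxy : Gm S bar ρ x y = -1 := by rw [h.Gm_of_S (by simp [hxy]), hxy]
  have gxz : Gm S bar ρ x z = -1 := by rw [h.Gm_of_S (by simp [hxz]), hxz]
  have gyz : Gm S bar ρ y z = -1 := by rw [h.Gm_of_S (by simp [hyz]), hyz]
  have hrow' : ∀ u ∈ Ell S x y z, α * ∑ w ∈ Ell S x y z, Gm S bar ρ u w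
      + β * (Gm S bar ρ u x + Gm S bar ρ u y + Gm S bar ρ u z) = α * (ρ + l - 1) - 3 * β := by
    intro u hu
    rw [hrow u hu, h.Gm_symm ρ u x, h.Gm_symm ρ u y, h.Gm_symm ρ u z, (hx u hu).1, (hx u hu).2.1,
      (hx u hu).2.2]
    ring
  simp only [hsum] at hf
  rw [Finset.sum_congr rfl (fun u _ => mul_comm _ _), hsum, Finset.sum_congr rfl hrow',
    Finset.sum_congr rfl (fun u hu => (hx u hu).1), Finset.sum_congr rfl (fun u hu => (hx u hu).2.1),
    Finset.sum_congr rfl (fun u hu => (hx u hu).2.2), h.Gm_diag, h.Gm_diag, h.Gm_diag,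
    h.Gm_symm ρ y x, h.Gm_symm ρ z x, h.Gm_symm ρ z y, gxy, gxz, gyz] at hf
  simp only [Finset.sum_const, nsmul_eq_mul, hcard] at hf
  refine le_of_le_of_eq hf ?_
  ring

/-- Applied to the negative eigenvalue `-R`, `tri_form` bounds the number `l` of common
neighbours of a triangle. -/
lemma tri_ineq {R : ℝ} (hR : 0 < R) (hv : 0 < v) (hρ : R ^ 2 = -τ * R + v) {x y z : V}
    (hxy : S x y = 1) (hxz : S x z = 1) (hyz : S y z = 1) {l : ℝ}
    (hl : l = (v + 3 * τ - 5) / 4) (hl0 : 0 < l) : 3 * l ≤ (R + 2) * (R + 1 - l) := by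
  have e := h.tri_form (ρ := -R) (by linarith [hρ]) hxy hxz hyz hl (R + 2) (-l)
  -- the other root `R + τ = v / R` is positive
  have hpos : 0 < R + τ := by
    have : 0 < R * (R + τ) := by nlinarith
    exact (pos_iff_pos_of_mul_pos this).1 hR
  by_contra hcon
  push Not at hcon
  have h1 : 0 < l * (R + 2) * (3 * l - (R + 2) * (R + 1 - l)) := by
    have : 0 < 3 * l - (R + 2) * (R + 1 - l) := by linarith
    positivity
  have h2 : 0 < 2 * R + τ := by linarith
  have h3 := mul_pos h2 h1
  nlinarith

/-- The Gram matrix of the common neighbours of a positive pair `x`, `y`, after projecting `x`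
and `y` away. -/
lemma exists_local {ρ : ℝ} (hρ : ρ ^ 2 = τ * ρ + v) (hρ1 : 1 < ρ) {x y : V} (hxy : S x y = 1) :
    ∃ E : Matrix V V ℝ, (∀ u w, E u w = E w u) ∧ E * E = (2 * (2 * ρ - τ)) • E ∧
      E.trace = ρ * Fintype.card V - 2 * (2 * (2 * ρ - τ)) ∧
      ∀ u ∈ Lam S x y, ∀ w ∈ Lam S x y, E u w =
        (if u = w then ρ - 1 else 0) + (1 - 2 / (ρ - 1)) - 2 * tt S u w := by
  have gxy : Gm S bar ρ x y = -1 := by rw [h.Gm_of_S (by simp [hxy]), hxy]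
  have hx0 : Gm S bar ρ x x ≠ 0 := by rw [h.Gm_diag]; linarith
  have hyy : deflate (Gm S bar ρ) x y y = (ρ ^ 2 - 1) / ρ := by
    simp only [deflate, Matrix.of_apply, h.Gm_diag, h.Gm_symm ρ y x, gxy]
    field_simp
  have hy0 : deflate (Gm S bar ρ) x y y ≠ 0 := by
    rw [hyy]
    have : 0 < ρ ^ 2 - 1 := by nlinarith
    positivity
  refine ⟨deflate (deflate (Gm S bar ρ) x) y, deflate_symm (deflate_symm (h.Gm_symm ρ) x) y,
    deflate_sq (deflate_sq (h.Gm_sq hρ) hx0) hy0, ?_, ?_⟩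
  · rw [deflate_trace (deflate_sq (h.Gm_sq hρ) hx0) hy0, deflate_trace (h.Gm_sq hρ) hx0, h.Gm_trace]
    ring
  · intro u hu w hw
    simp only [Lam, Finset.mem_filter, Finset.mem_univ, true_and] at hu hw
    have huw : Gm S bar ρ u w = (if u = w then ρ - 1 else 0) + 1 - 2 * tt S u w := by
      by_cases e : u = w
      · subst e; rw [h.Gm_diag]; simp [tt, h.diag]
      · rcases h.pm_of_common hu.1 hw.1 e with h1 | h1
        · rw [h.Gm_of_S (by simp [h1])]; simp [tt, h1, e]; norm_num
        · rw [h.Gm_of_S (by simp [h1])]; simp only [tt, h1, e]; norm_num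
    have e1 : Gm S bar ρ x u = -1 := by rw [h.Gm_of_S (by simp [hu.1]), hu.1]
    have e2 : Gm S bar ρ y u = -1 := by rw [h.Gm_of_S (by simp [hu.2]), hu.2]
    have e3 : Gm S bar ρ x w = -1 := by rw [h.Gm_of_S (by simp [hw.1]), hw.1]
    have e4 : Gm S bar ρ y w = -1 := by rw [h.Gm_of_S (by simp [hw.2]), hw.2]
    have e5 : deflate (deflate (Gm S bar ρ) x) y u w = deflate (Gm S bar ρ) x u w
      - deflate (Gm S bar ρ) x u y * deflate (Gm S bar ρ) x y w
        / deflate (Gm S bar ρ) x y y := rfl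
    have hm : ρ - 1 ≠ 0 := by linarith
    have hp : ρ + 1 ≠ 0 := by linarith
    have h0 : ρ ≠ 0 := by linarith
    have hq : ρ ^ 2 - 1 ≠ 0 := by nlinarith
    rw [e5, hyy]
    simp only [deflate, Matrix.of_apply, h.Gm_diag, gxy, h.Gm_symm ρ u x, h.Gm_symm ρ u y,
      h.Gm_symm ρ y x, e1, e2, e3, e4, huw]
    have : ρ ^ 2 - 1 = (ρ - 1) * (ρ + 1) := by ring
    rw [this]
    field_simp
    ring

end SignedCover

end Gram

/-! ### Counting around a positive pair -/

section Local

variable {V : Type*} [Fintype V] [DecidableEq V]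

/-- For a triangle `x`, `y`, `z` with common neighbourhood `L`, the sum over the common neighbours
`w` of `x`, `y` negatively related to `z` of the squared number of positive neighbours of `w`
in `L`. -/
noncomputable def qq (S : V → V → ℝ) (x y z : V) : ℝ :=
  ∑ w ∈ Emm S x y z, (∑ l ∈ Ell S x y z, tt S l w) ^ 2

omit [DecidableEq V] in
lemma Ell_swap (S : V → V → ℝ) (x y z : V) : Ell S x z y = Ell S x y z := by
  ext w; simp only [Ell, Finset.mem_filter, Finset.mem_univ, true_and]; tauto

omit [DecidableEq V] in
lemma Ell_rot (S : V → V → ℝ) (x y z : V) : Ell S y z x = Ell S x y z := by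
  ext w; simp only [Ell, Finset.mem_filter, Finset.mem_univ, true_and]; tauto

namespace SignedCover

variable {S : V → V → ℝ} {bar : V → V} {v τ : ℝ} (h : SignedCover S bar v τ)

include h

lemma tt_symm (u w : V) : tt S u w = tt S w u := by simp only [tt, h.symm u w]

/-- The common neighbours of `x` and `y`, as seen from one of them. -/
lemma sum_Lam_split {x y u : V} (hxu : S x u = 1) (hyu : S y u = 1) (F : V → ℝ) :
    ∑ w ∈ Lam S x y, F w = F u + ∑ w ∈ Ell S x y u, F w + ∑ w ∈ Emm S x y u, F w := by
  have e : ∀ w ∈ Lam S x y, F w = (if u = w then F w else 0) + (if S u w = 1 then F w else 0)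
      + (if S u w = -1 then F w else 0) := by
    intro w hw
    simp only [Lam, Finset.mem_filter, Finset.mem_univ, true_and] at hw
    by_cases e : u = w
    · subst e; simp [h.diag]
    · rcases h.pm_of_common hxu hw.1 e with h1 | h1
      · simp only [h1, e]; norm_num
      · simp only [h1, e]; norm_num
  rw [Finset.sum_congr rfl e, Finset.sum_add_distrib, Finset.sum_add_distrib, Finset.sum_ite_eq,
    if_pos (by simp [Lam, hxu, hyu])]
  simp only [Lam, Ell, Emm, ← Finset.sum_filter, Finset.filter_filter, and_assoc]

lemma card_Emm {x y u : V} (hxy : S x y = 1) (hxu : S x u = 1) (hyu : S y u = 1) :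
    ((Emm S x y u).card : ℝ) = (v + τ - 1) / 2 - 1 - (v + 3 * τ - 5) / 4 := by
  have := h.sum_Lam_split hxu hyu (fun _ => 1)
  simp only [Finset.sum_const, nsmul_eq_mul, mul_one, h.card_Lam hxy, h.card_Ell hxy hxu hyu] at this
  linarith

lemma path_self {x y u : V} (hxy : S x y = 1) (hxu : S x u = 1) (hyu : S y u = 1) :
    ∑ l ∈ Ell S x y u, tt S l u = (v + 3 * τ - 5) / 4 := by
  rw [← h.card_Ell hxy hxu hyu, Finset.card_eq_sum_ones, Nat.cast_sum]
  refine Finset.sum_congr rfl fun l hl => ?_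
  simp only [Ell, Finset.mem_filter, Finset.mem_univ, true_and] at hl
  simp [tt, h.symm l u, hl]

lemma path_Ell {x y u w : V} (hxy : S x y = 1) (hxu : S x u = 1) (hyu : S y u = 1)
    (hw : w ∈ Ell S x y u) : ∑ l ∈ Ell S x y u, tt S l w = 0 := by
  refine Finset.sum_eq_zero fun l hl => ?_
  simp [tt, h.S_Ell hxy hxu hyu hl hw]

lemma sum_path_Emm {x y u : V} (hxy : S x y = 1) (hxu : S x u = 1) (hyu : S y u = 1) :
    ∑ w ∈ Emm S x y u, ∑ l ∈ Ell S x y u, tt S l w =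
      ((v + 3 * τ - 5) / 4) ^ 2 - (v + 3 * τ - 5) / 4 := by
  have e1 : ∑ w ∈ Lam S x y, ∑ l ∈ Ell S x y u, tt S l w = ((v + 3 * τ - 5) / 4) ^ 2 := by
    rw [Finset.sum_comm]
    have : ∀ l ∈ Ell S x y u, ∑ w ∈ Lam S x y, tt S l w = (v + 3 * τ - 5) / 4 := by
      intro l hl
      simp only [Ell, Finset.mem_filter, Finset.mem_univ, true_and] at hl
      have := sum_Ell (S := S) x y l (fun _ => 1)
      simp only [Finset.sum_const, nsmul_eq_mul, mul_one, h.card_Ell hxy hl.1 hl.2.1] at this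
      exact this.symm
    rw [Finset.sum_congr rfl this, Finset.sum_const, nsmul_eq_mul, h.card_Ell hxy hxu hyu]
    ring
  rw [h.sum_Lam_split hxu hyu, h.path_self hxy hxu hyu,
    Finset.sum_congr rfl (fun w hw => h.path_Ell hxy hxu hyu hw), Finset.sum_const_zero] at e1
  linarith

/-! ### The case of largest eigenvalue three -/

/-- With eigenvalues `3` and `1 - 2 * t`, the second moment inequality on the common
neighbourhood of a pair gives `t ≤ 5`, and integrality of a multiplicity excludes `t = 4`. -/
lemma case_three {t : ℕ} (ht : 1 ≤ t) (hv : v = 3 * (2 * t - 1)) (hτ : τ = 4 - 2 * t) {x y : V}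
    (hxy : S x y = 1) : t ≤ 5 ∧ t ≠ 4 := by
  have ht' : (1 : ℝ) ≤ t := by exact_mod_cast ht
  obtain ⟨E, hs, hE, htr, hent⟩ := h.exists_local (ρ := 3) (by rw [hv, hτ]; ring) (by norm_num) hxy
  have hκ : (2 * (2 * 3 - τ) : ℝ) = 4 * (t + 1) := by rw [hτ]; ring
  have hκ0 : (0 : ℝ) < 4 * (t + 1) := by linarith
  have hcV : (Fintype.card V : ℝ) = 2 * (6 * t - 2) := by
    rcases h.card_V with h1 | h1
    · rw [h1, hv]; ring
    · exact h1.elim x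
  rw [hκ] at hE htr
  rw [hcV] at htr
  have hcL : ((Lam S x y).card : ℝ) = 2 * t := by rw [h.card_Lam hxy, hv, hτ]; ring
  have hent' : ∀ u ∈ Lam S x y, ∀ w ∈ Lam S x y, E u w =
      (if u = w then 2 else 0) - 2 * tt S u w := by
    intro u hu w hw; rw [hent u hu w hw]; norm_num
  have hd : ∀ u ∈ Lam S x y, E u u = 2 := by
    intro u hu; rw [hent' u hu u hu]; simp [tt, h.diag]
  have hrow : ∀ u ∈ Lam S x y, ∑ w ∈ Lam S x y, E u w ^ 2 = 8 := by
    intro u hu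
    have e : ∀ w ∈ Lam S x y, E u w ^ 2 = (if u = w then 4 else 0) + tt S u w * 4 := by
      intro w hw
      rw [hent' u hu w hw]
      by_cases huw : u = w
      · subst huw; simp [tt, h.diag]; norm_num
      · simp only [huw, if_false, tt]; split_ifs <;> norm_num
    rw [Finset.sum_congr rfl e, Finset.sum_add_distrib, Finset.sum_ite_eq, if_pos hu,
      ← sum_Ell x y u (fun _ => 4), Finset.sum_const, nsmul_eq_mul]
    simp only [Lam, Finset.mem_filter, Finset.mem_univ, true_and] at hu
    rw [h.card_Ell hxy hu.1 hu.2, hv, hτ]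
    ring
  constructor
  · have hm := moment_ineq hκ0 hs hE (Lam S x y) 0 1 (-4)
    rw [Finset.sum_congr rfl hrow, Finset.sum_congr rfl hd] at hm
    simp only [Finset.sum_const, nsmul_eq_mul, hcL] at hm
    have e : E.trace / (4 * ((t : ℝ) + 1)) = (7 * t - 5) / (t + 1) := by
      rw [htr]; field_simp; ring
    rw [e] at hm
    have h2 : (t : ℝ) ≤ (7 * t - 5) / (t + 1) := by linarith
    rw [le_div_iff₀ (by linarith)] at h2
    by_contra hcon
    have h3 : (6 : ℝ) ≤ t := by exact_mod_cast (by omega : 6 ≤ t)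
    nlinarith
  · rintro rfl
    obtain ⟨g, hg⟩ := proj_trace_nat hκ0.ne' hE
    rw [htr] at hg
    push_cast at hg
    have : (23 : ℝ) = 5 * g := by linarith
    have h5 : (23 : ℕ) = 5 * g := by exact_mod_cast this
    omega

/-! ### The case of largest eigenvalue five -/

lemma Emm_sq {x y z : V} (hxy : S x y = 1) (hxz : S x z = 1) (hyz : S y z = 1) {l c : ℝ}
    (hl : l = (v + 3 * τ - 5) / 4) (hc : c = (v + τ - 1) / 2) :
    ∑ w ∈ Emm S x y z, (∑ u ∈ Ell S x y z, S w u) ^ 2 =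
      4 * qq S x y z - 4 * l * (l ^ 2 - l) + l ^ 2 * (c - 1 - l) := by
  have e : ∀ w ∈ Emm S x y z, (∑ u ∈ Ell S x y z, S w u) ^ 2 =
      4 * (∑ u ∈ Ell S x y z, tt S u w) ^ 2 - 4 * l * (∑ u ∈ Ell S x y z, tt S u w) + l ^ 2 := by
    intro w hw
    simp only [Emm, Finset.mem_filter, Finset.mem_univ, true_and] at hw
    have : ∑ u ∈ Ell S x y z, S w u = 2 * (∑ u ∈ Ell S x y z, tt S u w) - l := by
      rw [hl, ← h.card_Ell hxy hxz hyz, Finset.card_eq_sum_ones, Nat.cast_sum, Finset.mul_sum,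
        ← Finset.sum_sub_distrib]
      refine Finset.sum_congr rfl fun u hu => ?_
      simp only [Ell, Finset.mem_filter, Finset.mem_univ, true_and] at hu
      have hne : u ≠ w := by
        rintro rfl
        rw [hu.2.2] at hw; norm_num at hw
      rw [h.symm w u]
      rcases h.pm_of_common hu.1 hw.1 hne with h1 | h1
      · simp only [tt, h1]; norm_num
      · simp only [tt, h1]; norm_num
    rw [this]; ring
  rw [Finset.sum_congr rfl e, Finset.sum_add_distrib, Finset.sum_sub_distrib, ← Finset.mul_sum,
    ← Finset.mul_sum, h.sum_path_Emm hxy hxz hyz, Finset.sum_const, nsmul_eq_mul,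
    h.card_Emm hxy hxz hyz, ← hl, ← hc, qq]
  ring

/-- The three values of `qq` on a triangle have constant sum. This is the squared norm of
the combination of rows of `S` indexed by the common neighbours, evaluated in two ways. -/
lemma tri_qq {x y z : V} (hxy : S x y = 1) (hxz : S x z = 1) (hyz : S y z = 1) {l c : ℝ}
    (hl : l = (v + 3 * τ - 5) / 4) (hc : c = (v + τ - 1) / 2) :
    4 * (qq S x y z + qq S x z y + qq S y z x) = v * l - τ * l * (l - 1) - 3 * l ^ 2
      - l * (l - 1) ^ 2 + 12 * l ^ 2 * (l - 1) - 3 * l ^ 2 * (c - 1 - l) := by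
  have hcard := h.card_Ell hxy hxz hyz
  rw [← hl] at hcard
  set L := Ell S x y z with hL
  have hmem : ∀ {u}, u ∈ L → S x u = 1 ∧ S y u = 1 ∧ S z u = 1 := by
    intro u hu
    simpa only [hL, Ell, Finset.mem_filter, Finset.mem_univ, true_and] using hu
  have hSL : ∀ u ∈ L, ∀ w ∈ L, S u w = -1 + (if u = w then 1 else 0) := by
    intro u hu w hw
    by_cases huw : u = w
    · subst huw; simp [h.diag]
    · rw [(h.pm_of_common (hmem hu).1 (hmem hw).1 huw).resolve_left (h.S_Ell hxy hxz hyz hu hw)]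
      simp [huw]
  have hgL : ∀ u ∈ L, ∑ w ∈ L, S u w = 1 - l := by
    intro u hu
    rw [Finset.sum_congr rfl (hSL u hu), Finset.sum_add_distrib, Finset.sum_ite_eq, if_pos hu,
      Finset.sum_const, nsmul_eq_mul, hcard]
    ring
  -- first evaluation, by the quadratic equation for `S`
  have h1 : ∑ w, (∑ u ∈ L, S w u) ^ 2 = 2 * (v * l - τ * l * (l - 1)) := by
    have e : ∀ w, (∑ u ∈ L, S w u) ^ 2 = ∑ u ∈ L, ∑ u' ∈ L, S u w * S w u' := by
      intro w
      rw [pow_two, Finset.sum_mul_sum]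
      exact Finset.sum_congr rfl fun u _ => Finset.sum_congr rfl fun u' _ => by rw [h.symm w u]
    rw [Finset.sum_congr rfl fun w _ => e w, Finset.sum_comm]
    have e2 : ∀ u ∈ L, ∑ w, ∑ u' ∈ L, S u w * S w u' = 2 * (v + τ * (1 - l)) := by
      intro u hu
      rw [Finset.sum_comm]
      have e3 : ∀ u' ∈ L, ∑ w, S u w * S w u' =
          (if u = u' then 2 * v else 0) + 2 * τ * S u u' := by
        intro u' hu'
        have hb : bar u ≠ u' := by
          rintro rfl
          have := (hmem hu').1
          rw [h.S_bar_right, (hmem hu).1] at this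
          norm_num at this
        rw [h.sq, if_neg hb]
        split_ifs <;> ring
      rw [Finset.sum_congr rfl e3, Finset.sum_add_distrib, Finset.sum_ite_eq, if_pos hu,
        ← Finset.mul_sum, hgL u hu]
      ring
    rw [Finset.sum_congr rfl e2, Finset.sum_const, nsmul_eq_mul, hcard]
    ring
  -- second evaluation, by distributing the vertices according to their relations to `x`, `y`, `z`
  have heven : ∀ w, (∑ u ∈ L, S (bar w) u) ^ 2 = (∑ u ∈ L, S w u) ^ 2 := by
    intro w
    simp only [h.S_bar, Finset.sum_neg_distrib, neg_sq]
  rw [h.half (fun w => (∑ u ∈ L, S w u) ^ 2) heven x] at h1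
  have hsplit : ∀ F : V → ℝ, (∀ w, F (bar w) = F w) → ∑ w ∈ Nb S x, F w =
      F y + F z + ∑ w ∈ L, F w + ∑ w ∈ Emm S x y z, F w + ∑ w ∈ Emm S x z y, F w
        + ∑ w ∈ Emm S y z x, F w := by
    intro F hF
    have hinv : Function.Involutive bar := h.bar_bar
    have e1 : ∑ w ∈ Emm S y z x, F w =
        ∑ w ∈ Nb S x, (if S y w = -1 ∧ S z w = -1 then F w else 0) := by
      rw [← Finset.sum_filter]
      refine Finset.sum_bij' (fun w _ => bar w) (fun w _ => bar w) ?_ ?_ ?_ ?_ ?_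
      · intro w hw
        simp only [Emm, Nb, Finset.mem_filter, Finset.mem_univ, true_and] at hw ⊢
        simp [h.S_bar_right, hw]
      · intro w hw
        simp only [Emm, Nb, Finset.mem_filter, Finset.mem_univ, true_and] at hw ⊢
        simp [h.S_bar_right, hw]
      · intro w _; exact h.bar_bar w
      · intro w _; exact h.bar_bar w
      · intro w _; exact (hF w).symm
    have e2 : ∑ w ∈ Emm S x z y, F w =
        ∑ w ∈ Nb S x, (if S y w = -1 ∧ S z w = 1 then F w else 0) := by
      rw [← Finset.sum_filter, Nb, Finset.filter_filter, Emm]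
      congr 1; ext w; simp only [Finset.mem_filter, Finset.mem_univ, true_and]; tauto
    have e3 : ∑ w ∈ Lam S x y, F w = ∑ w ∈ Nb S x, (if S y w = 1 then F w else 0) := by
      rw [← Finset.sum_filter, Nb, Finset.filter_filter, Lam]
    have e4 : ∀ w ∈ Nb S x, F w = (if y = w then F w else 0) + (if S y w = 1 then F w else 0)
        + (if S y w = -1 ∧ S z w = 1 then F w else 0)
        + (if S y w = -1 ∧ S z w = -1 then F w else 0) := by
      intro w hw
      simp only [Nb, Finset.mem_filter, Finset.mem_univ, true_and] at hw
      by_cases hyw : y = w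
      · subst hyw; simp [h.diag]
      · rcases h.pm_of_common hxy hw hyw with h1 | h1
        · simp only [h1, hyw]; norm_num
        · have hzw : z ≠ w := by
            rintro rfl; rw [hyz] at h1; norm_num at h1
          rcases h.pm_of_common hxz hw hzw with h2 | h2
          · simp only [h1, h2, hyw]; norm_num
          · simp only [h1, h2, hyw]; norm_num
    have e5 := h.sum_Lam_split hxz hyz F
    rw [Finset.sum_congr rfl e4, Finset.sum_add_distrib, Finset.sum_add_distrib,
      Finset.sum_add_distrib, ← e1, ← e2, ← e3, e5, Finset.sum_ite_eq, if_pos (by simp [Nb, hxy])]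
    ring
  rw [hsplit (fun w => (∑ u ∈ L, S w u) ^ 2) heven] at h1
  have hone : ∀ a, (∀ u ∈ L, S a u = 1) → ∑ u ∈ L, S a u = l := by
    intro a ha
    rw [Finset.sum_congr rfl ha, Finset.sum_const, nsmul_eq_mul, hcard, mul_one]
  have hL' : ∑ w ∈ L, (∑ u ∈ L, S w u) ^ 2 = l * (1 - l) ^ 2 := by
    rw [Finset.sum_congr rfl fun w hw => by rw [hgL w hw], Finset.sum_const, nsmul_eq_mul, hcard]
  have q1 := h.Emm_sq hxy hxz hyz hl hc
  have q2 := h.Emm_sq hxz hxy (by rw [h.symm, hyz]) hl hc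
  have q3 := h.Emm_sq hyz (by rw [h.symm, hxy]) (by rw [h.symm, hxz]) hl hc
  rw [Ell_swap, ← hL] at q2
  rw [Ell_rot, ← hL] at q3
  rw [← hL] at q1
  simp only [hone x fun u hu => (hmem hu).1, hone y fun u hu => (hmem hu).2.1,
    hone z fun u hu => (hmem hu).2.2, hL', q1, q2, q3] at h1
  linarith

/-- With eigenvalues `5` and `1 - 2 * m`, the fourth moment inequality on the common neighbourhood
of a pair bounds the average of `qq` from below. -/
lemma edge_qq {m : ℝ} (hm : 4 ≤ m) (hv : v = 5 * (2 * m - 1)) (hτ : τ = 6 - 2 * m) {x y : V}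
    (hxy : S x y = 1) :
    4 * m * ((m + 1) * (m + 2) * (m + 6)) < 3 * ∑ u ∈ Lam S x y, qq S x y u := by
  obtain ⟨E, hs, hE, htr, hent⟩ := h.exists_local (ρ := 5) (by rw [hv, hτ]; ring) (by norm_num) hxy
  have hκ : (2 * (2 * 5 - τ) : ℝ) = 4 * (m + 2) := by rw [hτ]; ring
  have hκ0 : (0 : ℝ) < 4 * (m + 2) := by linarith
  have hcV : (Fintype.card V : ℝ) = 2 * (10 * m - 4) := by
    rcases h.card_V with h1 | h1
    · rw [h1, hv]; ring
    · exact h1.elim x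
  rw [hκ] at hE htr
  rw [hcV] at htr
  have hcL : ((Lam S x y).card : ℝ) = 4 * m := by rw [h.card_Lam hxy, hv, hτ]; ring
  have hl : (v + 3 * τ - 5) / 4 = m + 2 := by rw [hv, hτ]; ring
  have hc : (v + τ - 1) / 2 = 4 * m := by rw [hv, hτ]; ring
  have hent' : ∀ u ∈ Lam S x y, ∀ w ∈ Lam S x y, E u w =
      (if u = w then 4 else 0) + 1 / 2 - 2 * tt S u w := by
    intro u hu w hw; rw [hent u hu w hw]; norm_num
  have htri : ∀ u ∈ Lam S x y, S x u = 1 ∧ S y u = 1 := by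
    intro u hu
    simpa only [Lam, Finset.mem_filter, Finset.mem_univ, true_and] using hu
  have hEl : ∀ {u w}, w ∈ Ell S x y u → w ∈ Lam S x y ∧ tt S u w = 1 ∧ u ≠ w := by
    intro u w hw
    simp only [Ell, Lam, Finset.mem_filter, Finset.mem_univ, true_and] at hw ⊢
    exact ⟨⟨hw.1, hw.2.1⟩, by simp [tt, hw.2.2], (h.ne_of_S (by simp [hw.2.2])).1.symm⟩
  have hEm : ∀ {u w}, w ∈ Emm S x y u → w ∈ Lam S x y ∧ tt S u w = 0 ∧ u ≠ w := by
    intro u w hw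
    simp only [Emm, Lam, Finset.mem_filter, Finset.mem_univ, true_and] at hw ⊢
    exact ⟨⟨hw.1, hw.2.1⟩, by simp only [tt, hw.2.2]; norm_num,
      (h.ne_of_S (by simp [hw.2.2])).1.symm⟩
  have ttd : ∀ u, tt S u u = 0 := by intro u; simp [tt, h.diag]
  have hrowtt : ∀ u ∈ Lam S x y, ∑ w ∈ Lam S x y, tt S u w = m + 2 := by
    intro u hu
    have := sum_Ell (S := S) x y u (fun _ => 1)
    simp only [Finset.sum_const, nsmul_eq_mul, mul_one,
      h.card_Ell hxy (htri u hu).1 (htri u hu).2, hl] at this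
    exact this.symm
  have hE2 : ∀ u ∈ Lam S x y, ∀ w ∈ Lam S x y, ∑ z ∈ Lam S x y, E u z * E z w =
      (if u = w then 16 else 0) - 16 * tt S u w + 4 * (∑ l ∈ Ell S x y u, tt S l w) - m := by
    intro u hu w hw
    have e : ∀ z ∈ Lam S x y, E u z * E z w =
        (if u = z then 4 * ((if z = w then 4 else 0) + 1 / 2 - 2 * tt S z w) else 0)
        + (if w = z then 2 - 8 * tt S u z else 0) + 1 / 4 - tt S u z - tt S w z
        + 4 * (tt S u z * tt S z w) := by
      intro z hz
      rw [hent' u hu z hz, hent' z hz w hw, h.tt_symm w z, if_congr (eq_comm (a := w)) rfl rfl]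
      split_ifs <;> ring
    rw [Finset.sum_congr rfl e, Finset.sum_add_distrib, Finset.sum_sub_distrib,
      Finset.sum_sub_distrib, Finset.sum_add_distrib, Finset.sum_add_distrib, Finset.sum_ite_eq,
      Finset.sum_ite_eq, if_pos hu, if_pos hw, hrowtt u hu, hrowtt w hw, Finset.sum_const,
      nsmul_eq_mul, hcL, ← Finset.mul_sum, ← sum_Ell x y u (fun z => tt S z w)]
    split_ifs <;> ring
  have s1 : ∀ u ∈ Lam S x y, E u u = 9 / 2 := by
    intro u hu; rw [hent' u hu u hu, ttd]; norm_num
  -- the rows of the second, third and fourth moment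
  have key : ∀ u ∈ Lam S x y, ∀ f : ℝ → ℝ → ℝ,
      ∑ w ∈ Lam S x y, f (∑ z ∈ Lam S x y, E u z * E z w) (E u w) =
      f (3 * m + 24) (9 / 2) + (m + 2) * f (-16 - m) (-3 / 2)
        + ∑ w ∈ Emm S x y u, f (4 * (∑ l ∈ Ell S x y u, tt S l w) - m) (1 / 2) := by
    intro u hu f
    rw [h.sum_Lam_split (htri u hu).1 (htri u hu).2]
    congr 1
    · congr 1
      · rw [hE2 u hu u hu, s1 u hu, ttd, h.path_self hxy (htri u hu).1 (htri u hu).2, hl,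
          if_pos rfl]
        congr 1; ring
      · have e : ∀ w ∈ Ell S x y u, f (∑ z ∈ Lam S x y, E u z * E z w) (E u w) =
            f (-16 - m) (-3 / 2) := by
          intro w hw
          obtain ⟨hw1, hw2, hw3⟩ := hEl hw
          rw [hE2 u hu w hw1, hent' u hu w hw1, hw2,
            h.path_Ell hxy (htri u hu).1 (htri u hu).2 hw, if_neg hw3, if_neg hw3]
          congr 1 <;> ring
        rw [Finset.sum_congr rfl e, Finset.sum_const, nsmul_eq_mul,
          h.card_Ell hxy (htri u hu).1 (htri u hu).2, hl]
    · refine Finset.sum_congr rfl fun w hw => ?_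
      obtain ⟨hw1, hw2, hw3⟩ := hEm hw
      rw [hE2 u hu w hw1, hent' u hu w hw1, hw2, if_neg hw3, if_neg hw3]
      congr 1 <;> ring
  have hcEm : ∀ u ∈ Lam S x y, ((Emm S x y u).card : ℝ) = 3 * m - 3 := by
    intro u hu
    rw [h.card_Emm hxy (htri u hu).1 (htri u hu).2, hl, hc]; ring
  have hpath : ∀ u ∈ Lam S x y, ∑ w ∈ Emm S x y u, ∑ l ∈ Ell S x y u, tt S l w =
      (m + 2) * (m + 1) := by
    intro u hu
    rw [h.sum_path_Emm hxy (htri u hu).1 (htri u hu).2, hl]; ring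
  have s2 : ∀ u ∈ Lam S x y, ∑ w ∈ Lam S x y, E u w ^ 2 = 3 * m + 24 := by
    intro u hu
    rw [key u hu (fun _ b => b ^ 2), Finset.sum_const, nsmul_eq_mul, hcEm u hu]
    ring
  have s3 : ∀ u ∈ Lam S x y, ∑ w ∈ Lam S x y, (∑ z ∈ Lam S x y, E u z * E z w) * E u w =
      (3 * m + 24) * (9 / 2) + (m + 2) * (16 + m) * (3 / 2)
        + (4 * ((m + 2) * (m + 1)) - m * (3 * m - 3)) / 2 := by
    intro u hu
    rw [key u hu (fun a b => a * b), ← Finset.sum_mul, Finset.sum_sub_distrib, ← Finset.mul_sum,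
      hpath u hu, Finset.sum_const, nsmul_eq_mul, hcEm u hu]
    ring
  have s4 : ∀ u ∈ Lam S x y, ∑ w ∈ Lam S x y, (∑ z ∈ Lam S x y, E u z * E z w) ^ 2 =
      (3 * m + 24) ^ 2 + (m + 2) * (16 + m) ^ 2 - 8 * m * ((m + 2) * (m + 1))
        + m ^ 2 * (3 * m - 3) + 16 * qq S x y u := by
    intro u hu
    have e : ∀ w ∈ Emm S x y u, (4 * (∑ l ∈ Ell S x y u, tt S l w) - m) ^ 2 =
        16 * (∑ l ∈ Ell S x y u, tt S l w) ^ 2 - 8 * m * (∑ l ∈ Ell S x y u, tt S l w)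
          + m ^ 2 := by
      intro w _; ring
    rw [key u hu (fun a _ => a ^ 2), Finset.sum_congr rfl e, Finset.sum_add_distrib,
      Finset.sum_sub_distrib, ← Finset.mul_sum, ← Finset.mul_sum, hpath u hu, Finset.sum_const,
      nsmul_eq_mul, hcEm u hu, qq]
    ring
  -- the test polynomial `X ^ 2 + β * X + γ` is chosen so that the resulting lower bound on the sum
  -- of `qq` exceeds what the triangle identity allows
  have hmo := moment_ineq hκ0 hs hE (Lam S x y) 1 (-(4 / 3) * (m + 7))
    (2 * m * (m + 6) * (m + 2) / (5 * (m - 1)))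
  rw [Finset.sum_congr rfl s4, Finset.sum_congr rfl s3, Finset.sum_congr rfl s2,
    Finset.sum_congr rfl s1, Finset.sum_add_distrib, ← Finset.mul_sum] at hmo
  simp only [Finset.sum_const, nsmul_eq_mul, hcL] at hmo
  have hN : E.trace / (4 * (m + 2)) = (23 * m - 14) / (m + 2) := by
    rw [htr]; field_simp; ring
  have hm1 : 0 < m - 1 := by linarith
  have hm2 : 0 < m + 2 := by linarith
  rw [hN] at hmo
  set Q := ∑ u ∈ Lam S x y, qq S x y u with hQ
  have hpos : 0 < 4 * m * (m + 6) * (11 * m ^ 4 + 350 * m ^ 3 - 1872 * m ^ 2 + 4144 * m - 3200)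
      / (75 * (m - 1) ^ 2) := by
    have h1 : 0 < 11 * m ^ 4 + 350 * m ^ 3 - 1872 * m ^ 2 + 4144 * m - 3200 := by
      obtain ⟨s, rfl⟩ : ∃ s, m = 4 + s := ⟨m - 4, by ring⟩
      have hs0 : 0 ≤ s := by linarith
      ring_nf
      positivity
    have : 0 < m := by linarith
    positivity
  have hfin : 0 < 16 / 3 * (3 * Q - 4 * m * ((m + 1) * (m + 2) * (m + 6))) := by
    refine lt_of_lt_of_le hpos ?_
    rw [← sub_nonneg]
    refine le_of_le_of_eq hmo ?_
    field_simp
    ring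
  linarith

/-- The bound of `edge_qq` on each pair contradicts the value of `tri_qq` on each triangle. -/
lemma case_five {m : ℝ} (hm : 4 ≤ m) (hv : v = 5 * (2 * m - 1)) (hτ : τ = 6 - 2 * m) {x y : V}
    (hxy : S x y = 1) : False := by
  have hl : m + 2 = (v + 3 * τ - 5) / 4 := by rw [hv, hτ]; ring
  have hc : 4 * m = (v + τ - 1) / 2 := by rw [hv, hτ]; ring
  set K := (m + 1) * (m + 2) * (m + 6) with hK
  set W : V → V → V → ℝ := fun a b d => tt S a b * tt S a d * tt S b d * qq S a b d with hW
  have htri : ∀ a b d, W a b d + W a d b + W b d a = K * (tt S a b * tt S a d * tt S b d) := by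
    intro a b d
    simp only [hW, h.tt_symm d b, h.tt_symm b a, h.tt_symm d a]
    by_cases h1 : S a b = 1
    · by_cases h2 : S a d = 1
      · by_cases h3 : S b d = 1
        · have := h.tri_qq h1 h2 h3 hl hc
          have e : qq S a b d + qq S a d b + qq S b d a = K := by
            rw [hv, hτ] at this; rw [hK]; linarith
          rw [← e]; ring
        · simp [tt, h3]
      · simp [tt, h2]
    · simp [tt, h1]
  have hedge : ∀ a b, ∑ d, W a b d = tt S a b * ∑ d ∈ Lam S a b, qq S a b d := by
    intro a b
    simp only [hW, Lam, Finset.sum_filter, Finset.mul_sum]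
    refine Finset.sum_congr rfl fun d _ => ?_
    simp only [tt]
    by_cases h2 : S a d = 1 <;> by_cases h3 : S b d = 1 <;> simp [h2, h3]
  have hedge1 : ∀ a b, ∑ d, tt S a b * tt S a d * tt S b d = tt S a b * (4 * m) := by
    intro a b
    by_cases hab : S a b = 1
    · rw [hc, ← h.card_Lam hab, Lam, Finset.card_filter, Nat.cast_sum, Finset.mul_sum]
      refine Finset.sum_congr rfl fun d _ => ?_
      simp only [tt]
      by_cases h2 : S a d = 1 <;> by_cases h3 : S b d = 1 <;> simp [h2, h3]
    · simp [tt, hab]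
  have r1 : ∑ a, ∑ b, ∑ d, W a d b = ∑ a, ∑ b, ∑ d, W a b d :=
    Finset.sum_congr rfl fun a _ => Finset.sum_comm
  have r2 : ∑ a, ∑ b, ∑ d, W b d a = ∑ a, ∑ b, ∑ d, W a b d := by
    rw [Finset.sum_comm]
    exact Finset.sum_congr rfl fun a _ => Finset.sum_comm
  have htot : ∑ a, ∑ b, ∑ d, W a b d + ∑ a, ∑ b, ∑ d, W a d b + ∑ a, ∑ b, ∑ d, W b d a =
      ∑ a, ∑ b, K * (tt S a b * (4 * m)) := by
    simp only [← Finset.sum_add_distrib, htri, ← Finset.mul_sum, hedge1]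
  rw [r1, r2] at htot
  have hz : ∑ a, ∑ b, (3 * ∑ d, W a b d - K * (tt S a b * (4 * m))) = 0 := by
    simp only [Finset.sum_sub_distrib, ← Finset.mul_sum] at htot ⊢
    linarith
  have hpos : ∀ a b, S a b = 1 → 0 < 3 * ∑ d, W a b d - K * (tt S a b * (4 * m)) := by
    intro a b hab
    have := h.edge_qq hm hv hτ hab
    rw [hedge]
    simp only [tt, hab, if_true]
    linarith
  have hnn : ∀ a b, 0 ≤ 3 * ∑ d, W a b d - K * (tt S a b * (4 * m)) := by
    intro a b
    by_cases hab : S a b = 1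
    · exact (hpos a b hab).le
    · rw [hedge]; simp [tt, hab]
  rw [Finset.sum_eq_zero_iff_of_nonneg fun a _ => Finset.sum_nonneg fun b _ => hnn a b] at hz
  have hz' := hz x (Finset.mem_univ _)
  rw [Finset.sum_eq_zero_iff_of_nonneg fun b _ => hnn x b] at hz'
  exact (hpos x y hxy).ne' (hz' y (Finset.mem_univ _))

end SignedCover

end Local

/-! ### The possible parameters -/

section Parameters

/-- An integer whose product with a nonzero square is a square is itself a square. -/
lemma exists_sq_of_mul_sq {a D p : ℤ} (hp : p ≠ 0) (h : a ^ 2 = D * p ^ 2) :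
    ∃ d : ℤ, 0 ≤ d ∧ D = d ^ 2 := by
  have h1 : p ^ 2 ∣ a ^ 2 := ⟨D, by rw [h]; ring⟩
  obtain ⟨d, rfl⟩ := (Int.pow_dvd_pow_iff two_ne_zero).1 h1
  refine ⟨|d|, abs_nonneg d, ?_⟩
  rw [sq_abs]
  have h2 : p ^ 2 ≠ 0 := pow_ne_zero 2 hp
  apply mul_right_cancel₀ h2
  rw [← h]; ring

lemma tri_arith {r t : ℤ} (hr : 3 ≤ r) (ht : 1 ≤ t)
    (h : 3 * (r * t + r - t) ≤ (2 * t - 1 + 2) * (2 * t - 1 + 1 - (r * t + r - t))) : False := by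
  have h5 : 2 * t + 3 ≤ r * t + r - t := by nlinarith
  generalize r * t + r - t = l at h h5
  have h6 : (2 * t - 1 + 2) * (2 * t - 1 + 1 - l) ≤ 0 :=
    mul_nonpos_of_nonneg_of_nonpos (by omega) (by omega)
  omega

variable {V : Type*} [Fintype V] [DecidableEq V]

namespace SignedCover

variable {S : V → V → ℝ} {bar : V → V}

/-- Unless `τ = 0`, the eigenvalues of a signed cover are integers, since their multiplicities
are determined by the trace. -/
lemma discr_sq {k : ℕ} {T : ℤ} (h : SignedCover S bar k T) (hT : T ≠ 0) (hk : 0 < k) [Nonempty V] :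
    ∃ d : ℤ, 0 ≤ d ∧ T ^ 2 + 4 * k = d ^ 2 := by
  have hk' : (0 : ℝ) < k := by exact_mod_cast hk
  have hD : (0 : ℝ) < (T : ℝ) ^ 2 + 4 * k := by positivity
  set κ := √((T : ℝ) ^ 2 + 4 * k) with hκ
  have hκ0 : 0 < κ := Real.sqrt_pos.2 hD
  have hκ2 : κ ^ 2 = (T : ℝ) ^ 2 + 4 * k := Real.sq_sqrt hD.le
  obtain ⟨g, hg⟩ := proj_trace_nat (κ := 2 * (2 * ((T + κ) / 2) - T))
    (by ring_nf; positivity) (h.Gm_sq (ρ := ((T : ℝ) + κ) / 2) (by linear_combination hκ2 / 4))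
  have hcV : (Fintype.card V : ℝ) = 2 * (1 + k) := by
    rcases h.card_V with h1 | h1
    · exact h1
    · exact (not_isEmpty_of_nonempty V h1).elim
  rw [h.Gm_trace, hcV] at hg
  have e1 : (1 + (k : ℝ)) * T = κ * (2 * g - (1 + k)) := by linear_combination hg
  have e2 : ((1 + (k : ℝ)) * T) ^ 2 = (T ^ 2 + 4 * k) * (2 * g - (1 + k)) ^ 2 := by
    rw [e1, mul_pow, hκ2]
  have e3 : ((1 + (k : ℤ)) * T) ^ 2 = (T ^ 2 + 4 * k) * (2 * g - (1 + k)) ^ 2 := by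
    exact_mod_cast e2
  refine exists_sq_of_mul_sq (fun h0 => ?_) e3
  rw [h0] at e3
  have : (1 + (k : ℤ)) * T ≠ 0 := mul_ne_zero (by positivity) hT
  exact this (by simpa using e3)

set_option maxHeartbeats 1000000 in
/-- The possible parameters of a signed cover in which some vertex has two positive neighbours in
negative relation. Here `c` is the number of common positive neighbours of a positive pair. -/
lemma classify {k c : ℕ} (h : SignedCover S bar k (2 * c + 1 - k)) (hc : 1 ≤ c) {x y z : V}
    (hxy : S x y = 1) (hxz : S x z = 1) (hyz : S y z = -1) :
    (k = 3 ∧ c = 2) ∨ (k = 5 ∧ c = 2) ∨ (k = 9 ∧ c = 4) ∨ (k = 13 ∧ c = 6) ∨ (k = 15 ∧ c = 6) ∨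
      (k = 17 ∧ c = 8) ∨ (k = 27 ∧ c = 10) := by
  have : Nonempty V := ⟨x⟩
  obtain ⟨z', hz'⟩ : (Lam S x y).Nonempty := by
    rw [← Finset.card_pos]
    have e := h.card_Lam hxy
    have e' : ((Lam S x y).card : ℝ) = c := by rw [e]; ring
    have e'' : (Lam S x y).card = c := by exact_mod_cast e'
    omega
  simp only [Lam, Finset.mem_filter, Finset.mem_univ, true_and] at hz'
  obtain ⟨hxz', hyz'⟩ := hz'
  have eL := h.card_Ell hxy hxz' hyz'
  set l := (Ell S x y z').card with hl
  have eL2 : 2 * l + k + 1 = 3 * c := by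
    have : 2 * (l : ℝ) + k + 1 = 3 * c := by linarith
    exact_mod_cast this
  obtain ⟨N, hN⟩ := h.card_neg hxy hxz hyz
  have eN2 : 2 * N + 3 * c + 4 = 2 * k := by
    have : 2 * (N : ℝ) + 3 * c + 4 = 2 * k := by linarith
    exact_mod_cast this
  have hk0 : 0 < k := by omega
  have hk0' : (0 : ℝ) < k := by exact_mod_cast hk0
  by_cases hT : (2 * (c : ℤ) + 1 - k) = 0
  · -- conference case: the eigenvalues are the two square roots of `k`
    have hkc : k = 2 * c + 1 := by omega
    have hk21 : k < 21 := by
      by_contra hcon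
      have hk' : (21 : ℝ) ≤ k := by exact_mod_cast (by omega : 21 ≤ k)
      have hsq : √(k : ℝ) ^ 2 = k := Real.sq_sqrt hk0'.le
      have hR : (9 / 2 : ℝ) ≤ √(k : ℝ) := Real.le_sqrt_of_sq_le (by norm_num; linarith)
      have hτ0 : (2 * (c : ℝ) + 1 - k) = 0 := by exact_mod_cast hT
      have := h.tri_ineq (R := √(k : ℝ)) (by linarith) hk0' (by rw [hτ0, hsq]; ring) hxy hxz' hyz'
        eL (by rw [eL, hτ0]; linarith)
      rw [eL, hτ0] at this
      generalize √(k : ℝ) = R at *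
      rw [← hsq] at this
      have h1 : 0 < (R + 3) * (R ^ 2 - 2 * R - 11) := by
        apply mul_pos <;> nlinarith
      nlinarith
    have : c < 10 := by omega
    interval_cases c <;> omega
  · have h' : SignedCover S bar k ((2 * (c : ℤ) + 1 - k : ℤ) : ℝ) := by
      push_cast; exact h
    obtain ⟨d, hd0, hd⟩ := h'.discr_sq hT hk0
    set T : ℤ := 2 * (c : ℤ) + 1 - k with hTdef
    obtain ⟨s, hs⟩ : ∃ s, T = 2 * s := ⟨T / 2, by omega⟩
    -- the eigenvalues `e + s` and `-(e - s)` are odd integers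
    obtain ⟨e, he⟩ : ∃ e, d = 2 * e := by
      have h2 : Even (d ^ 2) := by rw [← hd, hs]; exact ⟨2 * s ^ 2 + 2 * k, by ring⟩
      rw [Int.even_pow] at h2
      obtain ⟨e, he⟩ := h2.1
      exact ⟨e, by omega⟩
    have hes : (e + s) * (e - s) = k := by rw [hs, he] at hd; linarith
    have hkodd : Odd (k : ℤ) := ⟨(k : ℤ) / 2, by omega⟩
    rw [← hes, Int.odd_mul] at hkodd
    have hek : s ^ 2 < e ^ 2 := by
      have : (0 : ℤ) < k := by exact_mod_cast hk0
      nlinarith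
    have habs := abs_lt_of_sq_lt_sq hek (by omega)
    rw [abs_lt] at habs
    obtain ⟨⟨r', hr⟩, ⟨t', ht⟩⟩ := hkodd
    obtain ⟨r, rfl⟩ := Int.eq_ofNat_of_zero_le (by omega : 0 ≤ r')
    obtain ⟨u, rfl⟩ := Int.eq_ofNat_of_zero_le (by omega : 0 ≤ t')
    obtain ⟨t, htu⟩ : ∃ t, t = u + 1 := ⟨_, rfl⟩
    have hut : (u : ℤ) = t - 1 := by omega
    have hkz : (k : ℤ) = (2 * r + 1) * (2 * t - 1) := by rw [← hes, hr, ht, hut]; ring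
    have hTz : T = 2 * r + 2 - 2 * t := by omega
    have hcz : (c : ℤ) = 2 * r * t := by
      have : 2 * (c : ℤ) = 4 * (r * t) := by
        have : 2 * (c : ℤ) = T - 1 + k := by omega
        rw [this, hTz, hkz]; ring
      linarith
    have hlz : (l : ℤ) = r * t + r - t := by
      have : 2 * (l : ℤ) + k + 1 = 3 * c := by exact_mod_cast eL2
      rw [hkz, hcz] at this
      linarith
    have hkr : (k : ℝ) = (2 * r + 1) * (2 * t - 1) := by exact_mod_cast hkz
    have hTr : (2 * (c : ℝ) + 1 - k) = 2 * r + 2 - 2 * t := by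
      have : (2 * (c : ℤ) + 1 - k) = 2 * r + 2 - 2 * t := hTz
      exact_mod_cast this
    have ht1 : 1 ≤ t := by omega
    have hr1 : 1 ≤ r := by
      rcases Nat.eq_zero_or_pos r with h0 | h0
      · subst h0; simp at hcz; omega
      · exact h0
    have ht1' : (1 : ℝ) ≤ t := by exact_mod_cast ht1
    have hl0 : 0 < l := by
      zify; rw [hlz]
      have : (1 : ℤ) ≤ r := by exact_mod_cast hr1
      have : (0 : ℤ) ≤ t := by positivity
      nlinarith
    have htri := h.tri_ineq (R := 2 * t - 1) (by linarith) hk0' (by rw [hTr, hkr]; ring) hxy hxz'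
      hyz' eL (by exact_mod_cast hl0)
    have htri' : 3 * (l : ℤ) ≤ (2 * t - 1 + 2) * (2 * t - 1 + 1 - l) := by exact_mod_cast htri
    rw [hlz] at htri'
    have hr3 : r < 3 := by
      by_contra hcon
      have h3 : (3 : ℤ) ≤ r := by exact_mod_cast (by omega : 3 ≤ r)
      have h4 : (1 : ℤ) ≤ t := by exact_mod_cast ht1
      exact tri_arith h3 h4 htri'
    interval_cases r
    · have := h.case_three ht1 (by rw [hkr]; norm_num) (by rw [hTr]; norm_num) hxy
      obtain ⟨h5, h4⟩ := this
      push_cast at hkz hcz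
      interval_cases t <;> omega
    · exfalso
      have h4 : 4 ≤ t := by
        by_contra hcon
        have : t < 4 := by omega
        interval_cases t <;> norm_num at htri'
      exact h.case_five (m := t) (by exact_mod_cast h4) (by rw [hkr]; norm_num)
        (by rw [hTr]; norm_num) hxy

end SignedCover

end Parameters

/-! ### The signed cover of a Taylor graph -/

section Taylor

open scoped Classical in
/-- The sign matrix of a graph of diameter three: `1` at distance two, `-1` at distance one. -/
noncomputable def sgn {V : Type*} (G : SimpleGraph V) (x y : V) : ℝ :=
  if G.dist x y = 2 then 1 else if G.dist x y = 1 then -1 else 0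

variable {V : Type*} [Fintype V] {G : SimpleGraph V} {b c : ℕ → ℕ}

lemma exists_pred {V : Type*} {G : SimpleGraph V} (hG : G.Connected) {x y : V} {i : ℕ}
    (h : G.dist x y = i + 1) : ∃ z, G.Adj y z ∧ G.dist x z = i := by
  obtain ⟨p, hp⟩ := hG.exists_walk_length_eq_dist y x
  rw [SimpleGraph.dist_comm, h] at hp
  cases p with
  | nil => simp at hp
  | @cons _ z _ hyz p =>
    refine ⟨z, hyz, ?_⟩
    rw [SimpleGraph.Walk.length_cons] at hp
    have h1 : G.dist z x ≤ p.length := SimpleGraph.dist_le p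
    have h2 : G.dist x y ≤ G.dist x z + G.dist z y := hG.dist_triangle
    rw [SimpleGraph.dist_eq_one_iff_adj.2 hyz.symm] at h2
    rw [SimpleGraph.dist_comm] at h1
    omega

open scoped Classical in
lemma IsDRG.card_c (h : IsDRG G 3 b c) {i : ℕ} (hi : i ≤ 3) {x y : V} (hxy : G.dist x y = i) :
    (Finset.univ.filter fun z => G.Adj y z ∧ G.dist x z = i - 1).card = c i := by
  rw [← (h.2.2.2.2.2.2 i hi x y hxy).1, ← Set.ncard_coe_finset, Finset.coe_filter]
  simp

open scoped Classical in
lemma IsDRG.card_b (h : IsDRG G 3 b c) {i : ℕ} (hi : i ≤ 3) {x y : V} (hxy : G.dist x y = i) :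
    (Finset.univ.filter fun z => G.Adj y z ∧ G.dist x z = i + 1).card = b i := by
  rw [← (h.2.2.2.2.2.2 i hi x y hxy).2, ← Set.ncard_coe_finset, Finset.coe_filter]
  simp

open scoped Classical in
lemma IsDRG.card_nbr (h : IsDRG G 3 b c) (y : V) :
    (Finset.univ.filter fun z => G.Adj y z).card = b 0 := by
  rw [← h.card_b (i := 0) (by norm_num) (SimpleGraph.dist_self (v := y))]
  congr 1; ext z
  simp only [Finset.mem_filter, Finset.mem_univ, true_and, zero_add,
    SimpleGraph.dist_eq_one_iff_adj, and_self]

lemma IsDRG.exists_b (h : IsDRG G 3 b c) {i : ℕ} (hi : i ≤ 3) {x y : V} (hxy : G.dist x y = i)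
    (hb : 0 < b i) : ∃ z, G.Adj y z ∧ G.dist x z = i + 1 := by
  classical
  rw [← h.card_b hi hxy, Finset.card_pos] at hb
  obtain ⟨z, hz⟩ := hb
  exact ⟨z, by simpa using hz⟩

lemma IsDRG.c_pos (h : IsDRG G 3 b c) : 0 < c 2 ∧ 0 < c 3 := by
  classical
  obtain ⟨p, q, hpq⟩ := h.2.1
  obtain ⟨z, hz, hpz⟩ := exists_pred h.1 hpq
  obtain ⟨w, hw, hpw⟩ := exists_pred h.1 hpz
  constructor
  · rw [← h.card_c (i := 2) (by norm_num) hpz, Finset.card_pos]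
    exact ⟨w, Finset.mem_filter.2 ⟨Finset.mem_univ _, hw, hpw⟩⟩
  · rw [← h.card_c (i := 3) (by norm_num) hpq, Finset.card_pos]
    exact ⟨z, by simp [hz, hpz]⟩

/-- In a Taylor graph, the vertices at distance two from `x` are exactly the neighbours of any
vertex at distance three from `x`. -/
lemma IsDRG.adj_iff (h : IsDRG G 3 b c) (hb1 : b 1 = c 2) (hc3 : c 3 = b 0) {x y : V}
    (hxy : G.dist x y = 3) (z : V) : G.Adj y z ↔ G.dist x z = 2 := by
  classical
  have hc2 := h.c_pos.1
  have hmid : (Finset.univ.filter fun z => G.dist x z = 2).card = b 0 := by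
    have e := Finset.card_mul_eq_card_mul (s := Finset.univ.filter fun z => G.Adj x z)
      (t := Finset.univ.filter fun z => G.dist x z = 2) (m := b 1) (n := c 2) G.Adj ?_ ?_
    · rw [h.card_nbr, hb1] at e
      exact (Nat.eq_of_mul_eq_mul_right hc2 e).symm
    · intro a ha
      have ha' : G.dist x a = 1 := by
        rw [SimpleGraph.dist_eq_one_iff_adj]; simpa using ha
      rw [← h.card_b (i := 1) (by norm_num) ha', Finset.bipartiteAbove, Finset.filter_filter]
      congr 1; ext w; simp [and_comm]
    · intro a ha
      have ha' : G.dist x a = 2 := by simpa using ha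
      rw [← h.card_c (i := 2) (by norm_num) ha', Finset.bipartiteBelow, Finset.filter_filter]
      congr 1; ext w
      simp [SimpleGraph.dist_eq_one_iff_adj, and_comm, SimpleGraph.adj_comm]
  have hall := h.card_c (i := 3) le_rfl hxy
  rw [hc3] at hall
  have e1 : (Finset.univ.filter fun z => G.Adj y z ∧ G.dist x z = 3 - 1) =
      Finset.univ.filter fun z => G.Adj y z := by
    refine Finset.eq_of_subset_of_card_le ?_ (by rw [hall, h.card_nbr])
    intro w hw; simp only [Finset.mem_filter, Finset.mem_univ, true_and] at hw ⊢; exact hw.1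
  have e2 : (Finset.univ.filter fun z => G.Adj y z ∧ G.dist x z = 3 - 1) =
      Finset.univ.filter fun z => G.dist x z = 2 := by
    refine Finset.eq_of_subset_of_card_le ?_ (by rw [hall, hmid])
    intro w hw; simp only [Finset.mem_filter, Finset.mem_univ, true_and] at hw ⊢; exact hw.2
  have := Finset.ext_iff.1 (e1.symm.trans e2) z
  simpa using this

/-- Taylor graphs are antipodal double covers. -/
lemma IsDRG.exists_bar (h : IsDRG G 3 b c) (hb1 : b 1 = c 2) (hb2 : b 2 = 1) (hc3 : c 3 = b 0) :
    ∃ bar : V → V, ∀ x y, G.dist x y = 3 ↔ y = bar x := by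
  classical
  have ex : ∀ x, ∃ y, G.dist x y = 3 := by
    intro x
    obtain ⟨y1, -, h1⟩ := h.exists_b (i := 0) (by norm_num) (SimpleGraph.dist_self (v := x))
      (by rw [← hc3]; exact h.c_pos.2)
    obtain ⟨y2, -, h2⟩ := h.exists_b (i := 1) (by norm_num) h1 (by rw [hb1]; exact h.c_pos.1)
    obtain ⟨y3, -, h3⟩ := h.exists_b (i := 2) (by norm_num) h2 (by omega)
    exact ⟨y3, h3⟩
  choose bar hbar using ex
  refine ⟨bar, fun x y => ⟨fun hy => ?_, fun hy => hy ▸ hbar x⟩⟩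
  obtain ⟨z, hz, hxz⟩ := exists_pred h.1 hy
  have hz' : G.Adj (bar x) z := (h.adj_iff hb1 hc3 (hbar x) z).2 hxz
  have hcard := h.card_b (i := 2) (by norm_num) hxz
  rw [hb2] at hcard
  exact Finset.card_le_one.1 hcard.le _ (by simp [hz.symm, hy]) _ (by simp [hz'.symm, hbar])

/-- The signed cover attached to a Taylor graph without 4-claws; a positive clique of size five
contains a 4-claw centred at the antipode of any of its vertices. -/
lemma IsDRG.signedCover [DecidableEq V] (h : IsDRG G 3 b c) (hb1 : b 1 = c 2) (hc3 : c 3 = b 0)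
    (hclaw : ¬ HasClaw G 4) {bar : V → V} (hbar : ∀ x y, G.dist x y = 3 ↔ y = bar x) :
    SignedCover (sgn G) bar (b 0 : ℕ) (2 * (c 2 : ℕ) + 1 - (b 0 : ℕ)) := by
  have hbd : ∀ x, G.dist x (bar x) = 3 := fun x => (hbar x _).2 rfl
  have hbb : ∀ x, bar (bar x) = x := by
    intro x
    refine ((hbar _ _).1 ?_).symm
    rw [SimpleGraph.dist_comm]; exact hbd x
  have hadj : ∀ x z, G.Adj (bar x) z ↔ G.dist x z = 2 := fun x z => h.adj_iff hb1 hc3 (hbd x) z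
  have hd1 : ∀ x z, G.dist (bar x) z = 1 ↔ G.dist x z = 2 := by
    intro x z; rw [SimpleGraph.dist_eq_one_iff_adj, hadj]
  have hd2 : ∀ x z, G.dist (bar x) z = 2 ↔ G.dist x z = 1 := by
    intro x z; rw [← hadj, hbb, SimpleGraph.dist_eq_one_iff_adj]
  have hsymm : ∀ x y, sgn G x y = sgn G y x := by
    intro x y; simp only [sgn, SimpleGraph.dist_comm (u := x) (v := y)]
  have hSbar : ∀ x y, sgn G (bar x) y = -sgn G x y := by
    intro x y
    simp only [sgn, hd1, hd2]
    by_cases h1 : G.dist x y = 1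
    · simp [h1]
    · by_cases h2 : G.dist x y = 2
      · simp [h2]
      · simp [h1, h2]
  have hSbar' : ∀ x y, sgn G x (bar y) = -sgn G x y := by
    intro x y; rw [hsymm, hSbar, hsymm]
  have hne : ∀ x, bar x ≠ x := by
    intro x hx
    have := hbd x
    rw [hx, SimpleGraph.dist_self] at this
    norm_num at this
  have hdiag : ∀ x, sgn G x x = 0 := by intro x; simp [sgn]
  have hadjS : ∀ {x y}, G.Adj x y → sgn G x y = -1 := by
    intro x y hxy
    simp [sgn, SimpleGraph.dist_eq_one_iff_adj.2 hxy]
  have hpm : ∀ x y, y ≠ x → y ≠ bar x → sgn G x y = 1 ∨ G.Adj x y := by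
    intro x y h1 h2
    have h3 : G.dist x y ≠ 3 := fun e => h2 ((hbar x y).1 e)
    have h4 : G.dist x y ≠ 0 := fun e => h1 ((h.1.dist_eq_zero_iff).1 e).symm
    have h5 := h.2.2.1 x y
    have : G.dist x y = 1 ∨ G.dist x y = 2 := by omega
    rcases this with h6 | h6
    · right; exact SimpleGraph.dist_eq_one_iff_adj.1 h6
    · left; simp [sgn, h6]
  have hS1 : ∀ {x y}, sgn G x y = 1 → G.dist x y = 2 := by
    intro x y hxy
    by_contra h2
    simp only [sgn, h2, if_false] at hxy
    split_ifs at hxy <;> norm_num at hxy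
  classical
  -- the sum over `V` reduces to the neighbours of `x`
  have hhalf : ∀ x y, ∑ z, sgn G x z * sgn G z y =
      -2 * ∑ z ∈ Finset.univ.filter (fun z => G.Adj x z), sgn G z y := by
    intro x y
    have hinv : Function.Involutive bar := hbb
    have e1 : ∀ z, sgn G x z * sgn G z y = -(if G.Adj x z then sgn G z y else 0)
        - (if G.Adj x (bar z) then sgn G (bar z) y else 0) := by
      intro z
      rw [SimpleGraph.adj_comm G x (bar z), hadj, hSbar, SimpleGraph.dist_comm (u := z),
        ← SimpleGraph.dist_eq_one_iff_adj]
      rw [sgn]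
      by_cases h1 : G.dist x z = 1
      · simp [h1]
      · by_cases h2 : G.dist x z = 2
        · simp [h2]
        · simp [h1, h2]
    have e2 : ∑ z, (if G.Adj x (bar z) then sgn G (bar z) y else 0) =
        ∑ z, (if G.Adj x z then sgn G z y else 0) :=
      Equiv.sum_comp (hinv.toPerm bar) (fun z => if G.Adj x z then sgn G z y else 0)
    rw [Finset.sum_congr rfl fun z _ => e1 z, Finset.sum_sub_distrib, Finset.sum_neg_distrib, e2,
      Finset.sum_filter]
    ring
  have hsq0 : ∀ x, ∑ z, sgn G x z * sgn G z x = 2 * (b 0 : ℝ) := by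
    intro x
    rw [hhalf, Finset.sum_congr rfl (g := fun _ => (-1 : ℝ)), Finset.sum_const, h.card_nbr,
      nsmul_eq_mul]
    · ring
    · intro z hz
      have hz' : G.Adj x z := by simpa using hz
      exact hadjS hz'.symm
  have hsq1 : ∀ x y, G.Adj x y → ∑ z, sgn G x z * sgn G z y =
      -2 * (2 * (c 2 : ℝ) + 1 - (b 0 : ℝ)) := by
    intro x y hxy
    have hyx : G.dist y x = 1 := SimpleGraph.dist_eq_one_iff_adj.2 hxy.symm
    have e : ∀ z ∈ Finset.univ.filter (fun z => G.Adj x z), sgn G z y =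
        2 * (if G.dist y z = 2 then 1 else 0) + (if G.dist y z = 0 then 1 else 0) - 1 := by
      intro z hz
      have hz' : G.Adj x z := by simpa using hz
      have h1 : G.dist y z ≤ G.dist y x + G.dist x z := h.1.dist_triangle
      rw [hyx, SimpleGraph.dist_eq_one_iff_adj.2 hz'] at h1
      rw [hsymm, sgn]
      have : G.dist y z = 0 ∨ G.dist y z = 1 ∨ G.dist y z = 2 := by omega
      rcases this with h2 | h2 | h2 <;> simp only [h2] <;> norm_num
    have hb := h.card_b (i := 1) (by norm_num) hyx
    have hc := h.card_c (i := 1) (by norm_num) hyx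
    rw [h.2.2.2.2.1] at hc
    rw [hhalf, Finset.sum_congr rfl e, Finset.sum_sub_distrib, Finset.sum_add_distrib,
      ← Finset.mul_sum, Finset.sum_const, h.card_nbr, Finset.sum_boole, Finset.sum_boole,
      Finset.filter_filter, Finset.filter_filter, hb, hc, hb1, nsmul_eq_mul]
    push_cast; ring
  have hsqbar : ∀ x y, ∑ z, sgn G x z * sgn G z y = -∑ z, sgn G (bar x) z * sgn G z y := by
    intro x y
    simp only [hSbar, neg_mul, Finset.sum_neg_distrib, neg_neg]
  refine ⟨hsymm, hbb, hne, hdiag, hSbar, ?_, ?_, ?_⟩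
  · intro x y h1 h2
    exact (hpm x y h1 h2).imp_right hadjS
  · intro x y
    by_cases h1 : x = y
    · subst h1
      rw [hsq0, hdiag, if_pos rfl, if_neg (hne x)]; ring
    · by_cases h2 : bar x = y
      · subst h2
        rw [hsqbar, hsq0, hSbar', hdiag, if_neg h1, if_pos rfl]; ring
      · rw [if_neg h1, if_neg h2]
        rcases hpm x y (Ne.symm h1) (Ne.symm h2) with h3 | h3
        · have h4 : G.Adj (bar x) y := (hadj x y).2 (hS1 h3)
          rw [hsqbar, hsq1 _ _ h4, h3]; ring
        · rw [hsq1 _ _ h3, hadjS h3]; ring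
  · intro x y z u w hxy hxz hxu hxw hyz hyu hyw hzu hzw huw
    apply hclaw
    have hsep : ∀ {a d}, sgn G a d = 1 → a ≠ d ∧ ¬ G.Adj a d ∧ ¬ G.Adj d a := by
      intro a d had
      refine ⟨?_, ?_, ?_⟩
      · rintro rfl; rw [hdiag] at had; norm_num at had
      · intro h1; rw [hadjS h1] at had; norm_num at had
      · intro h1; rw [hsymm, hadjS h1] at had; norm_num at had
    have a1 := hsep hyz
    have a2 := hsep hyu
    have a3 := hsep hyw
    have a4 := hsep hzu
    have a5 := hsep hzw
    have a6 := hsep huw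
    refine ⟨bar x, {y, z, u, w}, ?_, ?_, ?_⟩
    · rw [Finset.card_insert_of_notMem (by simp [a1.1, a2.1, a3.1]),
        Finset.card_insert_of_notMem (by simp [a4.1, a5.1]), Finset.card_pair a6.1]
    · intro a ha
      simp only [Finset.mem_insert, Finset.mem_singleton] at ha
      rw [hadj]
      rcases ha with rfl | rfl | rfl | rfl
      exacts [hS1 hxy, hS1 hxz, hS1 hxu, hS1 hxw]
    · intro a ha d hd _
      simp only [Finset.coe_insert, Finset.coe_singleton, Set.mem_insert_iff,
        Set.mem_singleton_iff] at ha hd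
      rcases ha with rfl | rfl | rfl | rfl <;> rcases hd with rfl | rfl | rfl | rfl <;>
        simp [a1, a2, a3, a4, a5, a6]

end Taylor

/-- Taylor graphs (diameter-3 DRGs with array `{k,c₂,1;1,c₂,k}`) without
4-claws. -/
theorem statement1 {V : Type*} [Fintype V] (G : SimpleGraph V) (b c : ℕ → ℕ)
    (hdrg : IsDRG G 3 b c) (hb1 : b 1 = c 2) (hb2 : b 2 = 1) (hc3 : c 3 = b 0)
    (hclaw : ¬ HasClaw G 4) :
    arr3 b c 2 1 1 1 1 2 ∨
    arr3 b c 3 2 1 1 2 3 ∨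
    arr3 b c 5 2 1 1 2 5 ∨
    arr3 b c 9 4 1 1 4 9 ∨
    arr3 b c 13 6 1 1 6 13 ∨
    arr3 b c 15 6 1 1 6 15 ∨
    arr3 b c 17 8 1 1 8 17 ∨
    arr3 b c 27 10 1 1 10 27 := by
  classical
  obtain ⟨bar, hbar⟩ := hdrg.exists_bar hb1 hb2 hc3
  have hc1 : c 1 = 1 := hdrg.2.2.2.2.1
  have hc2 : 0 < c 2 := hdrg.c_pos.1
  by_cases htri : ∃ x y z, G.Adj x y ∧ G.Adj x z ∧ G.Adj y z
  · obtain ⟨x, y, z, hxy, hxz, hyz⟩ := htri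
    have hS := hdrg.signedCover hb1 hc3 hclaw hbar
    have hadj : ∀ {a d}, G.Adj a d → sgn G a d = -1 := by
      intro a d had
      simp [sgn, SimpleGraph.dist_eq_one_iff_adj.2 had]
    have hcl := hS.classify hc2 (x := bar x) (y := y) (z := z)
      (by rw [hS.S_bar, hadj hxy, neg_neg]) (by rw [hS.S_bar, hadj hxz, neg_neg]) (hadj hyz)
    simp only [arr3, hb1, hb2, hc1, hc3]
    rcases hcl with hcl | hcl | hcl | hcl | hcl | hcl | hcl <;> simp [hcl]
  · -- a triangle-free graph without 4-claws has valency at most three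
    have hk : b 0 < 4 := by
      by_contra hcon
      obtain ⟨x⟩ := hdrg.1.nonempty
      have hcard := hdrg.card_nbr x
      obtain ⟨s, hs, hs4⟩ := Finset.exists_subset_card_eq
        (show 4 ≤ (Finset.univ.filter fun z => G.Adj x z).card by omega)
      have hs' : ∀ y ∈ s, G.Adj x y := fun y hy => by simpa using hs hy
      exact hclaw ⟨x, s, hs4, hs', fun y hy z hz _ hyz =>
        htri ⟨x, y, z, hs' y hy, hs' z hz, hyz⟩⟩
    have hk1 : b 0 = c 2 + 1 := by
      obtain ⟨x⟩ := hdrg.1.nonempty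
      obtain ⟨y, hxy, hxy1⟩ := hdrg.exists_b (i := 0) (by norm_num)
        (SimpleGraph.dist_self (v := x)) (by rw [← hc3]; exact hdrg.c_pos.2)
      have hcc := hdrg.card_c (i := 1) (by norm_num) hxy1
      rw [hc1] at hcc
      have hcb := hdrg.card_b (i := 1) (by norm_num) hxy1
      refine (hdrg.card_nbr y).symm.trans (Eq.trans ?_ (congrArg₂ (· + ·) (hcb.trans hb1) hcc))
      rw [← Finset.card_union_of_disjoint]
      · congr 1
        ext z
        simp only [Finset.mem_filter, Finset.mem_univ, true_and, Finset.mem_union]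
        constructor
        · intro hyz
          have h1 : G.dist x z ≤ G.dist x y + G.dist y z := hdrg.1.dist_triangle
          rw [hxy1, SimpleGraph.dist_eq_one_iff_adj.2 hyz] at h1
          have h2 : G.dist x z ≠ 1 := fun h2 =>
            htri ⟨x, y, z, hxy, SimpleGraph.dist_eq_one_iff_adj.1 h2, hyz⟩
          have h3 : G.dist x z = 0 ∨ G.dist x z = 2 := by omega
          rcases h3 with h3 | h3
          · right; exact ⟨hyz, h3⟩
          · left; exact ⟨hyz, h3⟩
        · rintro (hz | hz)
          exacts [hz.1, hz.1]
      · rw [Finset.disjoint_left]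
        intro z hz hz'
        simp only [Finset.mem_filter, Finset.mem_univ, true_and] at hz hz'
        omega
    simp only [arr3, hb1, hb2, hc1, hc3]
    have hk2 : c 2 = 1 ∨ c 2 = 2 := by omega
    rcases hk2 with hk2 | hk2 <;> simp [hk1, hk2]
end

section
/- Let Γ be a distance-regular graph with diameter D ≥ 2, valency k and intersection numbers a_1, c_2. If k > 2(a_1+1) and Γ contains an induced quadrangle, then k ≥ 3a_1 − 3c_2 + 7. -/
/-!
Let `x, z₁, y, z₂` be an induced quadrangle. For a neighbour `z` of `x`, the set
`Γ(x) ∩ ({z} ∪ Γ(z))` has `a₁ + 1` elements. Since `k > 2(a₁ + 1)`, the sets for `z₁` and `z₂` do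
not cover `Γ(x)`, so some `w ∈ Γ(x)` is nonadjacent to both, and `z₁, z₂, w` form a 3-claw at `x`.
Two nonadjacent members of `Γ(x)` have at most `c₂ - 1` common neighbours inside `Γ(x)`, because `x`
itself is one of their `c₂` common neighbours; for `z₁, z₂` the bound is `c₂ - 2`, because `y` is a
further common neighbour outside `Γ(x)`. Inclusion–exclusion on the three sets gives
`k ≥ 3(a₁ + 1) - 2(c₂ - 1) - (c₂ - 2)`.
-/

open SimpleGraph Finset

/-- Two distinct nonadjacent vertices with a common neighbour are at distance 2. -/
lemma dist_eq_two_of_common {V : Type*} {G : SimpleGraph V} {x u v : V} (hu : G.Adj x u)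
    (hv : G.Adj x v) (hne : u ≠ v) (hn : ¬ G.Adj u v) : G.dist u v = 2 := by
  have hle : G.dist u v ≤ 2 := SimpleGraph.dist_le (.cons hu.symm (.cons hv .nil))
  have hr : G.Reachable u v := ⟨.cons hu.symm (.cons hv .nil)⟩
  have h0 : G.dist u v ≠ 0 := fun h => hne (hr.dist_eq_zero_iff.1 h)
  have h1 : G.dist u v ≠ 1 := fun h => hn (SimpleGraph.dist_eq_one_iff_adj.1 h)
  omega

/-- Lower inclusion–exclusion (Bonferroni) bound for three finite sets. -/
lemma card_three_le {V : Type*} [DecidableEq V] (A B C S : Finset V) (hA : A ⊆ S) (hB : B ⊆ S)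
    (hC : C ⊆ S) :
    #A + #B + #C ≤ #S + #(A ∩ B) + #(A ∩ C) + #(B ∩ C) := by
  have h1 := card_union_add_card_inter A B
  have h2 := card_union_add_card_inter (A ∪ B) C
  have h3 : #((A ∪ B) ∩ C) ≤ #(A ∩ C) + #(B ∩ C) := by
    rw [union_inter_distrib_right]; exact card_union_le _ _
  have h4 : #(A ∪ B ∪ C) ≤ #S := card_le_card (union_subset (union_subset hA hB) hC)
  omega

section
open Classical

variable {V : Type*} [Fintype V] {G : SimpleGraph V} {D : ℕ} {b c : ℕ → ℕ}

lemma IsDRG.card_nbr_s2 (h : IsDRG G D b c) (x : V) : #(G.neighborFinset x) = b 0 := by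
  obtain ⟨-, -, -, -, -, -, h⟩ := h
  rw [← (h 0 (Nat.zero_le _) x x (by simp)).2, ← Set.ncard_coe_finset]
  congr 1
  ext z
  simp

lemma IsDRG.card_common (h : IsDRG G D b c) (hD : 2 ≤ D) {x y : V} (hxy : G.dist x y = 2) :
    #(G.neighborFinset x ∩ G.neighborFinset y) = c 2 := by
  obtain ⟨-, -, -, -, -, -, h⟩ := h
  rw [← (h 2 hD x y hxy).1, ← Set.ncard_coe_finset]
  congr 1
  ext z
  simp [and_comm]

/-- Adjacent vertices have `a₁ = k - b₁ - c₁` common neighbours; stated without subtraction. -/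
lemma IsDRG.card_common_adj (h : IsDRG G D b c) (hD : 2 ≤ D) {x y : V} (hxy : G.Adj x y) :
    #(G.neighborFinset x ∩ G.neighborFinset y) + b 1 + c 1 = b 0 := by
  have hk := h.card_nbr_s2 y
  obtain ⟨hconn, -, -, -, -, -, h⟩ := h
  obtain ⟨hc, hb⟩ := h 1 (by omega) x y (SimpleGraph.dist_eq_one_iff_adj.2 hxy)
  have hc' : #{z ∈ G.neighborFinset y | G.dist x z = 0} = c 1 := by
    rw [← hc, ← Set.ncard_coe_finset]; congr 1; ext z; simp
  have hb' : #{z ∈ G.neighborFinset y | G.dist x z = 2} = b 1 := by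
    rw [← hb, ← Set.ncard_coe_finset]; congr 1; ext z; simp
  have ha' : #{z ∈ G.neighborFinset y | G.dist x z = 1}
      = #(G.neighborFinset x ∩ G.neighborFinset y) := by
    congr 1; ext z; simp [and_comm]
  have hmaps : ∀ z ∈ G.neighborFinset y, G.dist x z ∈ Finset.range 3 := by
    intro z hz
    have hz' : G.Adj y z := by simpa using hz
    have : G.dist x z ≤ 2 := SimpleGraph.dist_le (.cons hxy (.cons hz' .nil))
    simp; omega
  have := card_eq_sum_card_fiberwise hmaps
  simp only [Finset.sum_range_succ, Finset.sum_range_zero] at this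
  omega

/-- The neighbours of `x` that are equal or adjacent to `z`: the closed neighbourhood of `z` in
the local graph at `x`, for `z` adjacent to `x`. -/
noncomputable def localBall (G : SimpleGraph V) (x z : V) : Finset V :=
  insert z (G.neighborFinset x ∩ G.neighborFinset z)

lemma localBall_subset {x z : V} (h : G.Adj x z) : localBall G x z ⊆ G.neighborFinset x := by
  intro v hv
  simp only [localBall, mem_insert, mem_inter, mem_neighborFinset] at hv ⊢
  rcases hv with rfl | hv
  exacts [h, hv.1]

lemma card_localBall (x z : V) :
    #(localBall G x z) = #(G.neighborFinset x ∩ G.neighborFinset z) + 1 :=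
  card_insert_of_notMem (by simp)

lemma localBall_inter {x u v : V} (hne : u ≠ v) (hn : ¬ G.Adj u v) :
    localBall G x u ∩ localBall G x v ⊆
      (G.neighborFinset u ∩ G.neighborFinset v) ∩ G.neighborFinset x := by
  intro w hw
  simp only [localBall, mem_insert, mem_inter, mem_neighborFinset] at hw ⊢
  obtain ⟨rfl | h1, rfl | h2⟩ := hw
  · exact absurd rfl hne
  · exact absurd h2.2.symm hn
  · exact absurd h1.2 hn
  · exact ⟨⟨h1.2, h2.2⟩, h1.1⟩

/-- The intersection of two local balls with nonadjacent centres omits every common neighbour of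
the centres that is not adjacent to `x`, in particular `x` itself. -/
lemma IsDRG.card_localBall_inter (h : IsDRG G D b c) (hD : 2 ≤ D) {x u v : V}
    (huv : G.dist u v = 2) (T : Finset V)
    (hT : ∀ t ∈ T, G.Adj u t ∧ G.Adj v t ∧ ¬ G.Adj x t) :
    #(localBall G x u ∩ localBall G x v) + #T ≤ c 2 := by
  have hne : u ≠ v := by rintro rfl; simp at huv
  have hn : ¬ G.Adj u v := fun h => by
    rw [← SimpleGraph.dist_eq_one_iff_adj] at h; omega
  have hsub := localBall_inter (x := x) hne hn
  rw [← h.card_common hD huv, ← card_union_of_disjoint]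
  · refine card_le_card (union_subset (hsub.trans inter_subset_left) fun t ht => ?_)
    simpa using ⟨(hT t ht).1, (hT t ht).2.1⟩
  · refine Finset.disjoint_left.2 fun t ht ht' => (hT t ht').2.2 ?_
    simpa using (mem_inter.1 (hsub ht)).2

end

/-- if `k > 2(a₁+1)` and `Γ` contains an induced quadrangle, then
`k ≥ 3a₁ - 3c₂ + 7` (here `a₁ = k - b₁ - c₁`). -/
theorem statement2 {V : Type*} [Fintype V] (G : SimpleGraph V) (D : ℕ) (b c : ℕ → ℕ)
    (hdrg : IsDRG G D b c) (hD : 2 ≤ D)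
    (hk : 2 * (((b 0 : ℤ) - b 1 - c 1) + 1) < (b 0 : ℤ))
    (hquad : HasQuadrangle G) :
    3 * ((b 0 : ℤ) - b 1 - c 1) - 3 * (c 2 : ℤ) + 7 ≤ (b 0 : ℤ) := by
  classical
  obtain ⟨x, z₁, y, z₂, hxy, hzz, hx1, h1y, hy2, h2x⟩ := hquad
  have hx2 := h2x.symm
  have hk0 := hdrg.card_nbr_s2 x
  have ha : ∀ z, G.Adj x z → #(localBall G x z) + b 1 + c 1 = b 0 + 1 := fun z hz => by
    have := hdrg.card_common_adj hD hz
    rw [card_localBall]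
    omega
  have ha1 := ha z₁ hx1
  have ha2 := ha z₂ hx2
  -- The two local balls do not cover `Γ(x)`; a vertex outside them completes a 3-claw.
  obtain ⟨w, hw, hw'⟩ : ∃ w ∈ G.neighborFinset x, w ∉ localBall G x z₁ ∪ localBall G x z₂ := by
    apply exists_mem_notMem_of_card_lt_card
    have := card_union_le (localBall G x z₁) (localBall G x z₂)
    omega
  have hxw : G.Adj x w := by simpa using hw
  have hnot : (w ≠ z₁ ∧ ¬ G.Adj z₁ w) ∧ (w ≠ z₂ ∧ ¬ G.Adj z₂ w) := by
    rw [notMem_union] at hw'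
    simpa [localBall, hxw] using hw'
  obtain ⟨⟨hne1, hn1⟩, hne2, hn2⟩ := hnot
  have ha3 := ha w hxw
  have hxny : ¬ G.Adj x y := fun h => by
    rw [← SimpleGraph.dist_eq_one_iff_adj] at h; omega
  have hxney : x ≠ y := by rintro rfl; simp at hxy
  have i12 := hdrg.card_localBall_inter hD (x := x) hzz {x, y} (by
    simp [hx1.symm, hx2.symm, h1y, hy2.symm, hxny])
  have i13 := hdrg.card_localBall_inter hD (x := x)
    (dist_eq_two_of_common hx1 hxw hne1.symm hn1) {x} (by simp [hx1.symm, hxw.symm])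
  have i23 := hdrg.card_localBall_inter hD (x := x)
    (dist_eq_two_of_common hx2 hxw hne2.symm hn2) {x} (by simp [hx2.symm, hxw.symm])
  rw [card_pair hxney] at i12
  rw [card_singleton] at i13 i23
  have := card_three_le _ _ _ _ (localBall_subset hx1) (localBall_subset hx2)
    (localBall_subset hxw)
  omega
end

section
/- Let Γ be a distance-regular graph with diameter D ≥ 2, valency k and intersection number a_1, and let t ≥ 3 be an integer. If Γ contains a t-claw but no (t+1)-claws, then Γ contains a clique C with t·(|C| − 1) ≥ 2k − t(a_1+1), i.e., a clique with at least (2k − t(a_1+1))/t + 1 vertices. -/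
/-!
Let `x` be the centre of a `t`-claw with leaves `s`. The claw is maximal, so every neighbour `z` of
`x` is *dominated* by some leaf `y`, that is, `z = y` or `z` is adjacent to `y`. By
distance-regularity each leaf dominates exactly `a₁ + 1` of the `k` neighbours of `x`. A neighbour
dominated by only one leaf is called private to that leaf. Counting every neighbour with the number
of leaves dominating it, plus one more if it is private, gives at least `2`; hence
`2k ≤ t(a₁ + 1) + ∑ |private neighbours of y|`, the sum being over the leaves `y`
(`two_mul_card_le`). Some leaf `y` therefore has at least `(2k - t(a₁ + 1)) / t` private neighbours.
They form a clique, since two non-adjacent ones could replace `y` to form a `(t+1)`-claw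
(`priv_isClique`), and `x` together with them is the required clique.
-/

open SimpleGraph Finset

open Classical in
/-- The neighbours `z` of `x` that are dominated by `y`: `z = y` or `z` is adjacent to `y`. -/
noncomputable def domNbrs {V : Type*} [Fintype V] (G : SimpleGraph V) (x y : V) : Finset V :=
  {z | G.Adj x z ∧ (z = y ∨ G.Adj y z)}

open Classical in
/-- The neighbours of `x` that are dominated by `y` and by no other element of `s`. -/
noncomputable def privNbrs {V : Type*} [Fintype V] (G : SimpleGraph V) (x : V) (s : Finset V)
    (y : V) : Finset V :=
  {z | z ∈ domNbrs G x y ∧ ∀ y' ∈ s, z ∈ domNbrs G x y' → y' = y}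

/-- A neighbour of `x` dominated by no leaf would extend the claw. -/
lemma exists_mem_domNbrs {V : Type*} [Fintype V] (G : SimpleGraph V) (t : ℕ)
    (hclaw : ¬ HasClaw G (t + 1)) (x : V) (s : Finset V) (hs : s.card = t)
    (hadj : ∀ y ∈ s, G.Adj x y) (hind : (s : Set V).Pairwise fun y z => ¬ G.Adj y z)
    (z : V) (hz : G.Adj x z) : ∃ y ∈ s, z ∈ domNbrs G x y := by
  classical
  by_contra! h
  have h' : ∀ y ∈ s, z ≠ y ∧ ¬ G.Adj y z := by
    intro y hy
    have := h y hy
    simp only [domNbrs, Finset.mem_filter, Finset.mem_univ, true_and, not_and, not_or] at this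
    exact this hz
  refine hclaw ⟨x, insert z s, ?_, ?_, ?_⟩
  · rw [Finset.card_insert_of_notMem (fun hm => (h' z hm).1 rfl), hs]
  · intro y hy
    rcases Finset.mem_insert.1 hy with rfl | hy
    · exact hz
    · exact hadj y hy
  · rw [Finset.coe_insert]
    refine hind.insert fun y hy _ => ⟨fun e => (h' y hy).2 e.symm, (h' y hy).2⟩

lemma priv_isClique {V : Type*} [Fintype V] (G : SimpleGraph V) (t : ℕ)
    (hclaw : ¬ HasClaw G (t + 1)) (x : V) (s : Finset V) (hs : s.card = t)
    (hadj : ∀ y ∈ s, G.Adj x y) (hind : (s : Set V).Pairwise fun y z => ¬ G.Adj y z)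
    (y : V) (hy : y ∈ s) : G.IsClique (privNbrs G x s y : Set V) := by
  classical
  intro u hu v hv huv
  by_contra hnadj
  have key : ∀ w ∈ privNbrs G x s y, G.Adj x w ∧ (w = y ∨ G.Adj y w) ∧
      ∀ y' ∈ s.erase y, w ≠ y' ∧ ¬ G.Adj y' w := by
    intro w hw
    simp only [privNbrs, domNbrs, Finset.mem_filter, Finset.mem_univ, true_and] at hw
    refine ⟨hw.1.1, hw.1.2, fun y' hy' => ?_⟩
    obtain ⟨hne, hm⟩ := Finset.mem_erase.1 hy'
    exact ⟨fun e => hne (hw.2 y' hm ⟨hw.1.1, Or.inl e⟩),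
      fun e => hne (hw.2 y' hm ⟨hw.1.1, Or.inr e⟩)⟩
  obtain ⟨hxu, hyu, hu'⟩ := key u hu
  obtain ⟨hxv, hyv, hv'⟩ := key v hv
  have huS : u ∉ insert v (s.erase y) := by
    intro hm
    rcases Finset.mem_insert.1 hm with h | h
    · exact huv h
    · exact (hu' u h).1 rfl
  have hvS : v ∉ s.erase y := fun h => (hv' v h).1 rfl
  refine hclaw ⟨x, insert u (insert v (s.erase y)), ?_, ?_, ?_⟩
  · rw [Finset.card_insert_of_notMem huS, Finset.card_insert_of_notMem hvS,
      Finset.card_erase_add_one hy, hs]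
  · intro w hw
    rcases Finset.mem_insert.1 hw with rfl | hw
    · exact hxu
    rcases Finset.mem_insert.1 hw with rfl | hw
    · exact hxv
    · exact hadj w (Finset.mem_of_mem_erase hw)
  · rw [Finset.coe_insert, Finset.coe_insert]
    have h0 : ((s.erase y : Finset V) : Set V).Pairwise fun y z => ¬ G.Adj y z :=
      hind.mono (by exact_mod_cast Finset.erase_subset y s)
    refine (h0.insert fun w hw _ => ⟨fun e => (hv' w hw).2 e.symm, (hv' w hw).2⟩).insert ?_
    rintro w (rfl | hw) _
    · exact ⟨hnadj, fun e => hnadj e.symm⟩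
    · exact ⟨fun e => (hu' w hw).2 e.symm, (hu' w hw).2⟩

/-- Double counting of the pairs (leaf, dominated neighbour) and (leaf, private neighbour). -/
lemma two_mul_card_le {V : Type*} [Fintype V] (G : SimpleGraph V) (x : V) (s N : Finset V)
    (hdom : ∀ z ∈ N, ∃ y ∈ s, z ∈ domNbrs G x y) :
    2 * N.card ≤ ∑ y ∈ s, (domNbrs G x y).card + ∑ y ∈ s, (privNbrs G x s y).card := by
  classical
  have hswap : ∀ F : V → Finset V,
      ∑ z ∈ N, (s.filter fun y => z ∈ F y).card ≤ ∑ y ∈ s, (F y).card := by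
    intro F
    refine (Finset.sum_card_bipartiteAbove_eq_sum_card_bipartiteBelow
      (s := s) (t := N) (fun y z => z ∈ F y)).ge.trans ?_
    refine Finset.sum_le_sum fun y _ => Finset.card_le_card fun z hz => ?_
    exact (Finset.mem_filter.1 hz).2
  refine le_trans ?_ (add_le_add (hswap (domNbrs G x)) (hswap (privNbrs G x s)))
  rw [← Finset.sum_add_distrib, mul_comm, ← smul_eq_mul]
  refine Finset.card_nsmul_le_sum _ _ _ fun z hz => ?_
  obtain ⟨y, hy, hzy⟩ := hdom z hz
  by_cases h : ∀ y' ∈ s, z ∈ domNbrs G x y' → y' = y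
  · have h1 : 0 < (s.filter fun y => z ∈ domNbrs G x y).card :=
      Finset.card_pos.2 ⟨y, Finset.mem_filter.2 ⟨hy, hzy⟩⟩
    have h2 : 0 < (s.filter fun y => z ∈ privNbrs G x s y).card := by
      refine Finset.card_pos.2 ⟨y, Finset.mem_filter.2 ⟨hy, ?_⟩⟩
      simp only [privNbrs, Finset.mem_filter, Finset.mem_univ, true_and]
      exact ⟨hzy, h⟩
    omega
  · push Not at h
    obtain ⟨y', hy', hzy', hne⟩ := h
    have h1 : 1 < (s.filter fun y => z ∈ domNbrs G x y).card :=
      Finset.one_lt_card.2 ⟨y', Finset.mem_filter.2 ⟨hy', hzy'⟩, y,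
        Finset.mem_filter.2 ⟨hy, hzy⟩, hne⟩
    omega

open Classical in
lemma IsDRG.card_nbrs {V : Type*} [Fintype V] {G : SimpleGraph V} {D : ℕ} {b c : ℕ → ℕ}
    (h : IsDRG G D b c) (x : V) : (Finset.univ.filter fun z => G.Adj x z).card = b 0 := by
  obtain ⟨-, -, -, -, -, -, hi⟩ := h
  rw [← (hi 0 (Nat.zero_le _) x x (SimpleGraph.dist_self)).2, ← Set.ncard_coe_finset]
  congr 1
  ext z
  simp only [Finset.coe_filter, Finset.mem_univ, true_and, Set.mem_setOf_eq, zero_add]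
  exact ⟨fun hz => ⟨hz, SimpleGraph.dist_eq_one_iff_adj.2 hz⟩, fun hz => hz.1⟩

/-- A neighbour `y` of `x` dominates `a₁ + 1` neighbours of `x`: itself and the `a₁` common
neighbours. The identity is stated without subtraction. -/
lemma IsDRG.card_domNbrs {V : Type*} [Fintype V] {G : SimpleGraph V} {D : ℕ} {b c : ℕ → ℕ}
    (h : IsDRG G D b c) (hD : 1 ≤ D) (x y : V) (hxy : G.Adj x y) :
    (domNbrs G x y).card + b 1 + c 1 = b 0 + 1 := by
  classical
  have hk := h.card_nbrs y
  obtain ⟨hconn, -, -, -, -, -, hi⟩ := h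
  have h1 := SimpleGraph.dist_eq_one_iff_adj.2 hxy
  obtain ⟨hc, hb⟩ := hi 1 hD x y h1
  have hy : y ∉ Finset.univ.filter fun z => G.Adj y z ∧ G.dist x z = 1 := by simp
  have hdom : domNbrs G x y
      = insert y (Finset.univ.filter fun z => G.Adj y z ∧ G.dist x z = 1) := by
    ext z
    simp only [domNbrs, Finset.mem_filter, Finset.mem_univ, true_and, Finset.mem_insert,
      SimpleGraph.dist_eq_one_iff_adj]
    constructor
    · rintro ⟨ha, rfl | hb⟩
      · exact Or.inl rfl
      · exact Or.inr ⟨hb, ha⟩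
    · rintro (rfl | ⟨hb, ha⟩)
      · exact ⟨hxy, Or.inl rfl⟩
      · exact ⟨ha, Or.inr hb⟩
  have hc' : (Finset.univ.filter fun z => G.Adj y z ∧ G.dist x z = 0).card = c 1 := by
    rw [← hc, ← Set.ncard_coe_finset]
    simp
  have hb' : (Finset.univ.filter fun z => G.Adj y z ∧ G.dist x z = 2).card = b 1 := by
    rw [← hb, ← Set.ncard_coe_finset]
    simp
  rw [hdom, Finset.card_insert_of_notMem hy, ← hc', ← hb', ← hk]
  -- The neighbours of `y` lie at distance 0, 1 or 2 from `x`.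
  simp only [Finset.card_filter]
  rw [add_right_comm _ 1, add_right_comm _ 1, ← Finset.sum_add_distrib, ← Finset.sum_add_distrib]
  congr 1
  refine Finset.sum_congr rfl fun z _ => ?_
  by_cases hz : G.Adj y z
  · have htri : G.dist x z ≤ G.dist x y + G.dist y z := hconn.dist_triangle
    rw [h1, SimpleGraph.dist_eq_one_iff_adj.2 hz] at htri
    simp only [hz, true_and, if_true]
    interval_cases G.dist x z <;> simp
  · simp [hz]

/-- a DRG with a `t`-claw but no `(t+1)`-claws (`t ≥ 3`) contains a clique `C`
with `t·(|C| - 1) ≥ 2k - t(a₁+1)` (here `a₁ = k - b₁ - c₁`). -/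
theorem statement3 {V : Type*} [Fintype V] (G : SimpleGraph V) (D : ℕ) (b c : ℕ → ℕ)
    (t : ℕ) (hdrg : IsDRG G D b c) (hD : 2 ≤ D) (ht : 3 ≤ t)
    (hclaw : HasClaw G t) (hclaw' : ¬ HasClaw G (t + 1)) :
    ∃ s : Finset V, G.IsClique (s : Set V) ∧
      2 * (b 0 : ℤ) - t * (((b 0 : ℤ) - b 1 - c 1) + 1) ≤ (t : ℤ) * ((s.card : ℤ) - 1) := by
  classical
  obtain ⟨x, s, hs, hadj, hind⟩ := hclaw
  have hcount := two_mul_card_le G x s (Finset.univ.filter fun z => G.Adj x z) fun z hz =>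
    exists_mem_domNbrs G t hclaw' x s hs hadj hind z (Finset.mem_filter.1 hz).2
  rw [hdrg.card_nbrs x] at hcount
  have hdom : (∑ y ∈ s, ((domNbrs G x y).card : ℤ)) = t * (((b 0 : ℤ) - b 1 - c 1) + 1) := by
    rw [← hs, ← nsmul_eq_mul]
    refine Finset.sum_eq_card_nsmul fun y hy => ?_
    have := hdrg.card_domNbrs (by omega) x y (hadj y hy)
    omega
  have hne : s.Nonempty := Finset.card_pos.1 (by omega)
  obtain ⟨y, hy, hmax⟩ := s.exists_max_image (fun y => (privNbrs G x s y).card) hne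
  have hpriv : ∑ y ∈ s, (privNbrs G x s y).card ≤ t * (privNbrs G x s y).card := by
    rw [← hs, ← smul_eq_mul]
    exact Finset.sum_le_card_nsmul _ _ _ hmax
  have hx : ∀ z ∈ privNbrs G x s y, G.Adj x z := by
    intro z hz
    simp only [privNbrs, domNbrs, Finset.mem_filter, Finset.mem_univ, true_and] at hz
    exact hz.1.1
  refine ⟨insert x (privNbrs G x s y), ?_, ?_⟩
  · rw [Finset.coe_insert]
    exact (priv_isClique G t hclaw' x s hs hadj hind y hy).insert fun z hz _ => hx z hz
  · rw [Finset.card_insert_of_notMem fun hm => G.loopless.irrefl x (hx x hm), ← hdom]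
    push_cast
    rw [add_sub_cancel_right]
    zify at hcount hpriv
    linarith
end

section
/- Let Γ be a distance-regular graph with diameter D ≥ 2, valency k and intersection number a_1, and suppose Γ contains a 3-claw but no 4-claws. Then Γ contains a clique with at least k − 1 − 2a_1 + μ_min vertices, where μ_min is the minimum of |Γ_1(x) ∩ Γ_1(y) ∩ Γ_1(z)| over all vertices x and all pairs of neighbors y, z of x with dist(y,z) = 2. -/
/-!
Take two nonadjacent neighbours `y`, `z` of the centre `x` of a 3-claw, and let `S` be the set of
neighbours of `x` other than `y`, `z` and adjacent to neither. Two distinct nonadjacent vertices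
of `S` would form a 4-claw at `x` together with `y` and `z`, so `S ∪ {x}` is a clique.

For its size, `Γ₁(x)` has `k` elements, of which `b₁ + 1` are not adjacent to `y` (`y` itself and
those at distance 2 from `y`), and likewise for `z`. By inclusion-exclusion,
`|S| + 2 = 2 (b₁ + 1) - k + |Γ₁(x) ∩ Γ₁(y) ∩ Γ₁(z)|`, and the last term is at least `μ_min`
since `dist y z = 2`.
-/

open SimpleGraph Finset

open Classical in
/-- The valency of a distance-regular graph is `b 0`. -/
lemma IsDRG.card_neighbors {V : Type*} [Fintype V] {G : SimpleGraph V} {D : ℕ} {b c : ℕ → ℕ}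
    (h : IsDRG G D b c) (x : V) : (univ.filter fun w => G.Adj x w).card = b 0 := by
  obtain ⟨-, -, -, -, -, -, hcount⟩ := h
  rw [← (hcount 0 (Nat.zero_le _) x x (by simp)).2, ← Set.ncard_coe_finset]
  congr 1
  ext w
  simp [SimpleGraph.dist_eq_one_iff_adj]

lemma dist_eq_two_of_common_neighbor {V : Type*} {G : SimpleGraph V} {x y z : V}
    (hy : G.Adj x y) (hz : G.Adj x z) (hne : y ≠ z) (hyz : ¬ G.Adj y z) : G.dist y z = 2 := by
  have hle : G.dist y z ≤ 2 := G.dist_le (Walk.cons hy.symm (Walk.cons hz Walk.nil))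
  have h0 : G.dist y z ≠ 0 := fun h =>
    hne ((Reachable.dist_eq_zero_iff (hy.symm.reachable.trans hz.reachable)).1 h)
  have h1 : G.dist y z ≠ 1 := fun h => hyz (SimpleGraph.dist_eq_one_iff_adj.1 h)
  omega

open Classical in
/-- The neighbours of `x` not adjacent to its neighbour `y` are `y` itself and the `b 1` vertices
counted by the intersection number. -/
lemma IsDRG.card_nonadj {V : Type*} [Fintype V] {G : SimpleGraph V} {D : ℕ} {b c : ℕ → ℕ}
    (h : IsDRG G D b c) (hD : 2 ≤ D) {x y : V} (hxy : G.Adj x y) :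
    (univ.filter fun w => G.Adj x w ∧ ¬ G.Adj y w).card = b 1 + 1 := by
  obtain ⟨-, -, -, -, -, -, hcount⟩ := h
  have hb := (hcount 1 (by omega) y x (SimpleGraph.dist_eq_one_iff_adj.2 hxy.symm)).2
  have heq : {w : V | G.Adj x w ∧ G.dist y w = 1 + 1} =
      ((univ.filter fun w => G.Adj x w ∧ G.dist y w = 2 : Finset V) : Set V) := by
    ext w; simp
  rw [heq, Set.ncard_coe_finset] at hb
  rw [← hb, ← Finset.card_insert_of_notMem (a := y) (by simp)]
  congr 1
  ext w
  simp only [mem_filter, mem_univ, true_and, mem_insert]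
  constructor
  · rintro ⟨hw, hyw⟩
    by_cases hwy : w = y
    · exact Or.inl hwy
    · exact Or.inr ⟨hw, dist_eq_two_of_common_neighbor hxy hw (Ne.symm hwy) hyw⟩
  · rintro (rfl | ⟨hw, hd⟩)
    · exact ⟨hxy, G.irrefl⟩
    · refine ⟨hw, fun hyw => ?_⟩
      have := SimpleGraph.dist_eq_one_iff_adj.2 hyw
      omega

/-- a DRG with a 3-claw but no 4-claws contains a clique with at least
`k - 1 - 2a₁ + μ_min` vertices, where `μ_min` is the minimal number of common neighbours of
`x`, `y`, `z` over all vertices `x` and pairs of neighbours `y, z` of `x` at distance 2. -/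
theorem statement5 {V : Type*} [Fintype V] (G : SimpleGraph V) (D : ℕ) (b c : ℕ → ℕ)
    (μ : ℕ) (hdrg : IsDRG G D b c) (hD : 2 ≤ D)
    (hclaw3 : HasClaw G 3) (hclaw4 : ¬ HasClaw G 4)
    (hμlb : ∀ x y z : V, G.Adj x y → G.Adj x z → G.dist y z = 2 →
      μ ≤ {w : V | G.Adj x w ∧ G.Adj y w ∧ G.Adj z w}.ncard)
    (hμatt : ∃ x y z : V, G.Adj x y ∧ G.Adj x z ∧ G.dist y z = 2 ∧
      {w : V | G.Adj x w ∧ G.Adj y w ∧ G.Adj z w}.ncard = μ) :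
    ∃ s : Finset V, G.IsClique (s : Set V) ∧
      (b 0 : ℤ) - 1 - 2 * ((b 0 : ℤ) - b 1 - c 1) + (μ : ℤ) ≤ (s.card : ℤ) := by
  classical
  obtain ⟨x, s, hs, hsx, hsp⟩ := hclaw3
  obtain ⟨y, hy, z, hz, hyz⟩ := Finset.one_lt_card.1 (by omega : 1 < s.card)
  have hnyz : ¬ G.Adj y z := hsp hy hz hyz
  have hxy := hsx y hy
  have hxz := hsx z hz
  have hμ := hμlb x y z hxy hxz (dist_eq_two_of_common_neighbor hxy hxz hyz hnyz)
  have hc1 : c 1 = 1 := hdrg.2.2.2.2.1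
  have hk := hdrg.card_neighbors x
  set N : Finset V := univ.filter fun w => G.Adj x w with hN
  have hPy := hdrg.card_nonadj hD hxy
  have hPz := hdrg.card_nonadj hD hxz
  set P : Finset V := univ.filter fun w => G.Adj x w ∧ ¬ G.Adj y w with hP
  set Q : Finset V := univ.filter fun w => G.Adj x w ∧ ¬ G.Adj z w with hQ
  have hcommon : {w : V | G.Adj x w ∧ G.Adj y w ∧ G.Adj z w} =
      ((N \ (P ∪ Q) : Finset V) : Set V) := by
    ext w
    simp [hN, hP, hQ]
    tauto
  rw [hcommon, Set.ncard_coe_finset] at hμ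
  have hsub : P ∪ Q ⊆ N := by
    intro w
    simp [hN, hP, hQ]
    tauto
  have hdiff := Finset.card_sdiff_add_card_eq_card hsub
  have hie := Finset.card_union_add_card_inter P Q
  have hpair : ({y, z} : Finset V) ⊆ P ∩ Q := by
    intro w hw
    simp only [Finset.mem_insert, Finset.mem_singleton] at hw
    rcases hw with rfl | rfl
    · simp [hP, hQ, hxy, G.adj_comm z, hnyz]
    · simp [hP, hQ, hxz, hnyz]
  have hS := Finset.card_sdiff_add_card_eq_card hpair
  rw [Finset.card_pair hyz] at hS
  have hmem : ∀ w ∈ (P ∩ Q) \ {y, z},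
      G.Adj x w ∧ ¬ G.Adj y w ∧ ¬ G.Adj z w ∧ w ≠ y ∧ w ≠ z := by
    intro w
    simp [hP, hQ]
    tauto
  refine ⟨insert x ((P ∩ Q) \ {y, z}), ?_, ?_⟩
  · rw [Finset.coe_insert, SimpleGraph.isClique_insert]
    refine ⟨fun v hv w hw hvw => ?_, fun w hw _ => (hmem w hw).1⟩
    by_contra hnvw
    obtain ⟨hv1, hv2, hv3, hv4, hv5⟩ := hmem v hv
    obtain ⟨hw1, hw2, hw3, hw4, hw5⟩ := hmem w hw
    refine hclaw4 ⟨x, {y, z, v, w}, ?_, ?_, ?_⟩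
    · rw [Finset.card_insert_of_notMem, Finset.card_insert_of_notMem, Finset.card_pair hvw]
      · simp [hv5.symm, hw5.symm]
      · simp [hyz, hv4.symm, hw4.symm]
    · simp [hxy, hxz, hv1, hw1]
    · have hsymm : ∀ {p q : V}, ¬ G.Adj p q → ¬ G.Adj q p := fun h h' => h h'.symm
      intro p hp q hq _
      simp only [Finset.coe_insert, Finset.coe_singleton, Set.mem_insert_iff,
        Set.mem_singleton_iff] at hp hq
      rcases hp with rfl | rfl | rfl | rfl <;> rcases hq with rfl | rfl | rfl | rfl <;>
        first | exact G.irrefl | assumption | (apply hsymm; assumption)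
  · have hx : x ∉ (P ∩ Q) \ {y, z} := fun h => G.irrefl (hmem x h).1
    rw [Finset.card_insert_of_notMem hx, hc1]
    push_cast
    omega
end

section
/- Let Γ be a distance-regular graph with diameter D ≥ 3 and valency k satisfying 3 ≤ k < 3(a_1+1), and suppose Γ contains a 3-claw but no 4-claws. Then Γ contains an induced quadrangle; in particular c_2 ≥ 2. -/
/-!
If `c₂ ≤ 1`, the three leaves of a claw have disjoint closed neighbourhoods inside the
neighbourhood of its centre `x`, so `k ≥ 3 (a₁ + 1)`; hence `c₂ ≥ 2`.

Suppose there is no induced quadrangle, and let `Δ` be the graph induced on the neighbours of `x`.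
It is regular of valency `a = a₁`, any two non-adjacent vertices have exactly `μ = c₂ - 1 ≥ 1`
common neighbours, which form a clique, and its largest cocliques have size three. Such a `Δ` does
not exist (`CliqueMu.false_of_co3`), for the following reasons.

* A 3-coclique is maximal, so inclusion-exclusion (`card_of_co3`) shows that the number `t` of
  common neighbours is the same for all 3-cocliques.
* For non-adjacent neighbours `y`, `z` of `p`, equally many neighbours of `p` lie off `y` as off
  `z` (`card_B_eq`, a weighted double count). Hence the number of neighbours of `p` off both `y`
  and `z` depends only on `p` and `y` (`card_R`).
* If `t > 0`, let `p` be adjacent to a 3-coclique containing `y`. One finds a pentagon in the set of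
  neighbours of `p` off `y`; absence of quadrangles and of 4-cocliques then forces `p` to be
  adjacent to every non-neighbour of `y`, which contradicts regularity (`no_T`).
* If `t = 0`, all adjacent vertices with different closed neighbourhoods have the same number `e` of
  private neighbours, with `2 e + μ = a + 1`, and `Δ` has `6 e` vertices. Counting edges between
  neighbours and non-neighbours of a vertex gives `α e = (2 e - μ) (e - μ)`, where `α` is the size
  of a class of vertices with equal closed neighbourhoods. As `α` divides both `e` and `μ`, it
  follows that `e - μ ≥ α` and `2 e - μ > e`, a contradiction.
-/

open SimpleGraph Finset

/-! ### Quadrangle-free regular graphs with constant `μ` and no 4-coclique -/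

/-- A regular graph of valency `a` in which any two distinct non-adjacent vertices have exactly
`μ ≥ 1` common neighbours, these forming a clique, and which has no coclique of size four.
In the application it is the graph induced on the neighbourhood of a vertex. -/
structure CliqueMu {W : Type*} [Fintype W] [DecidableEq W] (H : SimpleGraph W)
    [DecidableRel H.Adj] (a μ : ℕ) : Prop where
  reg : ∀ y, (univ.filter fun w => H.Adj y w).card = a
  mu : ∀ y z, y ≠ z → ¬ H.Adj y z → (univ.filter fun w => H.Adj y w ∧ H.Adj z w).card = μ
  mu_pos : 1 ≤ μ
  clique : ∀ y z p q, y ≠ z → ¬ H.Adj y z → H.Adj y p → H.Adj z p → H.Adj y q → H.Adj z q →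
    p ≠ q → H.Adj p q
  co4 : ∀ x y z w, x ≠ y → x ≠ z → x ≠ w → y ≠ z → y ≠ w → z ≠ w →
    ¬ H.Adj x y → ¬ H.Adj x z → ¬ H.Adj x w → ¬ H.Adj y z → ¬ H.Adj y w → ¬ H.Adj z w → False

namespace CliqueMu

variable {W : Type*} [Fintype W] [DecidableEq W] {H : SimpleGraph W} [DecidableRel H.Adj]
  {a μ : ℕ}

/-- Three pairwise distinct, pairwise non-adjacent vertices. -/
def Co3 (H : SimpleGraph W) (x y z : W) : Prop :=
  x ≠ y ∧ x ≠ z ∧ y ≠ z ∧ ¬ H.Adj x y ∧ ¬ H.Adj x z ∧ ¬ H.Adj y z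

/-- The neighbours of `p` that are neither equal nor adjacent to `y`. -/
def B (H : SimpleGraph W) [DecidableRel H.Adj] (p y : W) : Finset W :=
  univ.filter fun w => H.Adj p w ∧ w ≠ y ∧ ¬ H.Adj y w

/-- The neighbours of `p` that are neither equal nor adjacent to `y` or to `z`. -/
def R (H : SimpleGraph W) [DecidableRel H.Adj] (p y z : W) : Finset W :=
  univ.filter fun w => H.Adj p w ∧ w ≠ y ∧ ¬ H.Adj y w ∧ w ≠ z ∧ ¬ H.Adj z w

/-- The common neighbours of three vertices. -/
def T (H : SimpleGraph W) [DecidableRel H.Adj] (x y z : W) : Finset W :=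
  univ.filter fun w => H.Adj x w ∧ H.Adj y w ∧ H.Adj z w

/-- The closed neighbourhood of `y`. -/
def cl (H : SimpleGraph W) [DecidableRel H.Adj] (y : W) : Finset W :=
  univ.filter fun w => w = y ∨ H.Adj y w


theorem card_cl (h : CliqueMu H a μ) (y : W) : (cl H y).card = a + 1 := by
  have : cl H y = insert y (univ.filter fun w => H.Adj y w) := by
    ext w; simp [cl]
  rw [this, card_insert_of_notMem (by simp), h.reg]

/-- A coclique `{x, y, z}` is maximal, so the three closed neighbourhoods cover the graph;
this is inclusion-exclusion for that covering. -/
theorem card_of_co3 (h : CliqueMu H a μ) {x y z : W} (hc : Co3 H x y z) :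
    Fintype.card W + 3 * μ = 3 * (a + 1) + (T H x y z).card := by
  obtain ⟨hxy, hxz, hyz, nxy, nxz, nyz⟩ := hc
  have e : ∑ w : W, (1 + (if H.Adj x w ∧ H.Adj y w then 1 else 0)
        + (if H.Adj x w ∧ H.Adj z w then 1 else 0) + (if H.Adj y w ∧ H.Adj z w then 1 else 0))
      = ∑ w : W, ((if w = x ∨ H.Adj x w then 1 else 0) + (if w = y ∨ H.Adj y w then 1 else 0)
        + (if w = z ∨ H.Adj z w then 1 else 0)
        + (if H.Adj x w ∧ H.Adj y w ∧ H.Adj z w then 1 else 0)) := by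
    refine sum_congr rfl fun w _ => ?_
    by_cases h1 : w = x
    · subst h1; simp [hxy, hxz, mt H.adj_symm nxy, mt H.adj_symm nxz]
    by_cases h2 : w = y
    · subst h2; simp [h1, hyz, nxy, mt H.adj_symm nyz]
    by_cases h3 : w = z
    · subst h3; simp [h1, h2, nxz, nyz]
    have := h.co4 x y z w hxy hxz (Ne.symm h1) hyz (Ne.symm h2) (Ne.symm h3) nxy nxz
    by_cases g1 : H.Adj x w <;> by_cases g2 : H.Adj y w <;> by_cases g3 : H.Adj z w <;>
      simp_all
  have c1 := h.card_cl x
  have c2 := h.card_cl y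
  have c3 := h.card_cl z
  have m1 := h.mu x y hxy nxy
  have m2 := h.mu x z hxz nxz
  have m3 := h.mu y z hyz nyz
  simp only [sum_add_distrib, ← card_filter] at e
  simp only [cl] at c1 c2 c3
  simp only [T]
  rw [c1, c2, c3, m1, m2, m3] at e
  simp at e
  omega

/-- By regularity, `p` and `y` have equally many private neighbours. -/
theorem card_B_comm (h : CliqueMu H a μ) {p y : W} (hpy : H.Adj p y) :
    (B H p y).card = (B H y p).card := by
  have e : ∀ p y : W, H.Adj p y →
      (B H p y).card + 1 + (univ.filter fun w => H.Adj p w ∧ H.Adj y w).card = a := by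
    intro p y hpy
    rw [← h.reg p, ← card_filter_add_card_filter_not (s := univ.filter fun w => H.Adj p w)
      (fun w => H.Adj y w), filter_filter, filter_filter]
    have : (univ.filter fun w => H.Adj p w ∧ ¬ H.Adj y w) = insert y (B H p y) := by
      ext w
      by_cases hw : w = y
      · subst hw; simp [hpy]
      · simp [B, hw]
    rw [this, card_insert_of_notMem (by simp [B])]
    omega
  have h1 := e p y hpy
  have h2 := e y p hpy.symm
  have : (univ.filter fun w => H.Adj p w ∧ H.Adj y w)
    = univ.filter fun w => H.Adj y w ∧ H.Adj p w := by ext w; simp [and_comm]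
  rw [this] at h1
  omega

/-- If every neighbour of `u` is in the closed neighbourhood of `y`, the two closed
neighbourhoods agree. -/
theorem cl_eq (h : CliqueMu H a μ) {u y : W} (hs : cl H u ⊆ cl H y) : cl H u = cl H y :=
  eq_of_subset_of_card_le hs (by rw [h.card_cl, h.card_cl])

theorem mem_cl {u y : W} : u ∈ cl H y ↔ u = y ∨ H.Adj y u := by simp [cl]

/-- Two non-adjacent neighbours `y`, `z` of `p` have equally many neighbours outside the closed
neighbourhood of `p`. Between these two sets, a vertex having `m` neighbours among the common
neighbours of `y` and `z` has `μ - m > 0` neighbours on the other side, all with the same `m`;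
counting each edge with weight `1 / (μ - m)` gives both cardinalities. -/
theorem card_B_eq (h : CliqueMu H a μ) {p y z : W} (hyz : y ≠ z) (nyz : ¬ H.Adj y z)
    (hpy : H.Adj p y) (hpz : H.Adj p z) : (B H y p).card = (B H z p).card := by
  let M : W → Finset W := fun w => univ.filter fun q => H.Adj y q ∧ H.Adj z q ∧ H.Adj w q
  -- one-sided facts, used for `(y, z)` and `(z, y)`
  have key : ∀ y z : W, y ≠ z → ¬ H.Adj y z → H.Adj p y → H.Adj p z → ∀ w ∈ B H y p,
      w ≠ z ∧ ¬ H.Adj z w ∧ (∀ b, H.Adj w b → H.Adj z b → ¬ H.Adj y b → b ∈ B H z p) ∧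
      (∀ b ∈ B H z p, ¬ H.Adj y b) ∧
      (univ.filter fun q => H.Adj y q ∧ H.Adj z q ∧ H.Adj w q).card
        + ((B H z p).filter fun b => H.Adj w b).card = μ ∧
      0 < ((B H z p).filter fun b => H.Adj w b).card := by
    intro y z hyz nyz hpy hpz w hw
    simp only [B, mem_filter, mem_univ, true_and] at hw
    obtain ⟨hyw, hwp, npw⟩ := hw
    have hwz : w ≠ z := by rintro rfl; exact npw hpz
    have nzw : ¬ H.Adj z w := fun hzw =>
      npw (h.clique y z p w hyz nyz hpy.symm hpz.symm hyw hzw hwp.symm)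
    have hb : ∀ b, H.Adj w b → H.Adj z b → ¬ H.Adj y b → b ∈ B H z p := by
      intro b hwb hzb nyb
      simp only [B, mem_filter, mem_univ, true_and]
      refine ⟨hzb, ?_, ?_⟩
      · rintro rfl; exact npw hwb.symm
      · intro hpb
        have hby : b ≠ y := by rintro rfl; exact nyz hzb.symm
        exact nyb (h.clique w p b y hwp (fun h' => npw h'.symm) hwb hpb hyw.symm hpy hby).symm
    have hb2 : ∀ b ∈ B H z p, ¬ H.Adj y b := by
      intro b hb hyb
      simp only [B, mem_filter, mem_univ, true_and] at hb
      exact hb.2.2 (h.clique y z p b hyz nyz hpy.symm hpz.symm hyb hb.1 (Ne.symm hb.2.1))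
    have hcard : (univ.filter fun q => H.Adj y q ∧ H.Adj z q ∧ H.Adj w q).card
        + ((B H z p).filter fun b => H.Adj w b).card = μ := by
      rw [← h.mu w z hwz (fun h' => nzw h'.symm),
        ← card_filter_add_card_filter_not (s := univ.filter fun q => H.Adj w q ∧ H.Adj z q)
          (fun q => H.Adj y q), filter_filter, filter_filter]
      congr 2
      · ext q; simp; tauto
      · ext q
        simp only [mem_filter, mem_univ, true_and]
        constructor
        · rintro ⟨h1, h2⟩
          refine ⟨⟨h2, ?_⟩, hb2 q h1⟩
          simp only [B, mem_filter] at h1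
          exact h1.2.1
        · rintro ⟨⟨h1, h2⟩, h3⟩
          exact ⟨hb q h1 h2 h3, h1⟩
    refine ⟨hwz, nzw, hb, hb2, hcard, ?_⟩
    -- `p` is a common neighbour of `y` and `z` that is not adjacent to `w`
    have hlt : (univ.filter fun q => H.Adj y q ∧ H.Adj z q ∧ H.Adj w q).card < μ := by
      rw [← h.mu y z hyz nyz]
      apply card_lt_card
      refine ⟨fun q hq => ?_, fun hsub => ?_⟩
      · simp only [mem_filter, mem_univ, true_and] at hq ⊢; exact ⟨hq.1, hq.2.1⟩
      · have : p ∈ univ.filter fun q => H.Adj y q ∧ H.Adj z q ∧ H.Adj w q :=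
          hsub (by simp [hpy.symm, hpz.symm])
        simp only [mem_filter] at this
        exact npw this.2.2.2.symm
    omega
  have hM : ∀ w ∈ B H y p, ∀ b ∈ B H z p, H.Adj w b → M w = M b := by
    intro w hw b hb hwb
    have k1 := key y z hyz nyz hpy hpz w hw
    have k2 := key z y hyz.symm (fun h' => nyz h'.symm) hpz hpy b hb
    have hyw : H.Adj y w := by simp only [B, mem_filter] at hw; exact hw.2.1
    have hzb : H.Adj z b := by simp only [B, mem_filter] at hb; exact hb.2.1
    ext q
    simp only [M, mem_filter, mem_univ, true_and]
    constructor
    · rintro ⟨h1, h2, h3⟩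
      refine ⟨h1, h2, h.clique w z b q k1.1 (fun h' => k1.2.1 h'.symm) hwb hzb h3 h2 ?_⟩
      rintro rfl
      exact k2.2.1 h1
    · rintro ⟨h1, h2, h3⟩
      refine ⟨h1, h2, h.clique b y w q k2.1 (fun h' => k2.2.1 h'.symm) hwb.symm hyw h3 h1 ?_⟩
      rintro rfl
      exact k1.2.1 h2
  have s1 : ((B H y p).card : ℚ) = ∑ w ∈ B H y p, ∑ b ∈ B H z p,
      if H.Adj w b then (1 : ℚ) / (μ - (M w).card) else 0 := by
    rw [card_eq_sum_ones]
    push_cast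
    refine sum_congr rfl fun w hw => ?_
    obtain ⟨-, -, -, -, k, kpos⟩ := key y z hyz nyz hpy hpz w hw
    rw [← sum_filter, sum_const, nsmul_eq_mul]
    have : (μ : ℚ) - (M w).card = (((B H z p).filter fun b => H.Adj w b).card : ℚ) := by
      rw [← k]; push_cast; simp only [M]; ring
    rw [this]
    have : (((B H z p).filter fun b => H.Adj w b).card : ℚ) ≠ 0 := by positivity
    field_simp
  have s2 : ((B H z p).card : ℚ) = ∑ b ∈ B H z p, ∑ w ∈ B H y p,
      if H.Adj w b then (1 : ℚ) / (μ - (M b).card) else 0 := by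
    rw [card_eq_sum_ones]
    push_cast
    refine sum_congr rfl fun w hw => ?_
    obtain ⟨-, -, -, -, k, kpos⟩ :=
      key z y hyz.symm (fun h' => nyz h'.symm) hpz hpy w hw
    have hc : ((B H y p).filter fun b => H.Adj b w) = (B H y p).filter fun b => H.Adj w b := by
      ext; simp [H.adj_comm]
    rw [← sum_filter, hc, sum_const, nsmul_eq_mul]
    have hMw : M w = univ.filter fun q => H.Adj z q ∧ H.Adj y q ∧ H.Adj w q := by
      ext q; simp only [M, mem_filter, mem_univ, true_and]; tauto
    have : (μ : ℚ) - (M w).card = (((B H y p).filter fun b => H.Adj w b).card : ℚ) := by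
      rw [← k, hMw]; push_cast; ring
    rw [this]
    have : (((B H y p).filter fun b => H.Adj w b).card : ℚ) ≠ 0 := by positivity
    field_simp
  have : ((B H y p).card : ℚ) = (B H z p).card := by
    rw [s1, s2, sum_comm]
    refine sum_congr rfl fun b hb => sum_congr rfl fun w hw => ?_
    split_ifs with hwb
    · rw [hM w hw b hb hwb]
    · rfl
  exact_mod_cast this

/-- Inclusion-exclusion inside the neighbourhood of `p`, for non-adjacent `y`, `z` there. -/
theorem card_R (h : CliqueMu H a μ) {p y z : W} (hyz : y ≠ z) (nyz : ¬ H.Adj y z)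
    (hpy : H.Adj p y) (hpz : H.Adj p z) :
    2 * (B H p y).card + μ = a + 1 + (R H p y z).card := by
  have hBe : (B H p y).card = (B H p z).card := by
    rw [h.card_B_comm hpy, h.card_B_comm hpz, h.card_B_eq hyz nyz hpy hpz]
  have e : ∑ w : W, ((if H.Adj p w ∧ w ≠ y ∧ ¬ H.Adj y w then 1 else 0)
        + (if H.Adj p w ∧ w ≠ z ∧ ¬ H.Adj z w then 1 else 0)
        + (if H.Adj y w ∧ H.Adj z w then 1 else 0))
      = ∑ w : W, ((if H.Adj p w then 1 else 0) + (if w = p then 1 else 0)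
        + (if H.Adj p w ∧ w ≠ y ∧ ¬ H.Adj y w ∧ w ≠ z ∧ ¬ H.Adj z w then 1 else 0)) := by
    refine sum_congr rfl fun w _ => ?_
    by_cases h0 : w = p
    · subst h0; simp [hpy.symm, hpz.symm]
    by_cases h1 : w = y
    · subst h1; simp [hyz, h0, hpy, mt H.adj_symm nyz]
    by_cases h2 : w = z
    · subst h2; simp [h1, h0, hpz, nyz]
    have := h.clique y z p w hyz nyz hpy.symm hpz.symm
    by_cases g1 : H.Adj p w <;> by_cases g2 : H.Adj y w <;> by_cases g3 : H.Adj z w <;>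
      simp_all
  simp only [sum_add_distrib, ← card_filter] at e
  rw [h.mu y z hyz nyz, h.reg p] at e
  simp only [B] at hBe ⊢
  simp only [R]
  rw [← hBe] at e
  simp only [filter_eq', mem_univ, if_true, card_singleton] at e
  omega

/-! ### No vertex is adjacent to a whole 3-coclique -/

/-- The common neighbours of a 3-coclique `{x, y, z}` with a common neighbour `p` do not exhaust
the common neighbours of `y` and `z`: replacing `x` by a neighbour `u` of `x` off `p` gives a
3-coclique with equally many common neighbours, of which `p` is not one. -/
theorem exists_not_T (h : CliqueMu H a μ) {p x y z : W} (hc : Co3 H x y z)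
    (hpx : H.Adj p x) (hpy : H.Adj p y) (hpz : H.Adj p z) :
    ∃ q, H.Adj y q ∧ H.Adj z q ∧ ¬ H.Adj x q := by
  have hcard := h.card_of_co3 hc
  obtain ⟨hxy, hxz, hyz, nxy, nxz, nyz⟩ := hc
  obtain ⟨u, hxu, hup, npu⟩ : ∃ u, H.Adj x u ∧ u ≠ p ∧ ¬ H.Adj p u := by
    by_contra hcon
    push Not at hcon
    have hs : cl H x ⊆ cl H p := by
      intro w hw
      rw [mem_cl] at hw ⊢
      rcases hw with rfl | hw
      · exact Or.inr hpx
      · by_cases hwp : w = p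
        · exact Or.inl hwp
        · exact Or.inr (hcon w hw hwp)
    have hy : y ∈ cl H x := by rw [h.cl_eq hs, mem_cl]; exact Or.inr hpy
    rw [mem_cl] at hy
    rcases hy with hy | hy
    · exact hxy hy.symm
    · exact nxy hy
  have nuy : ¬ H.Adj u y := fun huy =>
    npu (h.clique x y p u hxy nxy hpx.symm hpy.symm hxu huy.symm hup.symm)
  have nuz : ¬ H.Adj u z := fun huz =>
    npu (h.clique x z p u hxz nxz hpx.symm hpz.symm hxu huz.symm hup.symm)
  have huy : u ≠ y := by rintro rfl; exact nxy hxu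
  have huz : u ≠ z := by rintro rfl; exact nxz hxu
  have hcard' := h.card_of_co3 ⟨huy, huz, hyz, nuy, nuz, nyz⟩
  have hlt : (T H u y z).card < μ := by
    rw [← h.mu y z hyz nyz]
    apply card_lt_card
    refine ⟨fun q hq => ?_, fun hsub => ?_⟩
    · simp only [T, mem_filter, mem_univ, true_and] at hq ⊢; exact hq.2
    · have : p ∈ T H u y z := hsub (by simp [hpy.symm, hpz.symm])
      simp only [T, mem_filter] at this
      exact npu this.2.1.symm
  by_contra hcon
  push Not at hcon
  have : T H x y z = univ.filter fun q => H.Adj y q ∧ H.Adj z q := by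
    ext q
    simp only [T, mem_filter, mem_univ, true_and]
    exact ⟨fun h' => h'.2, fun h' => ⟨hcon q h'.1 h'.2, h'⟩⟩
  have h3 := h.mu y z hyz nyz
  rw [← this] at h3
  omega

/-- The configuration below, inside the non-neighbours of `y` adjacent to `p`, completes to a
pentagon. Since a vertex non-adjacent to both `y` and `p` would 2-colour this pentagon, `p` is
adjacent to every non-neighbour of `y`, and then a neighbour of `y` off `p` has the same closed
neighbourhood as `y`, which is absurd. -/
theorem no_path (h : CliqueMu H a μ) {p y z z' z'' q : W} (hc : Co3 H y z z')
    (hpy : H.Adj p y) (hpz : H.Adj p z) (hpz' : H.Adj p z') (hpz'' : H.Adj p z'')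
    (hpq : H.Adj p q) (hz'' : z'' ≠ y) (nyz'' : ¬ H.Adj y z'') (hqy : q ≠ y)
    (nyq : ¬ H.Adj y q) (hz''q : z'' ≠ q) (nz''q : ¬ H.Adj z'' q) (hzq : H.Adj z q)
    (hzz'' : H.Adj z z'') (hz'z'' : z' ≠ z'') (nz'z'' : ¬ H.Adj z' z'') :
    False := by
  obtain ⟨hyz, hyz', hzz', nyz, nyz', nzz'⟩ := hc
  have r1 := h.card_R hyz nyz hpy hpz
  have r2 := h.card_R hz''.symm nyz'' hpy hpz''
  have hns : ¬ R H p y z ⊆ R H p y z'' := by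
    intro hs
    have := eq_of_subset_of_card_le hs (by omega)
    have hq : q ∈ R H p y z'' := by
      simp only [R, mem_filter, mem_univ, true_and]
      exact ⟨hpq, hqy, nyq, hz''q.symm, nz''q⟩
    rw [← this] at hq
    simp only [R, mem_filter] at hq
    exact hq.2.2.2.2.2 hzq
  obtain ⟨q', hq', hq'n⟩ := not_subset.1 hns
  simp only [R, mem_filter, mem_univ, true_and] at hq' hq'n
  obtain ⟨hpq', hq'y, nyq', hq'z, nzq'⟩ := hq'
  have hq'z'' : q' ≠ z'' := by rintro rfl; exact nzq' hzz''
  have hz''q' : H.Adj z'' q' := by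
    by_contra hcon
    exact hq'n ⟨hpq', hq'y, nyq', hq'z'', hcon⟩
  have hqq' : q ≠ q' := by rintro rfl; exact nzq' hzq
  have nqq' : ¬ H.Adj q q' := fun hqq =>
    nz''q (h.clique z q' z'' q hq'z.symm nzq' hzz'' hz''q'.symm hzq hqq.symm hz''q)
  have hall : ∀ w, w ≠ y → ¬ H.Adj y w → H.Adj p w := by
    intro w hwy nyw
    by_contra npw
    have hwp : w ≠ p := by rintro rfl; exact nyw hpy.symm
    have side : ∀ c d, H.Adj p c → H.Adj p d → c ≠ y → d ≠ y → ¬ H.Adj y c → ¬ H.Adj y d →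
        c ≠ d → ¬ H.Adj c d → (H.Adj w c ↔ ¬ H.Adj w d) := by
      intro c d hpc hpd hcy hdy nyc nyd hcd ncd
      have hwc : w ≠ c := by rintro rfl; exact npw hpc
      have hwd : w ≠ d := by rintro rfl; exact npw hpd
      constructor
      · intro h1 h2
        exact npw (h.clique c d p w hcd ncd hpc.symm hpd.symm h1.symm h2.symm hwp.symm)
      · intro h2
        by_contra h1
        exact h.co4 y w c d hwy.symm hcy.symm hdy.symm hwc hwd hcd nyw nyc nyd h1 h2 ncd
    have s1 := side z z' hpz hpz' hyz.symm hyz'.symm nyz nyz' hzz' nzz'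
    have s2 := side z' z'' hpz' hpz'' hyz'.symm hz'' nyz' nyz'' hz'z'' nz'z''
    have s3 := side z'' q hpz'' hpq hz'' hqy nyz'' nyq hz''q nz''q
    have s4 := side q q' hpq hpq' hqy hq'y nyq nyq' hqq' nqq'
    have s5 := side q' z hpq' hpz hq'y hyz.symm nyq' nyz hq'z (mt H.adj_symm nzq')
    tauto
  have hpos : 0 < (B H y p).card := by
    rw [← h.card_B_comm hpy]
    refine card_pos.2 ⟨z, ?_⟩
    simp only [B, mem_filter, mem_univ, true_and]
    exact ⟨hpz, hyz.symm, nyz⟩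
  obtain ⟨u, hu⟩ := card_pos.1 hpos
  simp only [B, mem_filter, mem_univ, true_and] at hu
  obtain ⟨hyu, hup, npu⟩ := hu
  have hs : cl H u ⊆ cl H y := by
    intro w hw
    rw [mem_cl] at hw ⊢
    rcases hw with rfl | hw
    · exact Or.inr hyu
    · by_contra hcon
      push Not at hcon
      have hpw := hall w hcon.1 hcon.2
      exact hcon.2 (h.clique u p y w hup (mt H.adj_symm npu) hyu.symm hpy hw hpw hcon.1.symm)
  have hp : p ∈ cl H u := by rw [h.cl_eq hs, mem_cl]; exact Or.inr hpy.symm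
  rw [mem_cl] at hp
  rcases hp with hp | hp
  · exact hup hp.symm
  · exact npu hp.symm

/-- For non-adjacent `y`, `w` in the neighbourhood of `p`, the number of further neighbours of `p`
off both does not depend on `w`. Applied to `z` and to a common neighbour `q` of `z`, `z'` off `y`,
this gives a further vertex `w` to which `no_path` applies. -/
theorem no_T (h : CliqueMu H a μ) {p y z z' : W} (hc : Co3 H y z z')
    (hpy : H.Adj p y) (hpz : H.Adj p z) (hpz' : H.Adj p z') : False := by
  obtain ⟨q, hzq, hz'q, nyq⟩ := h.exists_not_T hc hpy hpz hpz'
  have hc' := hc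
  obtain ⟨hyz, hyz', hzz', nyz, nyz', nzz'⟩ := hc
  have hqy : q ≠ y := by rintro rfl; exact nyz hzq.symm
  have hqp : p ≠ q := by rintro rfl; exact nyq hpy.symm
  have hpq : H.Adj p q := h.clique z z' p q hzz' nzz' hpz.symm hpz'.symm hzq hz'q hqp
  have r1 := h.card_R hyz nyz hpy hpz
  have r2 := h.card_R hqy.symm nyq hpy hpq
  have hpos : 0 < (R H p y z).card := by
    refine card_pos.2 ⟨z', ?_⟩
    simp only [R, mem_filter, mem_univ, true_and]
    exact ⟨hpz', hyz'.symm, nyz', hzz'.symm, nzz'⟩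
  obtain ⟨w, hw⟩ := card_pos.1 (show 0 < (R H p y q).card by omega)
  simp only [R, mem_filter, mem_univ, true_and] at hw
  obtain ⟨hpw, hwy, nyw, hwq, nqw⟩ := hw
  have hwz : z ≠ w := by rintro rfl; exact nqw hzq.symm
  have hwz' : z' ≠ w := by rintro rfl; exact nqw hz'q.symm
  by_cases h1 : H.Adj z w
  · by_cases h2 : H.Adj z' w
    · exact nqw (h.clique z z' q w hzz' nzz' hzq hz'q h1 h2 hwq.symm)
    · exact h.no_path hc' hpy hpz hpz' hpw hpq hwy nyw hqy nyq hwq (mt H.adj_symm nqw) hzq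
        h1 hwz' h2
  · by_cases h2 : H.Adj z' w
    · exact h.no_path ⟨hyz', hyz, hzz'.symm, nyz', nyz, mt H.adj_symm nzz'⟩ hpy hpz' hpz hpw hpq
        hwy nyw hqy nyq hwq (mt H.adj_symm nqw) hz'q h2 hwz h1
    · exact h.co4 y z z' w hyz hyz' hwy.symm hzz' hwz hwz' nyz nyz' nyw nzz' h1 h2

/-! ### The remaining case: counting modulo twins -/

/-- The twin class of `y`: the vertices with the same closed neighbourhood. -/
def tw (H : SimpleGraph W) [DecidableRel H.Adj] (y : W) : Finset W :=
  univ.filter fun w => cl H w = cl H y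

/-- If all twin classes have size `α`, then `α` divides the size of any union of classes. -/
theorem dvd_card {α : ℕ} (hα : ∀ y : W, (tw H y).card = α) (S : Finset W)
    (hS : ∀ u ∈ S, ∀ w, cl H w = cl H u → w ∈ S) : α ∣ S.card := by
  rw [card_eq_sum_card_image (cl H) S]
  refine dvd_sum fun b hb => ?_
  obtain ⟨u, hu, rfl⟩ := mem_image.1 hb
  have : S.filter (fun w => cl H w = cl H u) = tw H u := by
    ext w
    simp only [tw, mem_filter, mem_univ, true_and]
    exact ⟨fun h' => h'.2, fun h' => ⟨hS u hu w h', h'⟩⟩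
  rw [this, hα]

theorem adj_of_twin {u w x : W} (huw : cl H w = cl H u) (hxw : x ≠ w) (hxu : H.Adj x u) :
    H.Adj x w := by
  have : x ∈ cl H w := by rw [huw, mem_cl]; exact Or.inr hxu.symm
  rw [mem_cl] at this
  rcases this with h' | h'
  · exact absurd h' hxw
  · exact h'.symm

/-- For adjacent `p`, `y` with different closed neighbourhoods, the number of private neighbours
is determined, because no neighbourhood contains a 3-coclique. -/
theorem card_B_of_mem (h : CliqueMu H a μ) {p y z : W} (hpy : H.Adj p y) (hz : z ∈ B H p y) :
    2 * (B H p y).card + μ = a + 1 := by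
  simp only [B, mem_filter, mem_univ, true_and] at hz
  obtain ⟨hpz, hzy, nyz⟩ := hz
  have r := h.card_R hzy.symm nyz hpy hpz
  have : R H p y z = ∅ := by
    rw [eq_empty_iff_forall_notMem]
    intro w hw
    simp only [R, mem_filter, mem_univ, true_and] at hw
    obtain ⟨hpw, hwy, nyw, hwz, nzw⟩ := hw
    exact h.no_T ⟨hzy.symm, hwy.symm, hwz.symm, nyz, nyw, nzw⟩ hpy hpz hpw
  rw [this, card_empty] at r
  exact r

/-- Counting the edges between the neighbours and the non-neighbours of `y`. -/
theorem count_edges (h : CliqueMu H a μ) {e : ℕ} (he : 2 * e + μ = a + 1) (y : W) :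
    (Fintype.card W - (a + 1)) * μ = (a + 1 - (tw H y).card) * e := by
  have hsum : ∑ z ∈ univ \ cl H y, (univ.filter fun p => H.Adj y p ∧ H.Adj z p).card
      = ∑ p ∈ cl H y \ tw H y, (B H p y).card := by
    simp only [B, card_filter]
    refine sum_comm.trans ?_
    rw [← sum_subset (subset_univ (cl H y \ tw H y))]
    · refine sum_congr rfl fun p hp => ?_
      have hpy : H.Adj y p := by
        simp only [mem_sdiff, mem_cl, tw, mem_filter, mem_univ, true_and] at hp
        rcases hp.1 with rfl | h'
        · exact absurd rfl hp.2
        · exact h'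
      rw [← sum_subset (subset_univ (univ \ cl H y))]
      · refine sum_congr rfl fun z hz => ?_
        simp only [mem_sdiff, mem_univ, true_and, mem_cl, not_or] at hz
        simp [hpy, hz, H.adj_comm]
      · intro z _ hz
        simp only [mem_sdiff, mem_univ, true_and, mem_cl, not_not] at hz
        simp; tauto
    · intro p _ hp
      refine sum_eq_zero fun z hz => ?_
      simp only [mem_sdiff, mem_univ, true_and, mem_cl, not_or] at hz
      simp only [ite_eq_right_iff, one_ne_zero, imp_false, not_and]
      intro hyp hzp
      have hcl : p ∈ tw H y := by
        by_contra hcon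
        exact hp (mem_sdiff.2 ⟨mem_cl.2 (Or.inr hyp), hcon⟩)
      simp only [tw, mem_filter, mem_univ, true_and] at hcl
      have : z ∈ cl H y := by rw [← hcl, mem_cl]; exact Or.inr hzp.symm
      rw [mem_cl] at this
      tauto
  have hl : ∑ z ∈ univ \ cl H y, (univ.filter fun p => H.Adj y p ∧ H.Adj z p).card
      = (Fintype.card W - (a + 1)) * μ := by
    rw [sum_congr rfl (g := fun _ => μ), sum_const, card_sdiff_of_subset (subset_univ _),
      h.card_cl, card_univ, smul_eq_mul]
    intro z hz
    simp only [mem_sdiff, mem_univ, true_and, mem_cl, not_or] at hz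
    exact h.mu y z (Ne.symm hz.1) hz.2
  have hsub : tw H y ⊆ cl H y := by
    intro w hw
    simp only [tw, mem_filter, mem_univ, true_and] at hw
    rw [← hw, mem_cl]
    exact Or.inl rfl
  have hr : ∑ p ∈ cl H y \ tw H y, (B H p y).card = (a + 1 - (tw H y).card) * e := by
    rw [sum_congr rfl (g := fun _ => e), sum_const, card_sdiff_of_subset hsub,
      h.card_cl, smul_eq_mul]
    intro p hp
    simp only [mem_sdiff, mem_cl, tw, mem_filter, mem_univ, true_and] at hp
    have hpy : H.Adj p y := by
      rcases hp.1 with rfl | h'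
      · exact absurd rfl hp.2
      · exact h'.symm
    have : (B H p y).Nonempty := by
      by_contra hcon
      rw [not_nonempty_iff_eq_empty, eq_empty_iff_forall_notMem] at hcon
      refine hp.2 (h.cl_eq fun w hw => ?_)
      rw [mem_cl] at hw ⊢
      rcases hw with rfl | hw
      · exact Or.inr hpy.symm
      · by_contra hcon'
        push Not at hcon'
        exact hcon w (by simp only [B, mem_filter, mem_univ, true_and]; exact ⟨hw, hcon'⟩)
    obtain ⟨z, hz⟩ := this
    have := h.card_B_of_mem hpy hz
    omega
  rw [← hl, hsum, hr]

/-- A graph with these properties has no 3-coclique. With `e` the number of private neighbours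
and `α` the size of a twin class, counting gives `α * e = (2 * e - μ) * (e - μ)`, while `α`
divides the positive number `e - μ`. -/
theorem false_of_co3 (h : CliqueMu H a μ) {x y z : W} (hc : Co3 H x y z) : False := by
  have hT : T H x y z = ∅ := by
    rw [eq_empty_iff_forall_notMem]
    intro p hp
    simp only [T, mem_filter, mem_univ, true_and] at hp
    exact h.no_T hc hp.1.symm hp.2.1.symm hp.2.2.symm
  have hv := h.card_of_co3 hc
  rw [hT, card_empty] at hv
  obtain ⟨hxy, hxz, hyz, nxy, nxz, nyz⟩ := hc
  have hmu := h.mu x y hxy nxy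
  have hmupos := h.mu_pos
  obtain ⟨p, hp⟩ := card_pos.1
    (show 0 < (univ.filter fun w => H.Adj x w ∧ H.Adj y w).card by omega)
  simp only [mem_filter, mem_univ, true_and] at hp
  have hyB : y ∈ B H p x := by
    simp only [B, mem_filter, mem_univ, true_and]
    exact ⟨hp.2.symm, hxy.symm, nxy⟩
  have he := h.card_B_of_mem hp.1.symm hyB
  -- the common non-neighbours of `x` and `y`, among them `z`, number `2 * e - μ`
  have hbig : 2 * (a + 1) - μ < Fintype.card W := by
    have hU : (cl H x ∪ cl H y).card + μ = 2 * (a + 1) := by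
      have := card_union_add_card_inter (cl H x) (cl H y)
      have hI : cl H x ∩ cl H y = univ.filter fun w => H.Adj x w ∧ H.Adj y w := by
        ext w
        simp only [mem_inter, mem_cl, mem_filter, mem_univ, true_and]
        constructor
        · rintro ⟨rfl | h1, rfl | h2⟩
          · exact absurd rfl hxy
          · exact absurd h2.symm nxy
          · exact absurd h1 nxy
          · exact ⟨h1, h2⟩
        · tauto
      rw [hI, hmu, h.card_cl, h.card_cl] at this
      omega
    have hlt : (cl H x ∪ cl H y).card < Fintype.card W := by
      rw [← card_univ]
      refine card_lt_card ⟨subset_univ _, fun hs => ?_⟩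
      have := hs (mem_univ z)
      simp only [mem_union, mem_cl] at this
      rcases this with (h1 | h1) | (h1 | h1)
      · exact hxz h1.symm
      · exact nxz h1
      · exact hyz h1.symm
      · exact nyz h1
    omega
  set e := (B H p x).card with hedef
  have hcount := h.count_edges he
  have htw : ∀ w, 1 ≤ (tw H w).card ∧ (tw H w).card ≤ a + 1 := by
    intro w
    constructor
    · exact card_pos.2 ⟨w, by simp [tw]⟩
    · rw [← h.card_cl w]
      refine card_le_card fun u hu => ?_
      simp only [tw, mem_filter, mem_univ, true_and] at hu
      rw [← hu, mem_cl]
      exact Or.inl rfl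
  have heq : ∀ w, ((tw H w).card : ℤ) * e = (2 * e - μ) * (e - μ) := by
    intro w
    have h1 := hcount w
    have h2 := (htw w).2
    zify [h2, show a + 1 ≤ Fintype.card W by omega] at h1
    have h3 : (Fintype.card W : ℤ) = 6 * e := by omega
    have h4 : (a : ℤ) = 2 * e + μ - 1 := by omega
    rw [h3, h4] at h1
    linarith
  have he0 : 0 < 2 * (e : ℤ) - μ := by omega
  have hepos : (0 : ℤ) < e := by omega
  have hα : ∀ w, (tw H w).card = (tw H x).card := by
    intro w
    have := (heq w).trans (heq x).symm
    exact_mod_cast mul_right_cancel₀ hepos.ne' this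
  have hα1 := (htw x).1
  have heqx := heq x
  have d1 : (tw H x).card ∣ μ := by
    rw [← hmu]
    refine dvd_card hα _ fun u hu w huw => ?_
    simp only [mem_filter, mem_univ, true_and] at hu ⊢
    have hwx : x ≠ w := by
      rintro rfl
      have : y ∈ cl H x := by rw [huw, mem_cl]; exact Or.inr hu.2.symm
      rw [mem_cl] at this
      rcases this with h' | h'
      · exact hxy h'.symm
      · exact nxy h'
    have hwy : y ≠ w := by
      rintro rfl
      have : x ∈ cl H y := by rw [huw, mem_cl]; exact Or.inr hu.1.symm
      rw [mem_cl] at this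
      rcases this with h' | h'
      · exact hxy h'
      · exact nxy h'.symm
    exact ⟨adj_of_twin huw hwx hu.1, adj_of_twin huw hwy hu.2⟩
  have d2 : (tw H x).card ∣ e := by
    refine dvd_card hα _ fun u hu w huw => ?_
    simp only [B, mem_filter, mem_univ, true_and] at hu ⊢
    obtain ⟨hpu, hux, nxu⟩ := hu
    have hw : w ∉ cl H x := by
      intro hw
      have : x ∈ cl H w := by
        rw [mem_cl] at hw ⊢
        rcases hw with h' | h'
        · exact Or.inl h'.symm
        · exact Or.inr h'.symm
      rw [huw, mem_cl] at this
      rcases this with h' | h'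
      · exact hux h'.symm
      · exact nxu h'.symm
    rw [mem_cl, not_or] at hw
    refine ⟨adj_of_twin huw ?_ hpu, hw⟩
    rintro rfl
    exact hw.2 hp.1
  have hd : ((tw H x).card : ℤ) ∣ (e : ℤ) - μ :=
    dvd_sub (Int.natCast_dvd_natCast.2 d2) (Int.natCast_dvd_natCast.2 d1)
  have hαZ : (1 : ℤ) ≤ (tw H x).card := by exact_mod_cast hα1
  have hdpos : (0 : ℤ) < (e : ℤ) - μ := by
    have : 0 < (2 * (e : ℤ) - μ) * (e - μ) := by rw [← heqx]; positivity
    exact (mul_pos_iff_of_pos_left he0).1 this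
  have hle := Int.le_of_dvd hdpos hd
  nlinarith

end CliqueMu

/-! ### Local parameters of a distance-regular graph -/

theorem dist_eq_two {V : Type*} {G : SimpleGraph V} {x y z : V} (hyz : y ≠ z)
    (nyz : ¬ G.Adj y z) (hxy : G.Adj x y) (hxz : G.Adj x z) : G.dist y z = 2 := by
  have hle : G.dist y z ≤ 2 := by
    simpa using SimpleGraph.dist_le (Walk.cons hxy.symm (Walk.cons hxz Walk.nil))
  have hr : G.Reachable y z := ⟨Walk.cons hxy.symm (Walk.cons hxz Walk.nil)⟩
  have h0 : G.dist y z ≠ 0 := fun h' => hyz (hr.dist_eq_zero_iff.1 h')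
  have h1 : G.dist y z ≠ 1 := fun h' => nyz (SimpleGraph.dist_eq_one_iff_adj.1 h')
  omega

theorem IsDRG.ncard_adj {V : Type*} [Fintype V] {G : SimpleGraph V} {D : ℕ} {b c : ℕ → ℕ}
    (h : IsDRG G D b c) (y : V) : {z | G.Adj y z}.ncard = b 0 := by
  obtain ⟨-, -, -, -, -, -, h⟩ := h
  rw [← (h 0 (Nat.zero_le _) y y SimpleGraph.dist_self).2]
  congr 1
  ext z
  simp only [Set.mem_ofPred_eq, zero_add, SimpleGraph.dist_eq_one_iff_adj, and_self]

/-- Adjacent vertices have `a₁ = b₀ - b₁ - 1` common neighbours. -/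
theorem IsDRG.ncard_common {V : Type*} [Fintype V] {G : SimpleGraph V} {D : ℕ} {b c : ℕ → ℕ}
    (h : IsDRG G D b c) (hD : 3 ≤ D) {x y : V} (hxy : G.Adj x y) :
    {z | G.Adj x z ∧ G.Adj y z}.ncard + b 1 + 1 = b 0 := by
  have h0 := h.ncard_adj y
  obtain ⟨hconn, -, -, -, hc1, -, h⟩ := h
  obtain ⟨h1, h2⟩ := h 1 (by omega) x y (SimpleGraph.dist_eq_one_iff_adj.2 hxy)
  have hsplit : {z | G.Adj y z} = ({z | G.Adj x z ∧ G.Adj y z} ∪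
      {z | G.Adj y z ∧ G.dist x z = 1 + 1}) ∪ {z | G.Adj y z ∧ G.dist x z = 1 - 1} := by
    ext z
    simp only [Set.mem_ofPred_eq, Set.mem_union]
    constructor
    · intro hyz
      by_cases hxz : G.Adj x z
      · exact Or.inl (Or.inl ⟨hxz, hyz⟩)
      · by_cases hzx : x = z
        · subst hzx; exact Or.inr ⟨hyz, by simp⟩
        · exact Or.inl (Or.inr ⟨hyz, dist_eq_two hzx hxz hxy.symm hyz⟩)
    · tauto
  rw [hsplit, Set.ncard_union_eq, Set.ncard_union_eq, h1, h2, hc1] at h0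
  · exact h0
  · rw [Set.disjoint_left]
    rintro z ⟨hz, -⟩ ⟨-, hz'⟩
    rw [SimpleGraph.dist_eq_one_iff_adj.2 hz] at hz'
    omega
  · rw [Set.disjoint_left]
    rintro z (⟨hz, -⟩ | ⟨-, hz⟩) ⟨-, hz'⟩
    · rw [SimpleGraph.dist_eq_one_iff_adj.2 hz] at hz'
      omega
    · omega

theorem IsDRG.ncard_mu {V : Type*} [Fintype V] {G : SimpleGraph V} {D : ℕ} {b c : ℕ → ℕ}
    (h : IsDRG G D b c) (hD : 3 ≤ D) {y z : V} (hyz : G.dist y z = 2) :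
    {w | G.Adj y w ∧ G.Adj z w}.ncard = c 2 := by
  obtain ⟨-, -, -, -, -, -, h⟩ := h
  rw [← (h 2 (by omega) y z hyz).1]
  congr 1
  ext w
  simp only [Set.mem_ofPred_eq, Nat.add_one_sub_one, SimpleGraph.dist_eq_one_iff_adj, and_comm]

theorem card_filter_subtype {V : Type*} (G : SimpleGraph V) (x : V)
    [Fintype {w // G.Adj x w}] (P : V → Prop)
    [DecidablePred fun w : {w // G.Adj x w} => P w.1] :
    (univ.filter fun w : {w // G.Adj x w} => P w.1).card = {z | G.Adj x z ∧ P z}.ncard := by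
  rw [← Set.ncard_coe_finset, ← Set.ncard_image_of_injective _ Subtype.val_injective]
  congr 1
  ext z
  simp only [Set.mem_image, coe_filter, mem_univ, true_and, Set.mem_ofPred_eq]
  constructor
  · rintro ⟨w, hw, rfl⟩
    exact ⟨w.2, hw⟩
  · rintro ⟨hxz, hz⟩
    exact ⟨⟨z, hxz⟩, hz, rfl⟩

/-- If `c₂ ≤ 1`, the closed neighbourhoods of the three leaves of a claw are disjoint inside the
neighbourhood of its centre, so `k ≥ 3 (a₁ + 1)`. -/
theorem IsDRG.two_le_c {V : Type*} [Fintype V] {G : SimpleGraph V} {D : ℕ} {b c : ℕ → ℕ}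
    (h : IsDRG G D b c) (hD : 3 ≤ D)
    (hk' : (b 0 : ℤ) < 3 * (((b 0 : ℤ) - b 1 - c 1) + 1)) {x y₁ y₂ y₃ : V}
    (h1 : G.Adj x y₁) (h2 : G.Adj x y₂) (h3 : G.Adj x y₃) (h12 : y₁ ≠ y₂) (h13 : y₁ ≠ y₃)
    (h23 : y₂ ≠ y₃) (n12 : ¬ G.Adj y₁ y₂) (n13 : ¬ G.Adj y₁ y₃) (n23 : ¬ G.Adj y₂ y₃) :
    2 ≤ c 2 := by
  by_contra hlt
  have hc1 : c 1 = 1 := h.2.2.2.2.1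
  let S : V → Set V := fun y => insert y {z | G.Adj x z ∧ G.Adj y z}
  have hS : ∀ y, G.Adj x y → (S y).ncard + b 1 = b 0 := by
    intro y hy
    have := h.ncard_common hD hy
    rw [Set.ncard_insert_of_notMem (by simp)]
    omega
  have hd : ∀ y z, y ≠ z → ¬ G.Adj y z → G.Adj x y → G.Adj x z → Disjoint (S y) (S z) := by
    intro y z hyz nyz hxy hxz
    rw [Set.disjoint_left]
    have hm := h.ncard_mu hD (dist_eq_two hyz nyz hxy hxz)
    rintro w (rfl | ⟨hw, hyw⟩) (hw' | ⟨-, hzw⟩)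
    · exact hyz hw'
    · exact nyz hzw.symm
    · rw [hw'] at hyw
      exact nyz hyw
    · have : 1 < {w | G.Adj y w ∧ G.Adj z w}.ncard := by
        rw [Set.one_lt_ncard]
        exact ⟨x, ⟨hxy.symm, hxz.symm⟩, w, ⟨hyw, hzw⟩, hw.ne⟩
      omega
  have hsub : (S y₁ ∪ S y₂) ∪ S y₃ ⊆ {z | G.Adj x z} := by
    rintro w ((hw | hw) | hw) <;> rcases hw with rfl | hw <;>
      first | assumption | exact hw.1
  have hcard := Set.ncard_le_ncard hsub
  rw [Set.ncard_union_eq, Set.ncard_union_eq (hd _ _ h12 n12 h1 h2), h.ncard_adj] at hcard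
  · have e1 := hS _ h1
    have e2 := hS _ h2
    have e3 := hS _ h3
    omega
  · rw [Set.disjoint_union_left]
    exact ⟨hd _ _ h13 n13 h1 h3, hd _ _ h23 n23 h2 h3⟩

/-- a DRG with `D ≥ 3`, `3 ≤ k < 3(a₁+1)`, with a 3-claw but no 4-claws,
contains an induced quadrangle; in particular `c₂ ≥ 2`. -/
theorem statement6 {V : Type*} [Fintype V] (G : SimpleGraph V) (D : ℕ) (b c : ℕ → ℕ)
    (hdrg : IsDRG G D b c) (hD : 3 ≤ D) (hk : 3 ≤ b 0)
    (hk' : (b 0 : ℤ) < 3 * (((b 0 : ℤ) - b 1 - c 1) + 1))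
    (hclaw3 : HasClaw G 3) (hclaw4 : ¬ HasClaw G 4) :
    HasQuadrangle G ∧ 2 ≤ c 2 := by
  classical
  obtain ⟨x, s, hs, hadj, hpair⟩ := hclaw3
  obtain ⟨y₁, y₂, y₃, h12, h13, h23, rfl⟩ := card_eq_three.1 hs
  have h1 := hadj y₁ (by simp)
  have h2 := hadj y₂ (by simp)
  have h3 := hadj y₃ (by simp)
  have n12 := hpair (x := y₁) (by simp) (y := y₂) (by simp) h12
  have n13 := hpair (x := y₁) (by simp) (y := y₃) (by simp) h13
  have n23 := hpair (x := y₂) (by simp) (y := y₃) (by simp) h23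
  have hc2 := hdrg.two_le_c hD hk' h1 h2 h3 h12 h13 h23 n12 n13 n23
  refine ⟨?_, hc2⟩
  by_contra hq
  have clique : ∀ v y z p q, G.Adj v y → G.Adj v z → y ≠ z → ¬ G.Adj y z → G.Adj y p →
      G.Adj z p → G.Adj y q → G.Adj z q → p ≠ q → G.Adj p q := by
    intro v y z p q hvy hvz hyz nyz hyp hzp hyq hzq hpq
    by_contra npq
    exact hq ⟨y, p, z, q, dist_eq_two hyz nyz hvy hvz, dist_eq_two hpq npq hyp hyq,
      hyp, hzp.symm, hzq, hyq.symm⟩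
  have hloc : CliqueMu (G.comap (Subtype.val : {w // G.Adj x w} → V)) (b 0 - b 1 - 1)
      (c 2 - 1) := by
    refine ⟨?_, ?_, by omega, ?_, ?_⟩
    · rintro ⟨y, hy⟩
      have e := hdrg.ncard_common hD hy
      have := card_filter_subtype G x (fun w => G.Adj y w)
      simp only [comap_adj]
      omega
    · rintro ⟨y, hy⟩ ⟨z, hz⟩ hyz nyz
      have hyz' : y ≠ z := fun h' => hyz (Subtype.ext h')
      simp only [comap_adj] at nyz ⊢
      have e := hdrg.ncard_mu hD (dist_eq_two hyz' nyz hy hz)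
      have := card_filter_subtype G x (fun w => G.Adj y w ∧ G.Adj z w)
      -- `x` is a common neighbour, and by the clique property it is adjacent to all others
      have hins : {w | G.Adj y w ∧ G.Adj z w}
          = insert x {w | G.Adj x w ∧ G.Adj y w ∧ G.Adj z w} := by
        ext w
        simp only [Set.mem_ofPred_eq, Set.mem_insert_iff]
        constructor
        · rintro ⟨hyw, hzw⟩
          by_cases hwx : w = x
          · exact Or.inl hwx
          · exact Or.inr ⟨clique x y z x w hy hz hyz' nyz hy.symm hz.symm hyw hzw
              (Ne.symm hwx), hyw, hzw⟩
        · rintro (rfl | hw)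
          · exact ⟨hy.symm, hz.symm⟩
          · exact hw.2
      rw [hins, Set.ncard_insert_of_notMem (by simp)] at e
      omega
    · rintro ⟨y, hy⟩ ⟨z, hz⟩ ⟨p, hp⟩ ⟨q, hq⟩ hyz nyz hyp hzp hyq hzq hpq
      exact clique x y z p q hy hz (fun h' => hyz (Subtype.ext h')) nyz hyp hzp hyq hzq
        (fun h' => hpq (Subtype.ext h'))
    · rintro ⟨p, hp⟩ ⟨y, hy⟩ ⟨z, hz⟩ ⟨w, hw⟩ e1 e2 e3 e4 e5 e6 f1 f2 f3 f4 f5 f6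
      simp only [ne_eq, Subtype.mk.injEq, comap_adj] at e1 e2 e3 e4 e5 e6 f1 f2 f3 f4 f5 f6
      refine hclaw4 ⟨x, {p, y, z, w}, ?_, ?_, ?_⟩
      · rw [card_insert_of_notMem, card_insert_of_notMem, card_insert_of_notMem,
          card_singleton] <;> simp [*]
      · intro v hv
        simp only [mem_insert, mem_singleton] at hv
        rcases hv with rfl | rfl | rfl | rfl <;> assumption
      · intro u hu v hv huv
        simp only [coe_insert, coe_singleton, Set.mem_insert_iff, Set.mem_singleton_iff] at hu hv
        rcases hu with rfl | rfl | rfl | rfl <;> rcases hv with rfl | rfl | rfl | rfl <;>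
          first
            | exact absurd rfl huv
            | assumption
            | (rw [G.adj_comm]; assumption)
  exact hloc.false_of_co3 (x := ⟨y₁, h1⟩) (y := ⟨y₂, h2⟩) (z := ⟨y₃, h3⟩)
    ⟨by simpa using h12, by simpa using h13, by simpa using h23, n12, n13, n23⟩
end
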